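/- Let t ≥ 3 be an odd integer that is not of the form 2^i + 1 nor of the form 4^i − 2^i + 1 for any i ≥ 1. Then for all but finitely many positive integers n, there exist four pairwise distinct nonzero elements α, β, γ, δ ∈ F_{2^n} with α + β + γ + δ = 0 and α^t + β^t + γ^t + δ^t = 0. -/

import Mathlib

/-!
After division by one entry, the quadruples over `𝔽_{2^n}` are the zeros of
`F = x^t + y^t + 1 + (x + y + 1)^t` off the lines `x = 1`, `y = 1`, `x = y` on which `F` vanishes
and a few other lines. Write `t = 2^i l + 1` with `l` odd and `F = (x + 1) (y + 1) (x + y) G`.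

Frobenius permutes the irreducible factors of `G` over an algebraic closure of `𝔽₂`. Suppose it
fixes none of them, and let it act on the factors as the permutation `σ`. In the square of
`deg G = ∑ⱼ deg aⱼ`, replace the diagonal terms by the degree products of the pairs
`(aⱼ, a_{σ j})`, which have the same sizes; now Bézout's theorem applies to every term. The factors
meet only at points where `x`, `y` and `x + y + 1` are `l`-th roots of unity. There the initial form
of `F` either is a squarefree form of degree `2^i + 1`, so that intersection multiplicities are
products of multiplicities, or is the `2^i`-th power of a linear form whose square does not divide
the next form, so that two factors meet with multiplicity at most `2^i`. Summing these bounds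
contradicts `deg G = 2^i l - 2` unless `l = 2^i - 1`, which is the Kasami–Welch case.

So `G` has an absolutely irreducible factor defined over `𝔽₂`. By Stepanov's method the curve it
cuts out has, for all large `n`, points over `𝔽_{2^n}` off any given finite set of lines that are
not components of it.
-/

section Dilation

open Polynomial

variable {σ R : Type*} [CommRing R]

/-- The substitution `u ↦ u(T • X)`. Its coefficient at `T ^ j` is the homogeneous component of `u`
of degree `j`, so total degrees and orders of vanishing at the origin become degrees and orders of
vanishing in the single variable `T`. -/
noncomputable def dilate : MvPolynomial σ R →ₐ[R] (MvPolynomial σ R)[X] :=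
  MvPolynomial.aeval fun i ↦ C (MvPolynomial.X i) * X

lemma dilate_X (i : σ) :
    dilate (MvPolynomial.X i : MvPolynomial σ R) = C (MvPolynomial.X i) * X := by
  simp [dilate]

lemma dilate_C (c : R) :
    dilate (MvPolynomial.C c : MvPolynomial σ R) = C (MvPolynomial.C c) := by
  simp [dilate]

lemma dilate_monomial (n : σ →₀ ℕ) (c : R) :
    dilate (MvPolynomial.monomial n c) = monomial n.degree (MvPolynomial.monomial n c) := by
  rw [dilate, MvPolynomial.aeval_monomial, MvPolynomial.monomial_eq, ← C_mul_X_pow_eq_monomial]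
  simp only [Finsupp.prod, mul_pow, Finset.prod_mul_distrib, Finset.prod_pow_eq_pow_sum,
    Finsupp.degree_apply, C_mul, map_prod, map_pow, mul_assoc]
  rfl

lemma coeff_dilate (u : MvPolynomial σ R) (j : ℕ) :
    (dilate u).coeff j = MvPolynomial.homogeneousComponent j u := by
  classical
  induction u using MvPolynomial.induction_on' with
  | monomial n c =>
    ext m
    rw [dilate_monomial, coeff_monomial, MvPolynomial.coeff_homogeneousComponent]
    by_cases hm : n = m
    · subst hm; split_ifs <;> simp
    · split_ifs <;> simp [MvPolynomial.coeff_monomial, hm]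
  | add p q hp hq => simp only [map_add, coeff_add, hp, hq]

lemma dilate_of_isHomogeneous {u : MvPolynomial σ R} {n : ℕ} (hu : u.IsHomogeneous n) :
    dilate u = monomial n u := by
  ext1 j
  rw [coeff_dilate, MvPolynomial.homogeneousComponent_of_mem hu, coeff_monomial]
  simp only [eq_comm]

lemma dilate_coeff_dilate (u : MvPolynomial σ R) (j : ℕ) :
    dilate ((dilate u).coeff j) = monomial j ((dilate u).coeff j) := by
  rw [coeff_dilate]
  exact dilate_of_isHomogeneous (MvPolynomial.homogeneousComponent_isHomogeneous j u)

lemma dilate_injective :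
    Function.Injective (dilate : MvPolynomial σ R → (MvPolynomial σ R)[X]) := by
  intro u v h
  ext n
  have hcoeff := congrArg (fun p ↦ (p.coeff n.degree).coeff n) h
  simpa [coeff_dilate, MvPolynomial.coeff_homogeneousComponent] using hcoeff

lemma dilate_ne_zero {u : MvPolynomial σ R} (hu : u ≠ 0) : dilate u ≠ 0 :=
  (map_ne_zero_iff _ dilate_injective).2 hu

lemma natDegree_dilate (u : MvPolynomial σ R) : (dilate u).natDegree = u.totalDegree := by
  refine le_antisymm (natDegree_le_iff_coeff_eq_zero.2 fun j hj ↦ ?_)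
    (Finset.sup_le fun n hn ↦ le_natDegree_of_ne_zero fun h ↦ ?_)
  · rw [coeff_dilate, MvPolynomial.homogeneousComponent_eq_zero _ _ hj]
  · have hcoeff := congrArg (MvPolynomial.coeff n) h
    rw [coeff_dilate, MvPolynomial.coeff_homogeneousComponent] at hcoeff
    exact MvPolynomial.mem_support_iff.1 hn ((if_pos rfl).symm.trans hcoeff)

lemma X_pow_dvd_dilate_iff {u : MvPolynomial σ R} {N : ℕ} :
    X ^ N ∣ dilate u ↔ u ∈ MvPolynomial.idealOfVars σ R ^ N := by
  rw [MvPolynomial.mem_pow_idealOfVars_iff', X_pow_dvd_iff]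
  constructor
  · intro h n hn
    simpa [coeff_dilate, MvPolynomial.coeff_homogeneousComponent] using
      congrArg (MvPolynomial.coeff n) (h _ hn)
  · intro h j hj
    ext n
    rw [coeff_dilate, MvPolynomial.coeff_homogeneousComponent, MvPolynomial.coeff_zero,
      ite_eq_right_iff]
    rintro rfl
    exact h n hj

/-- The polynomials all of whose monomials have degree less than `N`. The bound is strict, unlike
in `MvPolynomial.restrictTotalDegree`, so that `N = 0` gives the zero space. -/
noncomputable def totalDegreeLT (σ R : Type*) [CommRing R] (N : ℕ) :
    Submodule R (MvPolynomial σ R) :=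
  MvPolynomial.restrictSupport R {n | n.degree < N}

variable {u v : MvPolynomial σ R} {M N : ℕ}

lemma mem_totalDegreeLT : u ∈ totalDegreeLT σ R N ↔ (dilate u).degree < N := by
  rw [totalDegreeLT, degree_lt_iff_coeff_zero, MvPolynomial.mem_restrictSupport_iff]
  constructor
  · intro h j hj
    ext n
    rw [coeff_dilate, MvPolynomial.coeff_homogeneousComponent, MvPolynomial.coeff_zero,
      ite_eq_right_iff]
    rintro rfl
    by_contra hn
    exact hj.not_gt (h (MvPolynomial.mem_support_iff.2 hn))
  · intro h n hn
    by_contra hdeg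
    refine MvPolynomial.mem_support_iff.1 hn ?_
    simpa [coeff_dilate, MvPolynomial.coeff_homogeneousComponent] using
      congrArg (MvPolynomial.coeff n) (h n.degree (not_lt.1 hdeg))

lemma mem_totalDegreeLT_iff_coeff :
    u ∈ totalDegreeLT σ R N ↔ ∀ j, N ≤ j → (dilate u).coeff j = 0 := by
  rw [mem_totalDegreeLT, degree_lt_iff_coeff_zero]

lemma mem_totalDegreeLT_of_totalDegree_lt (h : u.totalDegree < N) : u ∈ totalDegreeLT σ R N := by
  rw [mem_totalDegreeLT_iff_coeff]
  intro j hj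
  rw [coeff_dilate, MvPolynomial.homogeneousComponent_eq_zero _ _ (h.trans_le hj)]

lemma mul_mem_totalDegreeLT (hu : u ∈ totalDegreeLT σ R M) (hv : v.totalDegree ≤ N) :
    u * v ∈ totalDegreeLT σ R (M + N) := by
  rw [mem_totalDegreeLT_iff_coeff] at hu ⊢
  intro j hj
  rw [map_mul, coeff_mul]
  refine Finset.sum_eq_zero fun x hx ↦ ?_
  rw [Finset.HasAntidiagonal.mem_antidiagonal] at hx
  rcases le_or_gt M x.1 with h1 | h1
  · rw [hu _ h1, zero_mul]
  · rw [coeff_eq_zero_of_natDegree_lt (p := dilate v) (by rw [natDegree_dilate]; omega), mul_zero]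

/-- The sum of the homogeneous components of degree less than `N`. -/
noncomputable def truncateTotalDegree (N : ℕ) : MvPolynomial σ R →ₗ[R] MvPolynomial σ R :=
  ∑ j ∈ Finset.range N, MvPolynomial.homogeneousComponent j

lemma coeff_dilate_truncateTotalDegree (N : ℕ) (u : MvPolynomial σ R) (j : ℕ) :
    (dilate (truncateTotalDegree N u)).coeff j = if j < N then (dilate u).coeff j else 0 := by
  simp only [truncateTotalDegree, LinearMap.coe_sum, Finset.sum_apply, ← coeff_dilate, map_sum,
    dilate_coeff_dilate, finsetSum_coeff, coeff_monomial, Finset.sum_ite_eq', Finset.mem_range]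

lemma truncateTotalDegree_mem (N : ℕ) (u : MvPolynomial σ R) :
    truncateTotalDegree N u ∈ totalDegreeLT σ R N := by
  rw [mem_totalDegreeLT_iff_coeff]
  intro j hj
  rw [coeff_dilate_truncateTotalDegree, if_neg hj.not_gt]

lemma truncateTotalDegree_of_mem (hu : u ∈ totalDegreeLT σ R N) : truncateTotalDegree N u = u := by
  rw [mem_totalDegreeLT_iff_coeff] at hu
  refine dilate_injective (Polynomial.ext fun j ↦ ?_)
  rw [coeff_dilate_truncateTotalDegree]
  split_ifs with hj
  · rfl
  · exact (hu j (not_lt.1 hj)).symm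

lemma sub_truncateTotalDegree_mem (N : ℕ) (u : MvPolynomial σ R) :
    u - truncateTotalDegree N u ∈ MvPolynomial.idealOfVars σ R ^ N := by
  rw [← X_pow_dvd_dilate_iff, X_pow_dvd_iff]
  intro j hj
  rw [map_sub, coeff_sub, coeff_dilate_truncateTotalDegree, if_pos hj, sub_self]

lemma truncateTotalDegree_eq_zero_iff :
    truncateTotalDegree N u = 0 ↔ u ∈ MvPolynomial.idealOfVars σ R ^ N := by
  refine ⟨fun h ↦ by simpa [h] using sub_truncateTotalDegree_mem N u, fun h ↦ ?_⟩
  rw [← X_pow_dvd_dilate_iff, X_pow_dvd_iff] at h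
  refine dilate_injective (Polynomial.ext fun j ↦ ?_)
  rw [coeff_dilate_truncateTotalDegree, map_zero, coeff_zero, ite_eq_right_iff]
  exact h j

lemma two_mul_card_degree_lt (N : ℕ) :
    2 * Nat.card {n : Fin 2 →₀ ℕ | n.degree < N} = N * (N + 1) := by
  have hcard : Nat.card {n : Fin 2 →₀ ℕ | n.degree < N} =
      ((Finset.range N).sigma fun j ↦ Finset.range (j + 1)).card := by
    rw [← Nat.card_eq_finsetCard]
    refine Nat.card_congr ⟨fun n ↦ ⟨⟨n.1.degree, n.1 0⟩, ?_⟩,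
      fun p ↦ ⟨Finsupp.equivFunOnFinite.symm ![p.1.2, p.1.1 - p.1.2], ?_⟩, ?_, ?_⟩
    · have := n.2
      simp [Finsupp.degree_eq_sum] at this ⊢
      omega
    · have := Finset.mem_sigma.1 p.2
      simp only [Finset.mem_range] at this
      simp [Finsupp.degree_eq_sum]
      omega
    · rintro ⟨n, hn⟩
      ext i
      fin_cases i <;> simp [Finsupp.degree_eq_sum]
    · rintro ⟨⟨a, b⟩, hn⟩
      simp at hn
      simp [Finsupp.degree_eq_sum]
      omega
  rw [hcard, Finset.card_sigma]
  simp only [Finset.card_range]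
  clear hcard
  induction N with
  | zero => rfl
  | succ N ih => rw [Finset.sum_range_succ, mul_add, ih]; ring

instance [Finite σ] (N : ℕ) : Module.Finite R (totalDegreeLT σ R N) :=
  have : Finite {n : σ →₀ ℕ | n.degree < N} := Finsupp.finite_of_degree_lt N
  Module.Finite.of_basis (MvPolynomial.basisRestrictSupport R _)

lemma two_mul_finrank_totalDegreeLT [StrongRankCondition R] (N : ℕ) :
    2 * Module.finrank R (totalDegreeLT (Fin 2) R N) = N * (N + 1) := by
  rw [totalDegreeLT,
    Module.finrank_eq_nat_card_basis (MvPolynomial.basisRestrictSupport R _),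
    two_mul_card_degree_lt]

end Dilation

section GlobalIntersection

open Polynomial

lemma exists_eq_mul_and_eq_neg_mul_of_isRelPrime {R : Type*} [CommRing R] [IsDomain R]
    [DecompositionMonoid R] {a b p q : R} (ha : a ≠ 0) (hab : IsRelPrime a b)
    (h : p * a + q * b = 0) : ∃ c, p = c * b ∧ q = -(c * a) := by
  have hdvd : a ∣ q * b := ⟨-p, by linear_combination h⟩
  obtain ⟨c, rfl⟩ := hab.dvd_of_dvd_mul_right hdvd
  exact ⟨-c, mul_right_cancel₀ ha (by linear_combination h), by ring⟩

variable {σ k : Type*} [Field k]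

lemma isHomogeneous_of_mul {c w : MvPolynomial σ k} {m n : ℕ} (hw : w.IsHomogeneous n)
    (hw0 : w ≠ 0) (hcw : (c * w).IsHomogeneous (m + n)) : c.IsHomogeneous m := by
  have h : dilate c * monomial n w = monomial m c * monomial n w := by
    rw [← dilate_of_isHomogeneous hw, ← map_mul, dilate_of_isHomogeneous hcw,
      dilate_of_isHomogeneous hw, monomial_mul_monomial]
  have hc := congrArg (coeff · m)
    (mul_right_cancel₀ (show monomial n w ≠ 0 by simpa using hw0) h)
  simp only [coeff_dilate, coeff_monomial_same] at hc
  exact hc ▸ MvPolynomial.homogeneousComponent_isHomogeneous m c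

lemma sub_mul_mem_totalDegreeLT {c y w : MvPolynomial σ k} {N : ℕ} (hc : c.IsHomogeneous N)
    (hy : y ∈ totalDegreeLT σ k (w.totalDegree + N + 1))
    (hyw : (dilate y).coeff (w.totalDegree + N) = c * (dilate w).leadingCoeff) :
    y - c * w ∈ totalDegreeLT σ k (w.totalDegree + N) := by
  rw [mem_totalDegreeLT_iff_coeff] at hy ⊢
  intro j hj
  rw [map_sub, map_mul, dilate_of_isHomogeneous hc, coeff_sub, ← C_mul_X_pow_eq_monomial, mul_assoc,
    coeff_C_mul, coeff_X_pow_mul', if_pos (by omega)]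
  rcases hj.eq_or_lt with rfl | hj
  · rw [hyw, Nat.add_sub_cancel_right, leadingCoeff, natDegree_dilate, sub_self]
  · rw [hy j hj, coeff_eq_zero_of_natDegree_lt (by rw [natDegree_dilate]; omega), mul_zero,
      sub_zero]

variable {u v : MvPolynomial σ k}

lemma exists_sub_mul_mem_totalDegreeLT (hu : u ≠ 0) (hv : v ≠ 0)
    (huv : IsRelPrime (dilate u).leadingCoeff (dilate v).leadingCoeff) (n : ℕ)
    {p r : MvPolynomial σ k} (hp : p ∈ totalDegreeLT σ k (v.totalDegree + n))
    (hr : r ∈ totalDegreeLT σ k (u.totalDegree + n))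
    (hpr : p * u + r * v ∈ totalDegreeLT σ k (u.totalDegree + v.totalDegree)) :
    ∃ c, p - c * v ∈ totalDegreeLT σ k v.totalDegree ∧
      r + c * u ∈ totalDegreeLT σ k u.totalDegree := by
  induction n generalizing p r with
  | zero => exact ⟨0, by simpa using hp, by simpa using hr⟩
  | succ n ih =>
    set d := u.totalDegree
    set e := v.totalDegree
    have hform : (dilate p).coeff (e + n) * (dilate u).leadingCoeff +
        (dilate r).coeff (d + n) * (dilate v).leadingCoeff = 0 := by
      have hp' : (dilate p).natDegree ≤ e + n := natDegree_le_iff_coeff_eq_zero.2 fun j hj ↦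
        mem_totalDegreeLT_iff_coeff.1 hp j hj
      have hr' : (dilate r).natDegree ≤ d + n := natDegree_le_iff_coeff_eq_zero.2 fun j hj ↦
        mem_totalDegreeLT_iff_coeff.1 hr j hj
      have hcoeff := mem_totalDegreeLT_iff_coeff.1 hpr (d + e + n) (by omega)
      rw [map_add, map_mul, map_mul, coeff_add, show d + e + n = e + n + d by ring,
        coeff_mul_add_eq_of_natDegree_le hp' (natDegree_dilate u).le,
        show e + n + d = d + n + e by ring,
        coeff_mul_add_eq_of_natDegree_le hr' (natDegree_dilate v).le] at hcoeff
      simpa only [leadingCoeff, natDegree_dilate] using hcoeff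
    obtain ⟨c, hpc, hrc⟩ := exists_eq_mul_and_eq_neg_mul_of_isRelPrime
      (leadingCoeff_ne_zero.2 (dilate_ne_zero hu)) huv hform
    have hc : c.IsHomogeneous n := by
      refine isHomogeneous_of_mul (n := e) ?_ (leadingCoeff_ne_zero.2 (dilate_ne_zero hv))
        (hpc ▸ ?_)
      · rw [leadingCoeff, natDegree_dilate, coeff_dilate]
        exact MvPolynomial.homogeneousComponent_isHomogeneous _ _
      · rw [coeff_dilate, add_comm]
        exact MvPolynomial.homogeneousComponent_isHomogeneous _ _
    have hp' : p - c * v ∈ totalDegreeLT σ k (e + n) := sub_mul_mem_totalDegreeLT hc hp hpc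
    have hr' : r + c * u ∈ totalDegreeLT σ k (d + n) := by
      rw [← neg_neg (r + c * u), neg_add']
      exact neg_mem (sub_mul_mem_totalDegreeLT hc (neg_mem hr)
        (by rw [map_neg, coeff_neg, neg_eq_iff_eq_neg]; exact hrc))
    obtain ⟨c', hpc', hrc'⟩ := ih hp' hr' (by convert! hpr using 1; ring)
    exact ⟨c + c', by convert! hpc' using 1; ring, by convert! hrc' using 1; ring⟩

lemma exists_mul_add_mul_of_mem_span_pair (hu : u ≠ 0) (hv : v ≠ 0)
    (huv : IsRelPrime (dilate u).leadingCoeff (dilate v).leadingCoeff) {x : MvPolynomial σ k}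
    (hx : x ∈ Ideal.span {u, v})
    (hdeg : x ∈ totalDegreeLT σ k (u.totalDegree + v.totalDegree)) :
    ∃ p ∈ totalDegreeLT σ k v.totalDegree, ∃ r ∈ totalDegreeLT σ k u.totalDegree,
      p * u + r * v = x := by
  obtain ⟨p, r, rfl⟩ := Ideal.mem_span_pair.1 hx
  obtain ⟨c, hp, hr⟩ := exists_sub_mul_mem_totalDegreeLT hu hv huv
    (p.totalDegree + r.totalDegree + 1) (mem_totalDegreeLT_of_totalDegree_lt (by omega))
    (mem_totalDegreeLT_of_totalDegree_lt (by omega)) hdeg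
  exact ⟨_, hp, _, hr, by ring⟩

variable {u v : MvPolynomial (Fin 2) k}

theorem totalDegree_mul_totalDegree_le_finrank (hu : u ≠ 0) (hv : v ≠ 0)
    (huv : IsRelPrime (dilate u).leadingCoeff (dilate v).leadingCoeff)
    [FiniteDimensional k (MvPolynomial (Fin 2) k ⧸ Ideal.span {u, v})] :
    u.totalDegree * v.totalDegree ≤
      Module.finrank k (MvPolynomial (Fin 2) k ⧸ Ideal.span {u, v}) := by
  set d := u.totalDegree
  set e := v.totalDegree
  let V (N : ℕ) := totalDegreeLT (Fin 2) k N
  let quot : V (d + e) →ₗ[k] (MvPolynomial (Fin 2) k ⧸ Ideal.span {u, v}) :=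
    (Ideal.Quotient.mkₐ k (Ideal.span {u, v})).toLinearMap ∘ₗ (V (d + e)).subtype
  let comb : (V e × V d) →ₗ[k] MvPolynomial (Fin 2) k :=
    (LinearMap.mulRight k u ∘ₗ (V e).subtype).coprod (LinearMap.mulRight k v ∘ₗ (V d).subtype)
  have hcomb : ∀ x, comb x ∈ V (d + e) := fun x ↦ by
    refine add_mem ?_ (mul_mem_totalDegreeLT x.2.2 le_rfl)
    rw [add_comm]
    exact mul_mem_totalDegreeLT x.1.2 le_rfl
  have hker : LinearMap.ker quot ≤ LinearMap.range (comb.codRestrict _ hcomb) := by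
    rintro ⟨x, hx⟩ hxker
    obtain ⟨p, hp, r, hr, rfl⟩ := exists_mul_add_mul_of_mem_span_pair hu hv huv
      (Ideal.Quotient.eq_zero_iff_mem.1 hxker) hx
    exact ⟨⟨⟨p, hp⟩, ⟨r, hr⟩⟩, rfl⟩
  have hrank := LinearMap.finrank_range_add_finrank_ker quot
  have hrange := Submodule.finrank_le (LinearMap.range quot)
  have hker_le := (Submodule.finrank_mono hker).trans (LinearMap.finrank_range_le _)
  rw [Module.finrank_prod] at hker_le
  have hde := two_mul_finrank_totalDegreeLT (R := k) (d + e)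
  have hd := two_mul_finrank_totalDegreeLT (R := k) d
  have he := two_mul_finrank_totalDegreeLT (R := k) e
  nlinarith

end GlobalIntersection

section LocalIntersection

open Polynomial

lemma exists_eq_X_pow_natTrailingDegree_mul {R : Type*} [CommRing R] (p : R[X]) :
    ∃ q, p = X ^ p.natTrailingDegree * q ∧ q.coeff 0 = p.trailingCoeff := by
  obtain ⟨q, hq⟩ : X ^ p.natTrailingDegree ∣ p :=
    X_pow_dvd_iff.2 fun _ ↦ coeff_eq_zero_of_lt_natTrailingDegree
  refine ⟨q, hq, ?_⟩
  have hcoeff := congrArg (coeff · p.natTrailingDegree) hq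
  rw [trailingCoeff]
  simpa only [coeff_X_pow_mul', le_refl, if_true, Nat.sub_self] using hcoeff.symm

variable {σ k : Type*} [Field k] {u v : MvPolynomial σ k} {m n : ℕ}
  {u₁ v₁ : (MvPolynomial σ k)[X]}

lemma X_pow_mul_dilate_of_dilate_eq (p : MvPolynomial σ k) {w : ℕ} {p₁ : (MvPolynomial σ k)[X]}
    (hp : X ^ m * dilate p = X ^ w * p₁) :
    X ^ m * dilate (p₁.coeff 0) = X ^ w * C (p₁.coeff 0) := by
  have hcoeff := congrArg (coeff · w) hp
  simp only [coeff_X_pow_mul', le_refl, if_true, Nat.sub_self] at hcoeff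
  rw [← hcoeff]
  split_ifs with h
  · rw [dilate_coeff_dilate, ← C_mul_X_pow_eq_monomial, mul_left_comm, ← pow_add,
      Nat.add_sub_cancel' h, mul_comm]
  · simp

lemma X_pow_mul_dilate_of_coeff_zero_eq_mul (hv : dilate v = X ^ n * v₁) (hv₁ : v₁.coeff 0 ≠ 0)
    {p c : MvPolynomial σ k} {w : ℕ} {p₁ : (MvPolynomial σ k)[X]}
    (hp : X ^ m * dilate p = X ^ w * p₁) (hc : p₁.coeff 0 = c * v₁.coeff 0) :
    X ^ (m + n) * dilate c = X ^ w * C c := by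
  have hpc := X_pow_mul_dilate_of_dilate_eq p hp
  have hvc := X_pow_mul_dilate_of_dilate_eq (m := 0) v (by simpa using hv)
  rw [hc, map_mul, C_mul] at hpc
  refine mul_right_cancel₀ (C_ne_zero.2 hv₁) ?_
  linear_combination hpc - X ^ m * dilate c * hvc

lemma exists_X_pow_dvd_X_pow_mul_dilate (hu : dilate u = X ^ m * u₁) (hv : dilate v = X ^ n * v₁)
    (hu₁ : u₁.coeff 0 ≠ 0) (hv₁ : v₁.coeff 0 ≠ 0) (huv : IsRelPrime (u₁.coeff 0) (v₁.coeff 0))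
    {p r : MvPolynomial σ k} {w : ℕ} (hpr : X ^ w ∣ dilate (p * u + r * v)) :
    ∃ c, X ^ w ∣ X ^ m * dilate (p - c * v) ∧ X ^ w ∣ X ^ n * dilate (r + c * u) := by
  induction w with
  | zero => exact ⟨0, by simp⟩
  | succ w ih =>
    obtain ⟨c₀, ⟨p₁, hp₁⟩, ⟨r₁, hr₁⟩⟩ := ih ((pow_dvd_pow X w.le_succ).trans hpr)
    have hform : p₁.coeff 0 * u₁.coeff 0 + r₁.coeff 0 * v₁.coeff 0 = 0 := by
      have hsum : dilate (p * u + r * v) = X ^ w * (p₁ * u₁ + r₁ * v₁) := by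
        rw [show p * u + r * v = (p - c₀ * v) * u + (r + c₀ * u) * v by ring, map_add, map_mul,
          map_mul, hu, hv]
        linear_combination u₁ * hp₁ + v₁ * hr₁
      rw [hsum, pow_succ, mul_dvd_mul_iff_left (pow_ne_zero _ X_ne_zero), X_dvd_iff] at hpr
      simpa only [coeff_add, mul_coeff_zero] using hpr
    obtain ⟨c, hpc, hrc⟩ := exists_eq_mul_and_eq_neg_mul_of_isRelPrime hu₁ huv hform
    have hc := X_pow_mul_dilate_of_coeff_zero_eq_mul hv hv₁ hp₁ hpc
    refine ⟨c₀ + c, ?_, ?_⟩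
    · have hsub : X ^ m * dilate (p - (c₀ + c) * v) = X ^ w * (p₁ - C c * v₁) := by
        rw [show p - (c₀ + c) * v = (p - c₀ * v) - c * v by ring, map_sub, map_mul dilate c, hv]
        linear_combination hp₁ - v₁ * hc
      rw [hsub, pow_succ]
      exact mul_dvd_mul_left _ (X_dvd_iff.2 (by simp [hpc]))
    · have hadd : X ^ n * dilate (r + (c₀ + c) * u) = X ^ w * (r₁ + C c * u₁) := by
        rw [show r + (c₀ + c) * u = (r + c₀ * u) + c * u by ring, map_add, map_mul dilate c, hu]
        linear_combination hr₁ + u₁ * hc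
      rw [hadd, pow_succ]
      exact mul_dvd_mul_left _ (X_dvd_iff.2 (by simp [hrc]))

lemma exists_eq_truncateTotalDegree_mul (hu : dilate u = X ^ m * u₁) (hv : dilate v = X ^ n * v₁)
    (hu₁ : u₁.coeff 0 ≠ 0) (hv₁ : v₁.coeff 0 ≠ 0) (huv : IsRelPrime (u₁.coeff 0) (v₁.coeff 0))
    {N : ℕ} {p r : MvPolynomial σ k} (hp : p ∈ totalDegreeLT σ k (n + N))
    (hr : r ∈ totalDegreeLT σ k (m + N))
    (hpr : p * u + r * v ∈ MvPolynomial.idealOfVars σ k ^ (m + n + N)) :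
    ∃ c ∈ totalDegreeLT σ k N, p = truncateTotalDegree (n + N) (c * v) ∧
      r = -truncateTotalDegree (m + N) (c * u) := by
  obtain ⟨c, hpc, hrc⟩ := exists_X_pow_dvd_X_pow_mul_dilate hu hv hu₁ hv₁ huv
    (X_pow_dvd_dilate_iff.2 hpr)
  have htrunc {y : MvPolynomial σ k} {j : ℕ} {y₁ : (MvPolynomial σ k)[X]}
      (hy : dilate y = X ^ j * y₁) :
      truncateTotalDegree (j + N) (c * y) = truncateTotalDegree (j + N)
        (truncateTotalDegree N c * y) := by
    rw [← sub_eq_zero, ← map_sub, ← sub_mul, truncateTotalDegree_eq_zero_iff,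
      ← X_pow_dvd_dilate_iff, map_mul, hy, add_comm, pow_add]
    exact mul_dvd_mul (X_pow_dvd_dilate_iff.2 (sub_truncateTotalDegree_mem N c))
      (dvd_mul_right _ _)
  refine ⟨truncateTotalDegree N c, truncateTotalDegree_mem N c, ?_, ?_⟩
  · rw [add_assoc, pow_add, mul_dvd_mul_iff_left (pow_ne_zero _ X_ne_zero), X_pow_dvd_dilate_iff,
      ← truncateTotalDegree_eq_zero_iff, map_sub, truncateTotalDegree_of_mem hp, sub_eq_zero] at hpc
    rw [hpc, htrunc hv]
  · rw [add_comm m, add_assoc, pow_add, mul_dvd_mul_iff_left (pow_ne_zero _ X_ne_zero),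
      X_pow_dvd_dilate_iff, ← truncateTotalDegree_eq_zero_iff, map_add,
      truncateTotalDegree_of_mem hr] at hrc
    rw [eq_neg_of_add_eq_zero_left hrc, htrunc hu]

/-- The linear map `(p, r) ↦ p * u + r * v` modulo terms of degree at least `K`. Its cokernel is the
quotient by `(u, v)` and the `K`-th power of the maximal ideal at the origin. -/
noncomputable def truncatedCombination (u v : MvPolynomial σ k) (a b K : ℕ) :
    (totalDegreeLT σ k a × totalDegreeLT σ k b) →ₗ[k] totalDegreeLT σ k K :=
  (truncateTotalDegree K ∘ₗ (LinearMap.mulRight k u ∘ₗ (totalDegreeLT σ k a).subtype).coprod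
    (LinearMap.mulRight k v ∘ₗ (totalDegreeLT σ k b).subtype)).codRestrict _
      fun _ ↦ truncateTotalDegree_mem _ _

/-- Reduction modulo `I` and the `K`-th power of the maximal ideal at the origin, on the polynomials
of degree less than `K`. -/
noncomputable def truncatedMk (I : Ideal (MvPolynomial σ k)) (K : ℕ) :
    totalDegreeLT σ k K →ₗ[k] MvPolynomial σ k ⧸ (I ⊔ MvPolynomial.idealOfVars σ k ^ K) :=
  (Ideal.Quotient.mkₐ k _).toLinearMap ∘ₗ (totalDegreeLT σ k K).subtype

lemma truncatedMk_surjective (I : Ideal (MvPolynomial σ k)) (K : ℕ) :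
    Function.Surjective (truncatedMk I K) := fun y ↦ by
  obtain ⟨x, rfl⟩ := Ideal.Quotient.mk_surjective y
  exact ⟨⟨truncateTotalDegree K x, truncateTotalDegree_mem K x⟩,
    (Ideal.Quotient.eq.2 (le_sup_right (a := I) (sub_truncateTotalDegree_mem K x))).symm⟩

instance [Finite σ] (I : Ideal (MvPolynomial σ k)) (K : ℕ) :
    FiniteDimensional k (MvPolynomial σ k ⧸ (I ⊔ MvPolynomial.idealOfVars σ k ^ K)) :=
  Module.Finite.of_surjective _ (truncatedMk_surjective I K)

lemma range_truncatedCombination_le_ker (u v : MvPolynomial σ k) (a b K : ℕ) :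
    LinearMap.range (truncatedCombination u v a b K) ≤
      LinearMap.ker (truncatedMk (Ideal.span {u, v}) K) := by
  rintro _ ⟨⟨p, r⟩, rfl⟩
  set x := (p : MvPolynomial σ k) * u + (r : MvPolynomial σ k) * v
  have hx : x ∈ Ideal.span {u, v} := Ideal.mem_span_pair.2 ⟨_, _, rfl⟩
  have hmem := sub_mem (le_sup_left (b := MvPolynomial.idealOfVars σ k ^ K) hx)
    (le_sup_right (a := Ideal.span {u, v}) (sub_truncateTotalDegree_mem K x))
  rw [sub_sub_cancel] at hmem
  exact Ideal.Quotient.eq_zero_iff_mem.2 hmem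

lemma finrank_ker_truncatedCombination_le [Finite σ] (hu : dilate u = X ^ m * u₁)
    (hv : dilate v = X ^ n * v₁) (hu₁ : u₁.coeff 0 ≠ 0) (hv₁ : v₁.coeff 0 ≠ 0)
    (huv : IsRelPrime (u₁.coeff 0) (v₁.coeff 0)) (N : ℕ) :
    Module.finrank k (LinearMap.ker (truncatedCombination u v (n + N) (m + N) (m + n + N))) ≤
      Module.finrank k (totalDegreeLT σ k N) := by
  let syzygy : totalDegreeLT σ k N →ₗ[k] totalDegreeLT σ k (n + N) × totalDegreeLT σ k (m + N) :=
    ((truncateTotalDegree (n + N) ∘ₗ LinearMap.mulRight k v ∘ₗ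
      (totalDegreeLT σ k N).subtype).codRestrict _ fun _ ↦ truncateTotalDegree_mem _ _).prod
    ((-truncateTotalDegree (m + N) ∘ₗ LinearMap.mulRight k u ∘ₗ
      (totalDegreeLT σ k N).subtype).codRestrict _ fun _ ↦ neg_mem (truncateTotalDegree_mem _ _))
  refine (Submodule.finrank_mono ?_).trans (LinearMap.finrank_range_le syzygy)
  rintro ⟨⟨p, hp⟩, ⟨r, hr⟩⟩ hpr
  obtain ⟨c, hc, hpc, hrc⟩ := exists_eq_truncateTotalDegree_mul hu hv hu₁ hv₁ huv hp hr
    (truncateTotalDegree_eq_zero_iff.1 (congrArg Subtype.val hpr))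
  exact ⟨⟨c, hc⟩, Prod.ext (Subtype.ext hpc.symm) (Subtype.ext hrc.symm)⟩

theorem finrank_quotient_sup_idealOfVars_pow_le {u v : MvPolynomial (Fin 2) k} (hu : u ≠ 0)
    (hv : v ≠ 0) (huv : IsRelPrime (dilate u).trailingCoeff (dilate v).trailingCoeff) {K : ℕ}
    (hK : (dilate u).natTrailingDegree + (dilate v).natTrailingDegree ≤ K) :
    Module.finrank k (MvPolynomial (Fin 2) k ⧸
        (Ideal.span {u, v} ⊔ MvPolynomial.idealOfVars (Fin 2) k ^ K)) ≤
      (dilate u).natTrailingDegree * (dilate v).natTrailingDegree := by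
  obtain ⟨N, rfl⟩ := Nat.exists_eq_add_of_le hK
  obtain ⟨u₁, hu₁, hu₁0⟩ := exists_eq_X_pow_natTrailingDegree_mul (dilate u)
  obtain ⟨v₁, hv₁, hv₁0⟩ := exists_eq_X_pow_natTrailingDegree_mul (dilate v)
  set m := (dilate u).natTrailingDegree
  set n := (dilate v).natTrailingDegree
  rw [← hu₁0, ← hv₁0] at huv
  have hker := finrank_ker_truncatedCombination_le hu₁ hv₁
    (hu₁0 ▸ trailingCoeff_nonzero_iff_nonzero.2 (dilate_ne_zero hu))
    (hv₁0 ▸ trailingCoeff_nonzero_iff_nonzero.2 (dilate_ne_zero hv)) huv N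
  have hcomb := LinearMap.finrank_range_add_finrank_ker
    (truncatedCombination u v (n + N) (m + N) (m + n + N))
  have hrange := Submodule.finrank_mono
    (range_truncatedCombination_le_ker u v (n + N) (m + N) (m + n + N))
  have hmk := LinearMap.finrank_range_add_finrank_ker (truncatedMk (Ideal.span {u, v}) (m + n + N))
  rw [LinearMap.range_eq_top.2 (truncatedMk_surjective _ _), finrank_top] at hmk
  rw [Module.finrank_prod] at hcomb
  have hK := two_mul_finrank_totalDegreeLT (R := k) (m + n + N)
  have hnN := two_mul_finrank_totalDegreeLT (R := k) (n + N)
  have hmN := two_mul_finrank_totalDegreeLT (R := k) (m + N)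
  have hN := two_mul_finrank_totalDegreeLT (R := k) N
  nlinarith

end LocalIntersection

section TaylorExpansion

open Polynomial

variable {σ R : Type*} [CommRing R]

/-- The substitution `X ↦ X + P`, which moves the point `P` to the origin. -/
noncomputable def recenter (P : σ → R) : MvPolynomial σ R ≃ₐ[R] MvPolynomial σ R :=
  AlgEquiv.ofAlgHom (MvPolynomial.aeval fun i ↦ MvPolynomial.X i + MvPolynomial.C (P i))
    (MvPolynomial.aeval fun i ↦ MvPolynomial.X i - MvPolynomial.C (P i))
    (by ext1 i; simp [MvPolynomial.algebraMap_eq]) (by ext1 i; simp [MvPolynomial.algebraMap_eq])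

lemma recenter_X (P : σ → R) (i : σ) :
    recenter P (MvPolynomial.X i) = MvPolynomial.X i + MvPolynomial.C (P i) := by
  simp [recenter]

lemma eval_zero_recenter (P : σ → R) (u : MvPolynomial σ R) :
    MvPolynomial.eval 0 (recenter P u) = MvPolynomial.eval P u := by
  have h : (MvPolynomial.aeval (0 : σ → R)).comp (recenter P).toAlgHom =
      MvPolynomial.aeval P := by
    ext i
    simp [recenter]
  exact DFunLike.congr_fun h u

/-- The Taylor expansion `u(P + T • X)` of `u` at `P`, as a polynomial in `T`. -/
noncomputable def taylorAt (P : σ → R) : MvPolynomial σ R →ₐ[R] (MvPolynomial σ R)[X] :=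
  dilate.comp (recenter P).toAlgHom

lemma taylorAt_X (P : σ → R) (i : σ) :
    taylorAt P (MvPolynomial.X i) = C (MvPolynomial.X i) * X + C (MvPolynomial.C (P i)) := by
  change dilate (recenter P _) = _
  rw [recenter_X, map_add, dilate_X, dilate_C]

lemma taylorAt_injective (P : σ → R) : Function.Injective (taylorAt P) :=
  fun _ _ h ↦ (recenter P).injective (dilate_injective h)

lemma taylorAt_ne_zero (P : σ → R) {u : MvPolynomial σ R} (hu : u ≠ 0) : taylorAt P u ≠ 0 :=
  (map_ne_zero_iff _ (taylorAt_injective P)).2 hu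

lemma coeff_zero_taylorAt (P : σ → R) (u : MvPolynomial σ R) :
    (taylorAt P u).coeff 0 = MvPolynomial.C (MvPolynomial.eval P u) := by
  change (dilate (recenter P u)).coeff 0 = _
  rw [coeff_dilate, MvPolynomial.homogeneousComponent_zero, ← eval_zero_recenter,
    ← MvPolynomial.constantCoeff_eq, MvPolynomial.eval_zero]

/-- The order of vanishing of `u` at `P`. It is `0` for `u = 0`. -/
noncomputable def multiplicityAt (P : σ → R) (u : MvPolynomial σ R) : ℕ :=
  (taylorAt P u).natTrailingDegree

/-- The homogeneous part of lowest degree of `u` in coordinates centred at `P`: the equation of the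
tangent cone at `P` of the hypersurface `u = 0`. -/
noncomputable def initialForm (P : σ → R) (u : MvPolynomial σ R) : MvPolynomial σ R :=
  (taylorAt P u).trailingCoeff

variable {P : σ → R} {u v : MvPolynomial σ R}

lemma initialForm_ne_zero (hu : u ≠ 0) : initialForm P u ≠ 0 :=
  trailingCoeff_nonzero_iff_nonzero.2 (taylorAt_ne_zero P hu)

lemma dilate_initialForm (P : σ → R) (u : MvPolynomial σ R) :
    dilate (initialForm P u) = monomial (multiplicityAt P u) (initialForm P u) :=
  dilate_coeff_dilate (recenter P u) _

lemma totalDegree_initialForm (hu : u ≠ 0) :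
    (initialForm P u).totalDegree = multiplicityAt P u := by
  rw [← natDegree_dilate, dilate_initialForm, natDegree_monomial_eq _ (initialForm_ne_zero hu)]

lemma multiplicityAt_and_initialForm_of_taylorAt_eq {m : ℕ} {w : (MvPolynomial σ R)[X]}
    (h : taylorAt P u = X ^ m * w) (hw : w.coeff 0 ≠ 0) :
    multiplicityAt P u = m ∧ initialForm P u = w.coeff 0 := by
  have hm : (taylorAt P u).coeff m = w.coeff 0 := by simp [h, coeff_X_pow_mul']
  have hmult : multiplicityAt P u = m := by
    refine le_antisymm (natTrailingDegree_le_of_ne_zero (by rwa [hm]))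
      (le_natTrailingDegree (fun h0 ↦ hw ?_) fun j hj ↦ ?_)
    · rw [← hm, h0, coeff_zero]
    · rw [h, coeff_X_pow_mul', if_neg hj.not_ge]
  refine ⟨hmult, ?_⟩
  rw [initialForm, trailingCoeff, ← hm]
  exact congrArg _ hmult

lemma multiplicityAt_pos_iff (hu : u ≠ 0) :
    0 < multiplicityAt P u ↔ MvPolynomial.eval P u = 0 := by
  rw [Nat.pos_iff_ne_zero, multiplicityAt, Ne, natTrailingDegree_eq_zero, coeff_zero_taylorAt]
  simp [taylorAt_ne_zero P hu]

lemma multiplicityAt_eq_zero (h : MvPolynomial.eval P u ≠ 0) : multiplicityAt P u = 0 := by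
  rw [multiplicityAt, natTrailingDegree_eq_zero, coeff_zero_taylorAt]
  simp [h]

lemma multiplicityAt_mul [IsDomain R] (hu : u ≠ 0) (hv : v ≠ 0) :
    multiplicityAt P (u * v) = multiplicityAt P u + multiplicityAt P v := by
  rw [multiplicityAt, map_mul,
    natTrailingDegree_mul (taylorAt_ne_zero P hu) (taylorAt_ne_zero P hv)]
  rfl

lemma initialForm_mul [IsDomain R] (u v : MvPolynomial σ R) :
    initialForm P (u * v) = initialForm P u * initialForm P v := by
  rw [initialForm, map_mul, trailingCoeff_mul]
  rfl

lemma initialForm_of_eval_ne_zero (h : MvPolynomial.eval P u ≠ 0) :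
    initialForm P u = MvPolynomial.C (MvPolynomial.eval P u) := by
  rw [initialForm, trailingCoeff, ← multiplicityAt, multiplicityAt_eq_zero h, coeff_zero_taylorAt]

end TaylorExpansion

section IntersectionMultiplicity

open Polynomial

variable {σ k : Type*} [Field k]

lemma mem_vanishingIdeal_singleton_iff_recenter_mem {P : σ → k} {u : MvPolynomial σ k} :
    u ∈ MvPolynomial.vanishingIdeal k {P} ↔ recenter P u ∈ MvPolynomial.idealOfVars σ k := by
  rw [MvPolynomial.mem_vanishingIdeal_singleton_iff, ← pow_one (MvPolynomial.idealOfVars σ k),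
    ← X_pow_dvd_dilate_iff, pow_one, X_dvd_iff]
  change _ ↔ (taylorAt P u).coeff 0 = 0
  rw [coeff_zero_taylorAt, MvPolynomial.C_eq_zero]
  rfl

lemma map_recenter_vanishingIdeal_singleton (P : σ → k) :
    (MvPolynomial.vanishingIdeal k {P}).map (recenter P : MvPolynomial σ k →+* MvPolynomial σ k) =
      MvPolynomial.idealOfVars σ k := by
  ext u
  refine (Ideal.mem_map_of_equiv (recenter P) u).trans ⟨?_, fun hu ↦ ⟨(recenter P).symm u, ?_⟩⟩
  · rintro ⟨x, hx, rfl⟩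
    exact mem_vanishingIdeal_singleton_iff_recenter_mem.1 hx
  · rw [mem_vanishingIdeal_singleton_iff_recenter_mem]
    simpa using hu

/-- Translation identifies the quotients defining the local intersection number at `P` with those at
the origin. -/
noncomputable def quotientRecenterEquiv (P : σ → k) (u v : MvPolynomial σ k) (K : ℕ) :
    (MvPolynomial σ k ⧸ (Ideal.span {u, v} ⊔ MvPolynomial.vanishingIdeal k {P} ^ K)) ≃ₐ[k]
      MvPolynomial σ k ⧸
        (Ideal.span {recenter P u, recenter P v} ⊔ MvPolynomial.idealOfVars σ k ^ K) :=
  Ideal.quotientEquivAlg _ _ (recenter P) (by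
    rw [Ideal.map_sup, Ideal.map_pow, map_recenter_vanishingIdeal_singleton, Ideal.map_span,
      Set.image_pair]
    rfl)

instance [Finite σ] (P : σ → k) (u v : MvPolynomial σ k) (K : ℕ) : FiniteDimensional k
    (MvPolynomial σ k ⧸ (Ideal.span {u, v} ⊔ MvPolynomial.vanishingIdeal k {P} ^ K)) :=
  Module.Finite.equiv (quotientRecenterEquiv P u v K).symm.toLinearEquiv

/-- The local intersection number of `u = 0` and `v = 0` at `P` is at most `c`. The local ring at
`P` is replaced by its Artinian quotients, over all powers of the maximal ideal. -/
def IntersectionMultiplicityLE (P : σ → k) (u v : MvPolynomial σ k) (c : ℕ) : Prop :=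
  ∀ K, Module.finrank k
    (MvPolynomial σ k ⧸ (Ideal.span {u, v} ⊔ MvPolynomial.vanishingIdeal k {P} ^ K)) ≤ c

lemma finrank_quotient_sup_vanishingIdeal_pow_le [Finite σ] (P : σ → k)
    {u v u' v' : MvPolynomial σ k} {K K' : ℕ} (hle : Ideal.span {u, v} ≤ Ideal.span {u', v'})
    (hK : K' ≤ K) :
    Module.finrank k
        (MvPolynomial σ k ⧸ (Ideal.span {u', v'} ⊔ MvPolynomial.vanishingIdeal k {P} ^ K')) ≤
      Module.finrank k
        (MvPolynomial σ k ⧸ (Ideal.span {u, v} ⊔ MvPolynomial.vanishingIdeal k {P} ^ K)) :=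
  have h := sup_le_sup hle (Ideal.pow_le_pow_right hK)
  LinearMap.finrank_le_finrank_of_surjective (f := (Ideal.Quotient.factorₐ k h).toLinearMap)
    (Ideal.Quotient.factor_surjective h)

lemma IntersectionMultiplicityLE.mono [Finite σ] {P : σ → k} {u v u' v' : MvPolynomial σ k}
    {c c' : ℕ} (h : IntersectionMultiplicityLE P u v c)
    (hle : Ideal.span {u, v} ≤ Ideal.span {u', v'}) (hc : c ≤ c') :
    IntersectionMultiplicityLE P u' v' c' :=
  fun K ↦ ((finrank_quotient_sup_vanishingIdeal_pow_le P hle le_rfl).trans (h K)).trans hc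

variable {P : Fin 2 → k} {u v : MvPolynomial (Fin 2) k}

theorem intersectionMultiplicityLE_of_isRelPrime_initialForm (hu : u ≠ 0) (hv : v ≠ 0)
    (huv : IsRelPrime (initialForm P u) (initialForm P v)) :
    IntersectionMultiplicityLE P u v (multiplicityAt P u * multiplicityAt P v) := by
  intro K
  refine (finrank_quotient_sup_vanishingIdeal_pow_le P le_rfl
    (Nat.le_add_right K (multiplicityAt P u + multiplicityAt P v))).trans ?_
  rw [(quotientRecenterEquiv P u v _).toLinearEquiv.finrank_eq]
  exact finrank_quotient_sup_idealOfVars_pow_le ((map_ne_zero_iff _ (recenter P).injective).2 hu)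
    ((map_ne_zero_iff _ (recenter P).injective).2 hv) huv (Nat.le_add_left _ _)

lemma intersectionMultiplicityLE_zero (hu : u ≠ 0) (hv : v ≠ 0)
    (h : ¬ (MvPolynomial.eval P u = 0 ∧ MvPolynomial.eval P v = 0)) :
    IntersectionMultiplicityLE P u v 0 := by
  have hunit {w : MvPolynomial (Fin 2) k} (hw : MvPolynomial.eval P w ≠ 0) :
      IsUnit (initialForm P w) := by
    rw [initialForm_of_eval_ne_zero hw]
    exact (isUnit_iff_ne_zero.2 hw).map MvPolynomial.C
  rcases not_and_or.1 h with h | h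
  · simpa [multiplicityAt_eq_zero h] using
      intersectionMultiplicityLE_of_isRelPrime_initialForm hu hv (hunit h).isRelPrime_left
  · simpa [multiplicityAt_eq_zero h] using
      intersectionMultiplicityLE_of_isRelPrime_initialForm hu hv (hunit h).isRelPrime_right

end IntersectionMultiplicity

section Bezout

open Polynomial

lemma prod_sup_le_sup_prod {R ι : Type*} [CommRing R] (I : Ideal R) (s : Finset ι)
    (A : ι → Ideal R) : ∏ i ∈ s, (I ⊔ A i) ≤ I ⊔ ∏ i ∈ s, A i := by
  classical
  induction s using Finset.induction with
  | empty => simp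
  | insert a s hs ih =>
    rw [Finset.prod_insert hs, Finset.prod_insert hs]
    refine (Ideal.mul_mono_right ih).trans ?_
    rw [Ideal.sup_mul, Ideal.mul_sup (A a)]
    exact sup_le (Ideal.mul_le_left.trans le_sup_left)
      (sup_le (Ideal.mul_le_right.trans le_sup_left) le_sup_right)

variable {σ k : Type*} [Field k]

lemma isCoprime_vanishingIdeal_singleton {P Q : σ → k} (h : P ≠ Q) :
    IsCoprime (MvPolynomial.vanishingIdeal k {P}) (MvPolynomial.vanishingIdeal k {Q}) := by
  refine Ideal.isCoprime_of_isMaximal fun hPQ ↦ h (funext fun i ↦ ?_)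
  have hmem : MvPolynomial.X i - MvPolynomial.C (P i) ∈ MvPolynomial.vanishingIdeal k {Q} := by
    rw [← hPQ, MvPolynomial.mem_vanishingIdeal_singleton_iff]
    simp
  rw [MvPolynomial.mem_vanishingIdeal_singleton_iff] at hmem
  simpa [sub_eq_zero, eq_comm] using hmem

lemma exists_iInf_sup_vanishingIdeal_pow_le [Finite σ] [IsAlgClosed k]
    (I : Ideal (MvPolynomial σ k)) (Z : Finset (σ → k)) (hZ : MvPolynomial.zeroLocus k I ⊆ Z) :
    ∃ K, ⨅ P ∈ Z, I ⊔ MvPolynomial.vanishingIdeal k {P} ^ K ≤ I := by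
  have hrad : ∏ P ∈ Z, MvPolynomial.vanishingIdeal k {P} ≤ I.radical := by
    rw [← MvPolynomial.vanishingIdeal_zeroLocus_eq_radical (K := k)]
    intro x hx P hP
    rw [← MvPolynomial.mem_vanishingIdeal_singleton_iff]
    exact (Ideal.prod_le_inf.trans (Finset.inf_le (hZ hP))) hx
  obtain ⟨K, hK⟩ := Ideal.exists_pow_le_of_le_radical_of_fg_radical hrad (IsNoetherian.noetherian _)
  refine ⟨K, ?_⟩
  rw [← Ideal.prod_eq_iInf_of_pairwise_isCoprime]
  · refine (prod_sup_le_sup_prod I Z _).trans (sup_le le_rfl ?_)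
    rwa [Finset.prod_pow]
  · intro P _ Q _ hPQ
    have hcop := (isCoprime_vanishingIdeal_singleton hPQ).pow (m := K) (n := K)
    rw [Ideal.isCoprime_iff_sup_eq] at hcop
    exact Ideal.isCoprime_iff_sup_eq.2
      (top_le_iff.1 (hcop ▸ sup_le_sup le_sup_right le_sup_right))

variable {u v : MvPolynomial σ k}

lemma finrank_quotient_span_pair_le [Finite σ] [IsAlgClosed k] {Z : Finset (σ → k)}
    (hZ : ∀ P, MvPolynomial.eval P u = 0 → MvPolynomial.eval P v = 0 → P ∈ Z)
    {c : (σ → k) → ℕ} (hc : ∀ P ∈ Z, IntersectionMultiplicityLE P u v (c P)) :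
    FiniteDimensional k (MvPolynomial σ k ⧸ Ideal.span {u, v}) ∧
      Module.finrank k (MvPolynomial σ k ⧸ Ideal.span {u, v}) ≤ ∑ P ∈ Z, c P := by
  obtain ⟨K, hK⟩ := exists_iInf_sup_vanishingIdeal_pow_le (Ideal.span {u, v}) Z fun P hP ↦
    hZ P (hP u (Ideal.subset_span (by simp))) (hP v (Ideal.subset_span (by simp)))
  let J (P : σ → k) : Ideal (MvPolynomial σ k) :=
    Ideal.span {u, v} ⊔ MvPolynomial.vanishingIdeal k {P} ^ K
  let g : (MvPolynomial σ k ⧸ Ideal.span {u, v}) →ₐ[k] ∀ P : Z, MvPolynomial σ k ⧸ J P :=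
    AlgHom.pi fun P ↦ Ideal.Quotient.factorₐ k le_sup_left
  have hg : Function.Injective g := by
    rw [injective_iff_map_eq_zero]
    intro x hx
    obtain ⟨y, rfl⟩ := Ideal.Quotient.mk_surjective x
    refine Ideal.Quotient.eq_zero_iff_mem.2 (hK ?_)
    simp only [Submodule.mem_iInf]
    exact fun P hP ↦ Ideal.Quotient.eq_zero_iff_mem.1 (congrFun hx ⟨P, hP⟩)
  refine ⟨Module.Finite.of_injective g.toLinearMap hg,
    (LinearMap.finrank_le_finrank_of_injective (f := g.toLinearMap) hg).trans ?_⟩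
  rw [Module.finrank_pi_fintype, ← Finset.sum_coe_sort Z]
  exact Finset.sum_le_sum fun P _ ↦ hc P P.2 K

theorem totalDegree_mul_totalDegree_le_sum [IsAlgClosed k] {u v : MvPolynomial (Fin 2) k}
    (hu : u ≠ 0) (hv : v ≠ 0)
    (huv : IsRelPrime (dilate u).leadingCoeff (dilate v).leadingCoeff) {Z : Finset (Fin 2 → k)}
    (hZ : ∀ P, MvPolynomial.eval P u = 0 → MvPolynomial.eval P v = 0 → P ∈ Z)
    {c : (Fin 2 → k) → ℕ} (hc : ∀ P ∈ Z, IntersectionMultiplicityLE P u v (c P)) :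
    u.totalDegree * v.totalDegree ≤ ∑ P ∈ Z, c P := by
  obtain ⟨_, hle⟩ := finrank_quotient_span_pair_le hZ hc
  exact (totalDegree_mul_totalDegree_le_finrank hu hv huv).trans hle

end Bezout

section LinearForm

variable {k : Type*} [Field k]

local notation "xx" => (MvPolynomial.X 0 : MvPolynomial (Fin 2) k)
local notation "yy" => (MvPolynomial.X 1 : MvPolynomial (Fin 2) k)

/-- The linear form `a x + b y` on the plane. -/
noncomputable def linearForm (a b : k) : MvPolynomial (Fin 2) k :=
  MvPolynomial.C a * xx + MvPolynomial.C b * yy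

lemma eval_linearForm (a b : k) (P : Fin 2 → k) :
    MvPolynomial.eval P (linearForm a b) = a * P 0 + b * P 1 := by
  simp [linearForm]

lemma isHomogeneous_linearForm (a b : k) : (linearForm a b).IsHomogeneous 1 :=
  (MvPolynomial.isHomogeneous_C_mul_X a 0).add (MvPolynomial.isHomogeneous_C_mul_X b 1)

lemma linearForm_eq_zero_iff {a b : k} : linearForm a b = 0 ↔ a = 0 ∧ b = 0 := by
  refine ⟨fun h ↦ ?_, fun h ↦ by simp [linearForm, h]⟩
  have hx := eval_linearForm a b ![1, 0]
  have hy := eval_linearForm a b ![0, 1]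
  rw [h] at hx hy
  simp at hx hy
  exact ⟨hx.symm, hy.symm⟩

lemma linearForm_ne_zero {a b : k} (h : a ≠ 0 ∨ b ≠ 0) : linearForm a b ≠ 0 := by
  rwa [Ne, linearForm_eq_zero_iff, not_and_or]

lemma totalDegree_linearForm_add_C {a b : k} (h : a ≠ 0 ∨ b ≠ 0) (c : k) :
    (linearForm a b + MvPolynomial.C c).totalDegree = 1 := by
  have hdeg := (isHomogeneous_linearForm a b).totalDegree (linearForm_ne_zero h)
  rw [MvPolynomial.totalDegree_add_eq_left_of_totalDegree_lt] <;> simp [hdeg]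

lemma prime_linearForm_add_C {a b : k} (h : a ≠ 0 ∨ b ≠ 0) (c : k) :
    Prime (linearForm a b + MvPolynomial.C c) := by
  have hdeg := totalDegree_linearForm_add_C h c
  refine (MvPolynomial.irreducible_of_totalDegree_eq_one hdeg fun r hr ↦ ?_).prime
  refine isUnit_iff_ne_zero.2 ?_
  rintro rfl
  have h0 : linearForm a b + MvPolynomial.C c = 0 :=
    MvPolynomial.ext _ _ fun m ↦ by simpa using hr m
  simp [h0] at hdeg

lemma prime_linearForm {a b : k} (h : a ≠ 0 ∨ b ≠ 0) : Prime (linearForm a b) := by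
  simpa using prime_linearForm_add_C h 0

lemma isRelPrime_linearForm {a b c d : k} (hdet : a * d - b * c ≠ 0) :
    IsRelPrime (linearForm a b) (linearForm c d) := by
  have hab : a ≠ 0 ∨ b ≠ 0 := by
    by_contra! h
    simp [h.1, h.2] at hdet
  refine (prime_linearForm hab).irreducible.isRelPrime_iff_not_dvd.2 ?_
  rintro ⟨w, hw⟩
  have heval := congrArg (MvPolynomial.eval ![b, -a]) hw
  rw [map_mul, eval_linearForm, eval_linearForm] at heval
  refine hdet ?_
  simp only [Matrix.cons_val_zero, Matrix.cons_val_one, Matrix.cons_val_fin_one] at heval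
  linear_combination -heval

end LinearForm

section CodewordPoly

lemma one_lt_two_pow_mul_add_one (i : ℕ) {l : ℕ} (hl : 0 < l) : 1 < 2 ^ i * l + 1 := by
  have : 0 < 2 ^ i * l := by positivity
  omega

lemma odd_two_pow_mul_add_one {i : ℕ} (hi : 1 ≤ i) (l : ℕ) : Odd (2 ^ i * l + 1) :=
  ((even_two.pow_of_ne_zero (by omega)).mul_right l).add_one

open Polynomial

local notation "xx" => MvPolynomial.X 0
local notation "yy" => MvPolynomial.X 1

/-- The polynomial `x^t + y^t + 1 + (x + y + 1)^t`, whose zeros over `𝔽_{2^n}` describe, after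
rescaling, the quadruples summing to zero whose `t`-th powers also sum to zero. -/
noncomputable def codewordPoly (R : Type*) [CommRing R] (t : ℕ) : MvPolynomial (Fin 2) R :=
  xx ^ t + yy ^ t + 1 + (xx + yy + 1) ^ t

lemma dvd_derivation_apply_of_mul_self_dvd {R A : Type*} [CommSemiring R] [CommSemiring A]
    [Algebra R A] (D : Derivation R A A) {p u : A} (h : p * p ∣ u) : p ∣ D u := by
  obtain ⟨w, rfl⟩ := h
  rw [mul_assoc, D.leibniz, smul_eq_mul, smul_eq_mul, mul_assoc]
  exact dvd_add (dvd_mul_right _ _) (dvd_mul_right _ _)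

lemma natCast_eq_one_of_odd {R : Type*} [AddGroupWithOne R] [CharP R 2] {t : ℕ} (ht : Odd t) :
    (t : R) = 1 := by
  rw [CharTwo.natCast_eq_ite, if_neg (Nat.not_even_iff_odd.2 ht)]

lemma derivation_pow_of_odd {R A : Type*} [CommRing R] [CommRing A] [Algebra R A] [CharP A 2]
    (D : Derivation R A A) (u : A) {t : ℕ} (ht : Odd t) : D (u ^ t) = u ^ (t - 1) * D u := by
  rw [D.leibniz_pow, smul_eq_mul, nsmul_eq_mul, natCast_eq_one_of_odd ht, one_mul]

lemma dvd_coeff_of_dvd_leadingCoeff {R : Type*} [Semiring R] {p : R} {u : R[X]}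
    (h : p ∣ u.leadingCoeff) {j : ℕ} (hj : u.natDegree ≤ j) : p ∣ u.coeff j := by
  rcases hj.eq_or_lt with rfl | hj
  · exact h
  · simp [coeff_eq_zero_of_natDegree_lt hj]

lemma dvd_coeff_mul_of_dvd_leadingCoeff {R : Type*} [CommSemiring R] {p : R} {u v : R[X]}
    (hu : p ∣ u.leadingCoeff) (hv : p ∣ v.leadingCoeff) {j : ℕ}
    (hj : u.natDegree + v.natDegree ≤ j + 1) : p ∣ (u * v).coeff j := by
  rw [coeff_mul]
  refine Finset.dvd_sum fun x hx ↦ ?_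
  have hsum := Finset.HasAntidiagonal.mem_antidiagonal.1 hx
  rcases le_or_gt u.natDegree x.1 with h | h
  · exact (dvd_coeff_of_dvd_leadingCoeff hu h).mul_right _
  · exact (dvd_coeff_of_dvd_leadingCoeff hv (by omega)).mul_left _

lemma coeff_dilate_codewordPoly {R : Type*} [CommRing R] (t : ℕ) {j : ℕ} (hj : j ≠ 0) :
    (dilate (codewordPoly R t)).coeff j =
      (if j = t then xx ^ t + yy ^ t else 0) +
        (t.choose j : MvPolynomial (Fin 2) R) * (xx + yy) ^ j := by
  have hdilate : dilate (codewordPoly R t) =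
      C (xx ^ t + yy ^ t) * X ^ t + 1 + ((X + 1) ^ t).comp (C (xx + yy) * X) := by
    simp only [codewordPoly, map_add, map_pow, dilate_X, map_one, mul_pow, add_mul, pow_comp,
      add_comp, X_comp, one_comp]
  rw [hdilate, coeff_add, coeff_add, coeff_C_mul_X_pow, coeff_one, if_neg hj, add_zero,
    comp_C_mul_X_coeff, coeff_X_add_one_pow]

lemma coeff_self_dilate_codewordPoly {R : Type*} [CommRing R] {t : ℕ} (ht : t ≠ 0) :
    (dilate (codewordPoly R t)).coeff t = xx ^ t + yy ^ t + (xx + yy) ^ t := by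
  simp [coeff_dilate_codewordPoly t ht]

variable {k : Type*} [Field k] [CharP k 2] {t : ℕ}

lemma coeff_pred_dilate_codewordPoly (ht : 1 < t) (hodd : Odd t) :
    (dilate (codewordPoly k t)).coeff (t - 1) = (xx + yy) ^ (t - 1) := by
  rw [coeff_dilate_codewordPoly t (by omega), if_neg (by omega), zero_add,
    Nat.choose_symm (by omega), Nat.choose_one_right, natCast_eq_one_of_odd hodd, one_mul]

lemma pow_add_pow_add_add_pow_ne_zero (ht : 1 < t) (hodd : Odd t) :
    (xx ^ t + yy ^ t + (xx + yy) ^ t : MvPolynomial (Fin 2) k) ≠ 0 := by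
  intro h
  have hderiv := congrArg (MvPolynomial.pderiv 0) h
  simp only [map_add, derivation_pow_of_odd _ _ hodd, map_zero] at hderiv
  have heval := congrArg (MvPolynomial.eval (fun _ ↦ 1)) hderiv
  simp [MvPolynomial.pderiv_X, CharTwo.add_self_eq_zero, show t - 1 ≠ 0 by omega] at heval

lemma codewordPoly_ne_zero (ht : 1 < t) (hodd : Odd t) : codewordPoly k t ≠ 0 := by
  intro h
  apply pow_add_pow_add_add_pow_ne_zero (k := k) ht hodd
  rw [← coeff_self_dilate_codewordPoly (by omega), h, map_zero, coeff_zero]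

lemma totalDegree_codewordPoly (ht : 1 < t) (hodd : Odd t) :
    (codewordPoly k t).totalDegree = t := by
  rw [← natDegree_dilate]
  refine natDegree_eq_of_le_of_coeff_ne_zero (natDegree_le_iff_coeff_eq_zero.2 fun j hj ↦ ?_) ?_
  · rw [coeff_dilate_codewordPoly t (by omega), if_neg hj.ne', Nat.choose_eq_zero_of_lt hj]
    simp
  · rw [coeff_self_dilate_codewordPoly (by omega)]
    exact pow_add_pow_add_add_pow_ne_zero ht hodd

lemma not_dvd_of_prime_of_sq_dvd_pow_add_pow_add_add_pow (hodd : Odd t)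
    {p : MvPolynomial (Fin 2) k} (hp : Prime p)
    (h : p * p ∣ xx ^ t + yy ^ t + (xx + yy) ^ t) :
    ¬ p ∣ (xx + yy) ^ (t - 1) := by
  intro hxy
  have hderiv := dvd_derivation_apply_of_mul_self_dvd (MvPolynomial.pderiv 0) h
  simp only [map_add, derivation_pow_of_odd _ _ hodd, MvPolynomial.pderiv_X] at hderiv
  simp only [Pi.single_eq_same, mul_one, ne_eq, one_ne_zero, not_false_eq_true,
    Pi.single_eq_of_ne, mul_zero, add_zero] at hderiv
  have hx : p ∣ xx := hp.dvd_of_dvd_pow ((dvd_add_left hxy).1 hderiv)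
  refine hp.not_isUnit (isRelPrime_linearForm (a := (1 : k)) (b := 0) (c := 1) (d := 1) (by simp)
    ?_ ?_)
  · simpa [linearForm] using hx
  · simpa [linearForm] using hp.dvd_of_dvd_pow hxy

lemma isRelPrime_leadingCoeff_dilate_of_mul_dvd_codewordPoly (ht : 1 < t) (hodd : Odd t)
    {u v : MvPolynomial (Fin 2) k} (h : u * v ∣ codewordPoly k t) :
    IsRelPrime (dilate u).leadingCoeff (dilate v).leadingCoeff := by
  obtain ⟨w, hw⟩ := h
  have hF : dilate (codewordPoly k t) = dilate u * dilate (v * w) := by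
    rw [hw, mul_assoc, map_mul]
  obtain ⟨hu, hvw⟩ := mul_ne_zero_iff.1 (hF ▸ dilate_ne_zero (codewordPoly_ne_zero ht hodd))
  have hdeg : (dilate (codewordPoly k t)).natDegree = t := by
    rw [natDegree_dilate, totalDegree_codewordPoly ht hodd]
  refine (UniqueFactorizationMonoid.isRelPrime_iff_no_prime_factors
    (leadingCoeff_ne_zero.2 hu)).2 fun p hpu hpv hp ↦ ?_
  have hpvw : p ∣ (dilate (v * w)).leadingCoeff := by
    rw [map_mul, leadingCoeff_mul]
    exact hpv.mul_right _
  refine not_dvd_of_prime_of_sq_dvd_pow_add_pow_add_add_pow hodd hp ?_ ?_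
  · rw [← coeff_self_dilate_codewordPoly (by omega), ← congrArg (coeff _) hdeg,
      coeff_natDegree, hF, leadingCoeff_mul]
    exact mul_dvd_mul hpu hpvw
  · rw [← coeff_pred_dilate_codewordPoly ht hodd, hF]
    refine dvd_coeff_mul_of_dvd_leadingCoeff hpu hpvw ?_
    rw [← natDegree_mul hu hvw, ← hF, hdeg]
    omega

end CodewordPoly

section LocalForm

open Polynomial

/-- The points all of whose coordinates `x`, `y`, `x + y + 1` are `l`-th roots of unity. For
`t = 2 ^ i * l + 1` they are exactly the singular points of `x^t + y^t + 1 + (x + y + 1)^t = 0` in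
characteristic two. -/
def IsSingularPoint {k : Type*} [CommRing k] (l : ℕ) (P : Fin 2 → k) : Prop :=
  P 0 ^ l = 1 ∧ P 1 ^ l = 1 ∧ (P 0 + P 1 + 1) ^ l = 1

lemma IsSingularPoint.ne_zero {k : Type*} [Field k] {l : ℕ} (hl : l ≠ 0) {P : Fin 2 → k}
    (h : IsSingularPoint l P) : P 0 ≠ 0 ∧ P 1 ≠ 0 ∧ P 0 + P 1 + 1 ≠ 0 :=
  ⟨IsUnit.ne_zero (.of_pow_eq_one h.1 hl), IsUnit.ne_zero (.of_pow_eq_one h.2.1 hl),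
    IsUnit.ne_zero (.of_pow_eq_one h.2.2 hl)⟩

variable {k : Type*} [Field k]

local notation "xx" => (MvPolynomial.X 0 : MvPolynomial (Fin 2) k)
local notation "yy" => (MvPolynomial.X 1 : MvPolynomial (Fin 2) k)
local notation "cc" => (MvPolynomial.C : k →+* MvPolynomial (Fin 2) k)

/-- The form of degree `q` in the expansion of `x^t + y^t + 1 + (x + y + 1)^t` at a singular point
`P`, where `t = q * l + 1`, `q = 2 ^ i` and `l` is odd; it is the first one that can be nonzero. -/
noncomputable def localForm (q : ℕ) (P : Fin 2 → k) : MvPolynomial (Fin 2) k :=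
  cc (P 0) * (cc (P 0)⁻¹ * xx) ^ q + cc (P 1) * (cc (P 1)⁻¹ * yy) ^ q +
    cc (P 0 + P 1 + 1) * (cc (P 0 + P 1 + 1)⁻¹ * (xx + yy)) ^ q

/-- The form of degree `q + 1` in the expansion of which `localForm q P` is the form of degree
`q`. -/
noncomputable def localFormSucc (q : ℕ) (P : Fin 2 → k) : MvPolynomial (Fin 2) k :=
  xx * (cc (P 0)⁻¹ * xx) ^ q + yy * (cc (P 1)⁻¹ * yy) ^ q +
    (xx + yy) * (cc (P 0 + P 1 + 1)⁻¹ * (xx + yy)) ^ q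

lemma exists_add_pow_of_pow_eq_one {R : Type*} [CommRing R] [CharP R 2] {i l : ℕ} (hi : 1 ≤ i)
    (hl : Odd l) {a b : R} (hab : a * b = 1) (ha : a ^ l = 1) (z : R) :
    ∃ r, (z + a) ^ (2 ^ i * l + 1) =
      a + z + a * (b * z) ^ 2 ^ i + z * (b * z) ^ 2 ^ i + z ^ (2 ^ i + 2) * r := by
  obtain ⟨w, hw⟩ := powAddExpansion (a ^ 2 ^ i) (z ^ 2 ^ i) l
  obtain ⟨e, he⟩ : ∃ e, 2 ^ i = 2 + e := Nat.exists_eq_add_of_le (Nat.le_self_pow (by omega) 2)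
  refine ⟨w * z ^ e * (z + a), ?_⟩
  have ha' : (a ^ 2 ^ i) ^ l = 1 := by rw [← pow_mul, mul_comm, pow_mul, ha, one_pow]
  have hb : (a ^ 2 ^ i) ^ (l - 1) = b ^ 2 ^ i := by
    calc (a ^ 2 ^ i) ^ (l - 1) = (a ^ 2 ^ i) ^ (l - 1) * a ^ 2 ^ i * b ^ 2 ^ i := by
          rw [mul_assoc, ← mul_pow, hab, one_pow, mul_one]
      _ = b ^ 2 ^ i := by rw [pow_sub_one_mul hl.pos.ne', ha', one_mul]
  have hz : (z ^ 2 ^ i) ^ 2 = z ^ (2 ^ i + 2) * z ^ e := by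
    rw [← pow_add, ← pow_mul]
    congr 1
    omega
  rw [pow_succ, pow_mul, add_pow_char_pow, add_comm (z ^ 2 ^ i), hw, ha', hb, hz,
    natCast_eq_one_of_odd hl, mul_pow]
  ring

lemma X_sq_dvd_C_add_C_mul_X_add_iff {R : Type*} [CommRing R] {a b : R} {u : R[X]} :
    X ^ 2 ∣ C a + C b * X + X ^ 2 * u ↔ a = 0 ∧ b = 0 := by
  rw [dvd_add_left (dvd_mul_right _ _), X_pow_dvd_iff]
  refine ⟨fun h ↦ ⟨by simpa using h 0 two_pos, by simpa [coeff_C] using h 1 one_lt_two⟩, ?_⟩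
  rintro ⟨rfl, rfl⟩
  simp

lemma taylorAt_X_zero_add_X_one_add_one {R : Type*} [CommRing R] (P : Fin 2 → R) :
    taylorAt P (MvPolynomial.X 0 + MvPolynomial.X 1 + 1) =
      C (MvPolynomial.X 0 + MvPolynomial.X 1) * X + C (MvPolynomial.C (P 0 + P 1 + 1)) := by
  simp only [map_add, taylorAt_X, map_one]
  ring

variable [CharP k 2]

lemma exists_taylorAt_codewordPoly_eq {t : ℕ} (ht : Odd t) (P : Fin 2 → k) :
    ∃ r, taylorAt P (codewordPoly k t) =
      C (cc (P 0 ^ t + P 1 ^ t + 1 + (P 0 + P 1 + 1) ^ t)) +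
      C (linearForm (P 0 ^ (t - 1) + (P 0 + P 1 + 1) ^ (t - 1))
        (P 1 ^ (t - 1) + (P 0 + P 1 + 1) ^ (t - 1))) * X + X ^ 2 * r := by
  obtain ⟨r₁, h₁⟩ := powAddExpansion (C (cc (P 0))) (C xx * X) t
  obtain ⟨r₂, h₂⟩ := powAddExpansion (C (cc (P 1))) (C yy * X) t
  obtain ⟨r₃, h₃⟩ := powAddExpansion (C (cc (P 0 + P 1 + 1))) (C (xx + yy) * X) t
  refine ⟨r₁ * C (xx ^ 2) + r₂ * C (yy ^ 2) + r₃ * C ((xx + yy) ^ 2), ?_⟩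
  rw [codewordPoly, map_add, map_add, map_add, map_pow, map_pow, map_pow,
    taylorAt_X_zero_add_X_one_add_one, taylorAt_X, taylorAt_X, map_one, add_comm (C xx * X), h₁,
    add_comm (C yy * X), h₂, add_comm (C (xx + yy) * X), h₃, natCast_eq_one_of_odd ht, linearForm]
  simp only [map_add, map_mul, map_pow, map_one]
  ring

lemma isSingularPoint_of_X_sq_dvd {i l : ℕ} (hi : 1 ≤ i) {P : Fin 2 → k}
    (h : X ^ 2 ∣ taylorAt P (codewordPoly k (2 ^ i * l + 1))) : IsSingularPoint l P := by
  have hodd := odd_two_pow_mul_add_one hi l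
  obtain ⟨r, hr⟩ := exists_taylorAt_codewordPoly_eq hodd P
  rw [hr, X_sq_dvd_C_add_C_mul_X_add_iff, MvPolynomial.C_eq_zero, linearForm_eq_zero_iff,
    Nat.add_sub_cancel] at h
  obtain ⟨hvalue, hx, hy⟩ := h
  have hz : (P 0 + P 1 + 1) ^ (2 ^ i * l) = 1 := by
    rw [pow_succ, pow_succ, pow_succ] at hvalue
    linear_combination hvalue - P 0 * hx - P 1 * hy - CharTwo.two_eq_zero (R := k)
  have hroot {z : k} : z ^ (2 ^ i * l) = 1 → z ^ l = 1 :=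
    (ExpChar.pow_prime_pow_mul_eq_one_iff 2 i l z).1
  exact ⟨hroot (by rwa [← CharTwo.add_eq_zero.1 hx] at hz),
    hroot (by rwa [← CharTwo.add_eq_zero.1 hy] at hz), hroot hz⟩

lemma IsSingularPoint.exists_taylorAt_codewordPoly_eq {i l : ℕ} (hi : 1 ≤ i) (hl : Odd l)
    {P : Fin 2 → k} (hP : IsSingularPoint l P) :
    ∃ r, taylorAt P (codewordPoly k (2 ^ i * l + 1)) =
      X ^ 2 ^ i * (C (localForm (2 ^ i) P) + X * C (localFormSucc (2 ^ i) P) + X ^ 2 * r) := by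
  have expand {a : k} (ha : a ^ l = 1) (z : MvPolynomial (Fin 2) k) :=
    exists_add_pow_of_pow_eq_one (a := C (cc a)) (b := C (cc a⁻¹)) hi hl
      (by rw [← C_mul, ← map_mul, mul_inv_cancel₀ (IsUnit.ne_zero (.of_pow_eq_one ha hl.pos.ne')),
        map_one, map_one]) (by rw [← C_pow, ← map_pow, ha, map_one, map_one]) (C z * X)
  obtain ⟨r₁, h₁⟩ := expand hP.1 xx
  obtain ⟨r₂, h₂⟩ := expand hP.2.1 yy
  obtain ⟨r₃, h₃⟩ := expand hP.2.2 (xx + yy)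
  refine ⟨C (xx ^ (2 ^ i + 2)) * r₁ + C (yy ^ (2 ^ i + 2)) * r₂ +
    C ((xx + yy) ^ (2 ^ i + 2)) * r₃, ?_⟩
  rw [codewordPoly, map_add, map_add, map_add, map_pow, map_pow, map_pow,
    taylorAt_X_zero_add_X_one_add_one, taylorAt_X, taylorAt_X, map_one, h₁, h₂, h₃, localForm,
    localFormSucc]
  simp only [mul_pow, map_add, map_mul, map_pow, map_one]
  linear_combination (C (cc (P 0)) + C (cc (P 1)) + 1 + C xx * X + C yy * X) *
    CharTwo.two_eq_zero (R := (MvPolynomial (Fin 2) k)[X])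

lemma IsSingularPoint.not_mul_self_dvd_localFormSucc {i l : ℕ} (hi : 1 ≤ i) (hl : Odd l)
    {P : Fin 2 → k} (hP : IsSingularPoint l P) {p : MvPolynomial (Fin 2) k} (hp : Prime p) :
    ¬ p * p ∣ localFormSucc (2 ^ i) P := by
  intro h
  obtain ⟨hx, hy, hz⟩ := hP.ne_zero hl.pos.ne'
  have hcast : ((2 ^ i : ℕ) : MvPolynomial (Fin 2) k) = 0 := by
    rw [CharTwo.natCast_eq_ite, if_pos (even_two.pow_of_ne_zero (by omega))]
  have hderiv (j : Fin 2) := dvd_derivation_apply_of_mul_self_dvd (MvPolynomial.pderiv j) h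
  simp only [localFormSucc, map_add, Derivation.leibniz, Derivation.leibniz_pow, nsmul_eq_mul,
    smul_eq_mul, hcast, zero_mul, mul_zero, zero_add] at hderiv
  have hpx : p ∣ linearForm ((P 0)⁻¹ + (P 0 + P 1 + 1)⁻¹) (P 0 + P 1 + 1)⁻¹ := by
    refine hp.dvd_of_dvd_pow (n := 2 ^ i) ?_
    convert! hderiv 0 using 1
    simp only [linearForm, map_add, MvPolynomial.pderiv_X_self,
      MvPolynomial.pderiv_X_of_ne (show (1 : Fin 2) ≠ 0 by decide), mul_one, mul_zero, add_zero]
    rw [← add_pow_char_pow]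
    ring
  have hpy : p ∣ linearForm (P 0 + P 1 + 1)⁻¹ ((P 1)⁻¹ + (P 0 + P 1 + 1)⁻¹) := by
    refine hp.dvd_of_dvd_pow (n := 2 ^ i) ?_
    convert! hderiv 1 using 1
    simp only [linearForm, map_add, MvPolynomial.pderiv_X_self,
      MvPolynomial.pderiv_X_of_ne (show (0 : Fin 2) ≠ 1 by decide), mul_one, mul_zero, zero_add]
    rw [← add_pow_char_pow]
    ring
  refine hp.not_isUnit (isRelPrime_linearForm ?_ hpx hpy)
  have hdet : ((P 0)⁻¹ + (P 0 + P 1 + 1)⁻¹) * ((P 1)⁻¹ + (P 0 + P 1 + 1)⁻¹) -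
      (P 0 + P 1 + 1)⁻¹ * (P 0 + P 1 + 1)⁻¹ = (P 0 * P 1 * (P 0 + P 1 + 1))⁻¹ := by
    field_simp
    linear_combination (P 0 + P 1) * (P 0 + P 1 + 1) * CharTwo.two_eq_zero (R := k)
  rw [hdet]
  exact inv_ne_zero (mul_ne_zero (mul_ne_zero hx hy) hz)

lemma localForm_two_pow (i : ℕ) (P : Fin 2 → k) :
    localForm (2 ^ i) P =
      cc (P 0 * (P 0)⁻¹ ^ 2 ^ i + (P 0 + P 1 + 1) * (P 0 + P 1 + 1)⁻¹ ^ 2 ^ i) * xx ^ 2 ^ i +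
      cc (P 1 * (P 1)⁻¹ ^ 2 ^ i + (P 0 + P 1 + 1) * (P 0 + P 1 + 1)⁻¹ ^ 2 ^ i) * yy ^ 2 ^ i := by
  simp only [localForm, mul_pow, add_pow_char_pow, map_add, map_mul, map_pow]
  ring

lemma IsSingularPoint.pow_eq_self_of_localForm_eq_zero {i l : ℕ} (hl : l ≠ 0) {P : Fin 2 → k}
    (hP : IsSingularPoint l P) (h : localForm (2 ^ i) P = 0) :
    P 0 ^ 2 ^ i = P 0 ∧ P 1 ^ 2 ^ i = P 1 := by
  obtain ⟨hx, hy, hz⟩ := hP.ne_zero hl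
  rw [localForm_two_pow] at h
  set γ := (P 0 + P 1 + 1) * (P 0 + P 1 + 1)⁻¹ ^ 2 ^ i
  have hx' : P 0 * (P 0)⁻¹ ^ 2 ^ i = γ := by
    simpa [CharTwo.add_eq_zero] using congrArg (MvPolynomial.eval ![1, 0]) h
  have hy' : P 1 * (P 1)⁻¹ ^ 2 ^ i = γ := by
    simpa [CharTwo.add_eq_zero] using congrArg (MvPolynomial.eval ![0, 1]) h
  have hinv {z : k} (hz : z ≠ 0) : z * z⁻¹ ^ 2 ^ i * z ^ 2 ^ i = z := by
    rw [mul_assoc, ← mul_pow, inv_mul_cancel₀ hz, one_pow, mul_one]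
  have hγx : γ * P 0 ^ 2 ^ i = P 0 := by rw [← hx', hinv hx]
  have hγy : γ * P 1 ^ 2 ^ i = P 1 := by rw [← hy', hinv hy]
  have hγz : γ * (P 0 + P 1 + 1) ^ 2 ^ i = P 0 + P 1 + 1 := hinv hz
  have hγ : γ = 1 := by
    rw [add_pow_char_pow, add_pow_char_pow, one_pow] at hγz
    linear_combination hγz - hγx - hγy
  rw [hγ, one_mul] at hγx hγy
  exact ⟨hγx, hγy⟩

lemma exists_localForm_eq_linearForm_pow [IsAlgClosed k] {i : ℕ} {P : Fin 2 → k}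
    (h : localForm (2 ^ i) P ≠ 0) :
    ∃ a b, (a ≠ 0 ∨ b ≠ 0) ∧ localForm (2 ^ i) P = linearForm a b ^ 2 ^ i := by
  obtain ⟨a, ha⟩ := IsAlgClosed.exists_pow_nat_eq (P 0 * (P 0)⁻¹ ^ 2 ^ i +
    (P 0 + P 1 + 1) * (P 0 + P 1 + 1)⁻¹ ^ 2 ^ i) (Nat.two_pow_pos i)
  obtain ⟨b, hb⟩ := IsAlgClosed.exists_pow_nat_eq (P 1 * (P 1)⁻¹ ^ 2 ^ i +
    (P 0 + P 1 + 1) * (P 0 + P 1 + 1)⁻¹ ^ 2 ^ i) (Nat.two_pow_pos i)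
  have hab : localForm (2 ^ i) P = linearForm a b ^ 2 ^ i := by
    rw [localForm_two_pow, ← ha, ← hb, linearForm, add_pow_char_pow, mul_pow, mul_pow, map_pow,
      map_pow]
  refine ⟨a, b, ?_, hab⟩
  by_contra! h0
  rw [hab, linearForm_eq_zero_iff.2 h0] at h
  exact h (zero_pow (Nat.two_pow_pos i).ne')

end LocalForm

section TangentLine

open Polynomial

/-- The homogeneous part following the initial form in the Taylor expansion of `u` at `P`. It may
be zero. -/
noncomputable def initialFormSucc {σ R : Type*} [CommRing R] (P : σ → R) (u : MvPolynomial σ R) :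
    MvPolynomial σ R :=
  (taylorAt P u).coeff (multiplicityAt P u + 1)

lemma initialFormSucc_of_taylorAt_eq {σ R : Type*} [CommRing R] {P : σ → R} {u : MvPolynomial σ R}
    {m : ℕ} {w : (MvPolynomial σ R)[X]} (h : taylorAt P u = X ^ m * w) (hw : w.coeff 0 ≠ 0) :
    initialFormSucc P u = w.coeff 1 := by
  rw [initialFormSucc, (multiplicityAt_and_initialForm_of_taylorAt_eq h hw).1, h, add_comm,
    coeff_X_pow_mul]

lemma exists_taylorAt_eq_X_pow_multiplicityAt_mul {σ R : Type*} [CommRing R] (P : σ → R)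
    (u : MvPolynomial σ R) :
    ∃ w : (MvPolynomial σ R)[X], taylorAt P u = X ^ multiplicityAt P u * w ∧
      w.coeff 0 = initialForm P u ∧ w.coeff 1 = initialFormSucc P u := by
  obtain ⟨w, hw, hw0⟩ := exists_eq_X_pow_natTrailingDegree_mul (taylorAt P u)
  refine ⟨w, hw, hw0, ?_⟩
  rw [initialFormSucc, congrArg (coeff · _) hw, add_comm]
  exact (coeff_X_pow_mul _ _ _).symm

variable {σ k : Type*} [Field k] {P : σ → k} {u v : MvPolynomial σ k}

lemma initialFormSucc_mul (hu : u ≠ 0) (hv : v ≠ 0) :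
    initialFormSucc P (u * v) =
      initialForm P u * initialFormSucc P v + initialFormSucc P u * initialForm P v := by
  obtain ⟨a, ha, ha0, ha1⟩ := exists_taylorAt_eq_X_pow_multiplicityAt_mul P u
  obtain ⟨b, hb, hb0, hb1⟩ := exists_taylorAt_eq_X_pow_multiplicityAt_mul P v
  have hab : taylorAt P (u * v) = X ^ (multiplicityAt P u + multiplicityAt P v) * (a * b) := by
    rw [map_mul, ha, hb]
    ring
  rw [initialFormSucc_of_taylorAt_eq hab, mul_coeff_one, ha0, ha1, hb0, hb1]
  rw [mul_coeff_zero, ha0, hb0]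
  exact mul_ne_zero (initialForm_ne_zero hu) (initialForm_ne_zero hv)

lemma associated_initialForm_of_dvd_pow {L : MvPolynomial σ k} (hL : Prime L)
    (hdeg : L.totalDegree = 1) {q : ℕ} (hu : u ≠ 0) (h : initialForm P u ∣ L ^ q) :
    Associated (initialForm P u) (L ^ multiplicityAt P u) := by
  obtain ⟨j, -, hj⟩ := (dvd_prime_pow hL q).1 h
  obtain ⟨c, hc⟩ := hj
  have hdegree := congrArg (fun f ↦ (dilate f).natDegree) hc
  simp only [map_mul, map_pow] at hdegree
  rw [natDegree_mul (dilate_ne_zero (initialForm_ne_zero hu)) (dilate_ne_zero c.ne_zero),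
    natDegree_eq_zero_of_isUnit (c.isUnit.map dilate), natDegree_pow, natDegree_dilate,
    natDegree_dilate, hdeg, totalDegree_initialForm hu, add_zero, mul_one] at hdegree
  rw [hdegree]
  exact ⟨c, hc⟩

lemma pow_dvd_initialFormSucc_mul {L : MvPolynomial σ k} (hL : Prime L) (hdeg : L.totalDegree = 1)
    (hu : u ≠ 0) (hv : v ≠ 0) {q n : ℕ} (h : initialForm P (u * v) = L ^ q)
    (hnu : n ≤ multiplicityAt P u) (hnv : n ≤ multiplicityAt P v) :
    L ^ n ∣ initialFormSucc P (u * v) := by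
  rw [initialForm_mul] at h
  have hLu := associated_initialForm_of_dvd_pow hL hdeg hu (Dvd.intro _ h)
  have hLv := associated_initialForm_of_dvd_pow hL hdeg hv (Dvd.intro_left _ h)
  rw [initialFormSucc_mul hu hv]
  exact dvd_add (((pow_dvd_pow L hnu).trans hLu.symm.dvd).mul_right _)
    (((pow_dvd_pow L hnv).trans hLv.symm.dvd).mul_left _)

/-- The tangent cone of `u = 0` at `P` is a multiple hyperplane `L = 0`, and the next form is
divisible by `L` at most once. For curves this leaves little room for a factorization of `u`. -/
def HasSingleTangentAt (P : σ → k) (u : MvPolynomial σ k) : Prop :=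
  ∃ L, Prime L ∧ L.totalDegree = 1 ∧ initialForm P u = L ^ multiplicityAt P u ∧
    ¬ L * L ∣ initialFormSucc P u

namespace HasSingleTangentAt

lemma ne_zero (h : HasSingleTangentAt P u) : u ≠ 0 := by
  rintro rfl
  obtain ⟨L, -, -, -, h⟩ := h
  simp [initialFormSucc] at h

lemma multiplicityAt_eq_one_or (h : HasSingleTangentAt P (u * v)) (hu : MvPolynomial.eval P u = 0)
    (hv : MvPolynomial.eval P v = 0) : multiplicityAt P u = 1 ∨ multiplicityAt P v = 1 := by
  have hu0 : u ≠ 0 := left_ne_zero_of_mul h.ne_zero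
  have hv0 : v ≠ 0 := right_ne_zero_of_mul h.ne_zero
  obtain ⟨L, hL, hdeg, hini, hsucc⟩ := h
  have hmu := (multiplicityAt_pos_iff hu0).2 hu
  have hmv := (multiplicityAt_pos_iff hv0).2 hv
  by_contra! hne
  refine hsucc ?_
  rw [← pow_two]
  exact pow_dvd_initialFormSucc_mul hL hdeg hu0 hv0 hini (by omega) (by omega)

lemma multiplicityAt_eq_three {F a b c : MvPolynomial σ k} (h : HasSingleTangentAt P F)
    (hF : a * b * c ∣ F) (ha : MvPolynomial.eval P a = 0) (hb : MvPolynomial.eval P b = 0)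
    (hc : MvPolynomial.eval P c = 0) : multiplicityAt P F = 3 := by
  obtain ⟨w, rfl⟩ := hF
  have hne := h.ne_zero
  have hcw : c * w ≠ 0 := right_ne_zero_of_mul (mul_assoc (a * b) c w ▸ hne)
  have hab : a * b ≠ 0 := left_ne_zero_of_mul (mul_assoc (a * b) c w ▸ hne)
  have ha0 : a ≠ 0 := left_ne_zero_of_mul hab
  have hb0 : b ≠ 0 := right_ne_zero_of_mul hab
  have hab_or : multiplicityAt P (a * b) = 1 ∨ multiplicityAt P (c * w) = 1 :=
    multiplicityAt_eq_one_or (by rwa [← mul_assoc]) (by simp [ha]) (by simp [hc])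
  have ha_or : multiplicityAt P a = 1 ∨ multiplicityAt P (b * (c * w)) = 1 :=
    multiplicityAt_eq_one_or (by rwa [← mul_assoc, ← mul_assoc]) ha (by simp [hb])
  have hb_or : multiplicityAt P b = 1 ∨ multiplicityAt P (a * (c * w)) = 1 :=
    multiplicityAt_eq_one_or (by rwa [← mul_assoc, ← mul_assoc, mul_comm b a]) hb (by simp [ha])
  rw [multiplicityAt_mul hb0 hcw] at ha_or
  rw [multiplicityAt_mul ha0 hcw] at hb_or
  rw [multiplicityAt_mul ha0 hb0] at hab_or
  rw [mul_assoc, multiplicityAt_mul hab hcw, multiplicityAt_mul ha0 hb0]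
  have hma := (multiplicityAt_pos_iff ha0).2 ha
  have hmb := (multiplicityAt_pos_iff hb0).2 hb
  have hmc : 0 < multiplicityAt P (c * w) := (multiplicityAt_pos_iff hcw).2 (by simp [hc])
  omega

end HasSingleTangentAt

end TangentLine

section TangentIntersection

open Polynomial

variable {k : Type*} [Field k] {P : Fin 2 → k} {u v F : MvPolynomial (Fin 2) k}

lemma exists_taylorAt_eq_C_initialForm_pow_mul_X_pow (hu : multiplicityAt P u = 1) (c : k) (s : ℕ) :
    ∃ w, taylorAt P w = C (MvPolynomial.C c * initialForm P u ^ s) * X ^ s := by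
  refine ⟨(recenter P).symm (MvPolynomial.C c * initialForm P u ^ s), ?_⟩
  change dilate (recenter P _) = _
  rw [AlgEquiv.apply_symm_apply, map_mul, map_pow, dilate_initialForm, hu, dilate_C,
    ← C_mul_X_eq_monomial, mul_pow, ← C_pow, ← mul_assoc, ← C_mul]

variable [CharP k 2]

-- The multiple of `u` with the same initial form as `v` is subtracted from `v`. The product `u * v`
-- changes by a multiple of `u ^ 2`, whose second form vanishes in characteristic two.
lemma exists_taylorAt_sub_mul_eq (hu : multiplicityAt P u = 1) (hv : MvPolynomial.eval P v = 0)
    (hv0 : v ≠ 0) (hassoc : Associated (initialForm P v) (initialForm P u ^ multiplicityAt P v)) :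
    ∃ w V, taylorAt P (v - w * u) = X ^ (multiplicityAt P v + 1) * V ∧
      initialFormSucc P (u * v) = initialForm P u * V.coeff 0 := by
  have hu0 : u ≠ 0 := by
    rintro rfl
    simp [multiplicityAt] at hu
  obtain ⟨s, hs⟩ : ∃ s, multiplicityAt P v = s + 1 :=
    Nat.exists_eq_succ_of_ne_zero ((multiplicityAt_pos_iff hv0).2 hv).ne'
  obtain ⟨unit, hunit⟩ := hassoc.symm
  obtain ⟨c, -, hc⟩ := MvPolynomial.isUnit_iff_eq_C_of_isReduced.1 unit.isUnit
  rw [hc, hs] at hunit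
  obtain ⟨U, hU, hU0, hU1⟩ := exists_taylorAt_eq_X_pow_multiplicityAt_mul P u
  obtain ⟨V, hV, hV0, hV1⟩ := exists_taylorAt_eq_X_pow_multiplicityAt_mul P v
  obtain ⟨w, hw⟩ := exists_taylorAt_eq_C_initialForm_pow_mul_X_pow hu c s
  rw [hu, pow_one] at hU
  obtain ⟨V', hV'⟩ : X ∣ V - C (MvPolynomial.C c * initialForm P u ^ s) * U := by
    rw [X_dvd_iff, coeff_sub, coeff_C_mul, hU0, hV0, ← hunit]
    ring
  refine ⟨w, V', ?_, ?_⟩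
  · rw [map_sub, map_mul, hV, hw, hU, hs, pow_succ X (s + 1), mul_assoc _ X V', ← hV']
    ring
  · have hV1' : initialFormSucc P v =
        V'.coeff 0 + MvPolynomial.C c * initialForm P u ^ s * initialFormSucc P u := by
      rw [← hV1, sub_eq_iff_eq_add.1 hV', coeff_add, coeff_C_mul, coeff_X_mul, hU1]
    rw [initialFormSucc_mul hu0 hv0, hV1', ← hunit]
    linear_combination MvPolynomial.C c * initialForm P u ^ (s + 1) * initialFormSucc P u *
      CharTwo.two_eq_zero (R := MvPolynomial (Fin 2) k)

lemma intersectionMultiplicityLE_of_associated_initialForm (hmu : multiplicityAt P u = 1)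
    (hu : Irreducible (initialForm P u)) (hv : MvPolynomial.eval P v = 0)
    (hassoc : Associated (initialForm P v) (initialForm P u ^ multiplicityAt P v))
    (hsucc : ¬ initialForm P u * initialForm P u ∣ initialFormSucc P (u * v)) :
    IntersectionMultiplicityLE P u v (multiplicityAt P v + 1) := by
  have hu0 : u ≠ 0 := by
    rintro rfl
    simp [initialFormSucc] at hsucc
  have hv0 : v ≠ 0 := by
    rintro rfl
    simp [initialFormSucc] at hsucc
  obtain ⟨w, V, hV, hmul⟩ := exists_taylorAt_sub_mul_eq hmu hv hv0 hassoc
  rw [hmul] at hsucc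
  have hnd : ¬ initialForm P u ∣ V.coeff 0 := fun hd ↦ hsucc (mul_dvd_mul_left _ hd)
  have hV0 : V.coeff 0 ≠ 0 := fun h0 ↦ hnd (by simp [h0])
  obtain ⟨hm, hi⟩ := multiplicityAt_and_initialForm_of_taylorAt_eq hV hV0
  have hne : v - w * u ≠ 0 := by
    intro h0
    rw [← hi, h0] at hV0
    simp [initialForm] at hV0
  rw [← hi] at hnd
  have hbound := intersectionMultiplicityLE_of_isRelPrime_initialForm hu0 hne
    (hu.isRelPrime_iff_not_dvd.2 hnd)
  rw [hm, hmu, one_mul] at hbound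
  refine hbound.mono (Ideal.span_le.2 ?_) le_rfl
  rintro _ (rfl | rfl)
  · exact Ideal.subset_span (by simp)
  · exact Ideal.sub_mem _ (Ideal.subset_span (by simp))
      (Ideal.mul_mem_left _ _ (Ideal.subset_span (by simp)))

namespace HasSingleTangentAt

lemma intersectionMultiplicityLE_of_multiplicityAt_eq_one (h : HasSingleTangentAt P (u * v))
    (hu : multiplicityAt P u = 1) (hv : MvPolynomial.eval P v = 0) :
    IntersectionMultiplicityLE P u v (multiplicityAt P (u * v)) := by
  have hu0 : u ≠ 0 := left_ne_zero_of_mul h.ne_zero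
  have hv0 : v ≠ 0 := right_ne_zero_of_mul h.ne_zero
  obtain ⟨L, hL, hdeg, hini, hsucc⟩ := h
  rw [initialForm_mul] at hini
  have hLu := associated_initialForm_of_dvd_pow hL hdeg hu0 (Dvd.intro _ hini)
  have hLv := associated_initialForm_of_dvd_pow hL hdeg hv0 (Dvd.intro_left _ hini)
  rw [hu, pow_one] at hLu
  rw [multiplicityAt_mul hu0 hv0, hu, add_comm]
  exact intersectionMultiplicityLE_of_associated_initialForm hu
    (hLu.symm.irreducible hL.irreducible) hv (hLv.trans hLu.symm.pow_pow)
    fun hd ↦ hsucc ((mul_dvd_mul hLu.symm.dvd hLu.symm.dvd).trans hd)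

lemma intersectionMultiplicityLE (h : HasSingleTangentAt P F) (huv : u * v ∣ F)
    (hu : MvPolynomial.eval P u = 0) (hv : MvPolynomial.eval P v = 0) :
    IntersectionMultiplicityLE P u v (multiplicityAt P F) := by
  obtain ⟨w, rfl⟩ := huv
  have hne := h.ne_zero
  rw [mul_assoc] at h
  rcases h.multiplicityAt_eq_one_or hu (by simp [hv]) with hmu | hmvw
  · rw [mul_assoc]
    refine (h.intersectionMultiplicityLE_of_multiplicityAt_eq_one hmu (by simp [hv])).mono
      (Ideal.span_le.2 ?_) le_rfl
    rintro _ (rfl | rfl)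
    · exact Ideal.subset_span (by simp)
    · exact Ideal.mul_mem_right _ _ (Ideal.subset_span (by simp))
  · have hv0 : v ≠ 0 := right_ne_zero_of_mul (left_ne_zero_of_mul hne)
    have hmv : multiplicityAt P v = 1 := by
      have hpos := (multiplicityAt_pos_iff hv0).2 hv
      rw [multiplicityAt_mul hv0 (right_ne_zero_of_mul hne)] at hmvw
      omega
    rw [mul_left_comm] at h
    rw [mul_assoc, mul_left_comm]
    refine (h.intersectionMultiplicityLE_of_multiplicityAt_eq_one hmv (by simp [hu])).mono
      (Ideal.span_le.2 ?_) le_rfl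
    rintro _ (rfl | rfl)
    · exact Ideal.subset_span (by simp)
    · exact Ideal.mul_mem_right _ _ (Ideal.subset_span (by simp))

end HasSingleTangentAt

end TangentIntersection

section SingularPoint

open Polynomial

variable {k : Type*} [Field k] [CharP k 2] {i l : ℕ} {P : Fin 2 → k}

namespace IsSingularPoint

lemma localFormSucc_ne_zero (hi : 1 ≤ i) (hl : Odd l) (hP : IsSingularPoint l P) :
    localFormSucc (2 ^ i) P ≠ 0 := by
  intro h
  have hprime : Prime (linearForm (1 : k) 0) := prime_linearForm (Or.inl one_ne_zero)
  exact hP.not_mul_self_dvd_localFormSucc hi hl hprime (h ▸ dvd_zero _)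

lemma multiplicityAt_and_initialForm_of_localForm_eq_zero (hi : 1 ≤ i) (hl : Odd l)
    (hP : IsSingularPoint l P) (h : localForm (2 ^ i) P = 0) :
    multiplicityAt P (codewordPoly k (2 ^ i * l + 1)) = 2 ^ i + 1 ∧
      initialForm P (codewordPoly k (2 ^ i * l + 1)) = localFormSucc (2 ^ i) P := by
  obtain ⟨r, hr⟩ := hP.exists_taylorAt_codewordPoly_eq hi hl
  have hcoeff : (C (localFormSucc (2 ^ i) P) + X * r).coeff 0 = localFormSucc (2 ^ i) P := by simp
  rw [← hcoeff]
  refine multiplicityAt_and_initialForm_of_taylorAt_eq ?_ ?_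
  · rw [hr, h, map_zero]
    ring
  · rw [hcoeff]
    exact hP.localFormSucc_ne_zero hi hl

lemma intersectionMultiplicityLE_of_localForm_eq_zero (hi : 1 ≤ i) (hl : Odd l)
    (hP : IsSingularPoint l P) (h : localForm (2 ^ i) P = 0) {u v : MvPolynomial (Fin 2) k}
    (huv : u * v ∣ codewordPoly k (2 ^ i * l + 1)) (hu : u ≠ 0) (hv : v ≠ 0) :
    IntersectionMultiplicityLE P u v (multiplicityAt P u * multiplicityAt P v) := by
  refine intersectionMultiplicityLE_of_isRelPrime_initialForm hu hv
    ((UniqueFactorizationMonoid.isRelPrime_iff_no_prime_factors (initialForm_ne_zero hu)).2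
      fun p hpu hpv hp ↦ hP.not_mul_self_dvd_localFormSucc hi hl hp ?_)
  obtain ⟨w, hw⟩ := huv
  rw [← (hP.multiplicityAt_and_initialForm_of_localForm_eq_zero hi hl h).2, hw, initialForm_mul,
    initialForm_mul]
  exact (mul_dvd_mul hpu hpv).mul_right _

lemma expansion_of_localForm_ne_zero (hi : 1 ≤ i) (hl : Odd l) (hP : IsSingularPoint l P)
    (h : localForm (2 ^ i) P ≠ 0) :
    multiplicityAt P (codewordPoly k (2 ^ i * l + 1)) = 2 ^ i ∧
      initialForm P (codewordPoly k (2 ^ i * l + 1)) = localForm (2 ^ i) P ∧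
      initialFormSucc P (codewordPoly k (2 ^ i * l + 1)) = localFormSucc (2 ^ i) P := by
  obtain ⟨r, hr⟩ := hP.exists_taylorAt_codewordPoly_eq hi hl
  set w := C (localForm (2 ^ i) P) + X * C (localFormSucc (2 ^ i) P) + X ^ 2 * r
  have hw0 : w.coeff 0 = localForm (2 ^ i) P := by simp [w]
  have hw1 : w.coeff 1 = localFormSucc (2 ^ i) P := by simp [w, coeff_X_pow_mul', coeff_C]
  rw [← hw0, ← and_assoc, ← hw1]
  rw [← hw0] at h
  exact ⟨multiplicityAt_and_initialForm_of_taylorAt_eq hr h, initialFormSucc_of_taylorAt_eq hr h⟩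

lemma hasSingleTangentAt [IsAlgClosed k] (hi : 1 ≤ i) (hl : Odd l) (hP : IsSingularPoint l P)
    (h : localForm (2 ^ i) P ≠ 0) : HasSingleTangentAt P (codewordPoly k (2 ^ i * l + 1)) := by
  obtain ⟨hmult, hini, hsucc⟩ := hP.expansion_of_localForm_ne_zero hi hl h
  obtain ⟨a, b, hne, hab⟩ := exists_localForm_eq_linearForm_pow h
  have hdeg := totalDegree_linearForm_add_C hne 0
  rw [map_zero, add_zero] at hdeg
  refine ⟨linearForm a b, prime_linearForm hne, hdeg, by rw [hini, hab, hmult], ?_⟩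
  rw [hsucc]
  exact hP.not_mul_self_dvd_localFormSucc hi hl (prime_linearForm hne)

end IsSingularPoint

lemma sq_mul_eq_of_localForm_two_eq {a b : k} (hx : P 0 ≠ 0) (hy : P 1 ≠ 0)
    (hz : P 0 + P 1 + 1 ≠ 0) (h : localForm 2 P = linearForm a b ^ 2) :
    a ^ 2 * (P 0 * (P 0 + P 1 + 1)) = 1 + P 1 ∧ b ^ 2 * (P 1 * (P 0 + P 1 + 1)) = 1 + P 0 := by
  have ha : (P 0)⁻¹ + (P 0 + P 1 + 1)⁻¹ = a ^ 2 := by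
    have heval := congrArg (MvPolynomial.eval ![1, 0]) h
    simp only [localForm, linearForm, map_add, map_mul, map_pow, MvPolynomial.eval_C,
      MvPolynomial.eval_X, Matrix.cons_val_zero, Matrix.cons_val_one, Matrix.cons_val_fin_one]
      at heval
    linear_combination (norm := (field_simp; ring)) heval
  have hb : (P 1)⁻¹ + (P 0 + P 1 + 1)⁻¹ = b ^ 2 := by
    have heval := congrArg (MvPolynomial.eval ![0, 1]) h
    simp only [localForm, linearForm, map_add, map_mul, map_pow, MvPolynomial.eval_C,
      MvPolynomial.eval_X, Matrix.cons_val_zero, Matrix.cons_val_one, Matrix.cons_val_fin_one]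
      at heval
    linear_combination (norm := (field_simp; ring)) heval
  rw [← ha, ← hb]
  constructor <;> field_simp
  · linear_combination P 0 * CharTwo.two_eq_zero (R := k)
  · linear_combination P 1 * CharTwo.two_eq_zero (R := k)

lemma eq_one_or_eq_one_or_eq_of_linearForm_dvd_localFormSucc {a b : k} (hx : P 0 ≠ 0)
    (hy : P 1 ≠ 0) (hz : P 0 + P 1 + 1 ≠ 0) (hform : localForm 2 P = linearForm a b ^ 2)
    (hdvd : linearForm a b ∣ localFormSucc 2 P) : P 0 = 1 ∨ P 1 = 1 ∨ P 0 = P 1 := by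
  have h2 : (2 : k) = 0 := CharTwo.two_eq_zero
  obtain ⟨ha, hb⟩ := sq_mul_eq_of_localForm_two_eq hx hy hz hform
  obtain ⟨w, hw⟩ := hdvd
  have heval := congrArg (MvPolynomial.eval ![b, a]) hw
  simp only [localFormSucc, linearForm, map_add, map_mul, map_pow, MvPolynomial.eval_C,
    MvPolynomial.eval_X, Matrix.cons_val_zero, Matrix.cons_val_one, Matrix.cons_val_fin_one]
    at heval
  generalize P 0 = α at *
  generalize P 1 = β at *
  have hab : (a + b) ^ 2 * (α * β) = α + β := by
    refine mul_right_cancel₀ hz ?_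
    linear_combination β * ha + α * hb + a * b * α * β * (α + β + 1) * h2 - α * β * h2
  have hsum : b ^ 3 * (β * (α + β + 1)) ^ 2 + a ^ 3 * (α * (α + β + 1)) ^ 2 +
      (a + b) ^ 3 * (α * β) ^ 2 = 0 := by
    have h : b ^ 3 * α⁻¹ ^ 2 + a ^ 3 * β⁻¹ ^ 2 + (a + b) ^ 3 * (α + β + 1)⁻¹ ^ 2 = 0 := by
      linear_combination heval + a * b * MvPolynomial.eval ![b, a] w * h2
    field_simp at h
    linear_combination h
  have hsq : (1 + α) ^ 3 * (β * (α + β + 1)) + (1 + β) ^ 3 * (α * (α + β + 1)) +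
      (α + β) ^ 3 * (α * β) = 0 := by
    calc _ = (b ^ 2 * (β * (α + β + 1))) ^ 3 * (β * (α + β + 1)) +
          (a ^ 2 * (α * (α + β + 1))) ^ 3 * (α * (α + β + 1)) +
          ((a + b) ^ 2 * (α * β)) ^ 3 * (α * β) := by rw [ha, hb, hab]
      _ = (b ^ 3 * (β * (α + β + 1)) ^ 2) ^ 2 + (a ^ 3 * (α * (α + β + 1)) ^ 2) ^ 2 +
          ((a + b) ^ 3 * (α * β) ^ 2) ^ 2 := by ring
      _ = 0 := by rw [← CharTwo.add_sq, ← CharTwo.add_sq, hsum, zero_pow two_ne_zero]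
  have hprod : (α + 1) * (β + 1) * (α + β) = 0 := by
    linear_combination hsq - h2 * (α * β) *
      (3 + 4 * (α + β) + 2 * (α ^ 2 + β ^ 2) + 3 * α * β + 2 * α * β * (α + β) + α ^ 3 + β ^ 3)
  rcases mul_eq_zero.1 hprod with h | h
  · rcases mul_eq_zero.1 h with h | h
    · exact Or.inl (CharTwo.add_eq_zero.1 h)
    · exact Or.inr (Or.inl (CharTwo.add_eq_zero.1 h))
  · exact Or.inr (Or.inr (CharTwo.add_eq_zero.1 h))

lemma IsSingularPoint.eval_ne_zero_or_of_eq_mul [IsAlgClosed k] (hl : Odd l)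
    (hP : IsSingularPoint l P) (hx : P 0 ≠ 1) (hy : P 1 ≠ 1) (hxy : P 0 ≠ P 1)
    {u v : MvPolynomial (Fin 2) k} (huv : codewordPoly k (2 * l + 1) = u * v) :
    MvPolynomial.eval P u ≠ 0 ∨ MvPolynomial.eval P v ≠ 0 := by
  by_contra! h
  obtain ⟨hx0, hy0, hz0⟩ := hP.ne_zero hl.pos.ne'
  have hform : localForm (2 ^ 1) P ≠ 0 := by
    intro h0
    have hxsq := (hP.pow_eq_self_of_localForm_eq_zero hl.pos.ne' h0).1
    rw [pow_one, pow_two] at hxsq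
    exact hx (mul_left_cancel₀ hx0 (by rw [hxsq, mul_one]))
  obtain ⟨-, hini, hsucc⟩ := hP.expansion_of_localForm_ne_zero le_rfl hl hform
  obtain ⟨a, b, hne, hab⟩ := exists_localForm_eq_linearForm_pow hform
  have hdeg := totalDegree_linearForm_add_C hne 0
  rw [pow_one] at hini hsucc hab
  rw [map_zero, add_zero] at hdeg
  rw [huv] at hini hsucc
  have huv0 : u * v ≠ 0 :=
    huv ▸ codewordPoly_ne_zero (by have := hl.pos; omega) (even_two_mul l).add_one
  have hu0 := left_ne_zero_of_mul huv0
  have hv0 := right_ne_zero_of_mul huv0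
  have hdvd : linearForm a b ^ 1 ∣ _ :=
    pow_dvd_initialFormSucc_mul (prime_linearForm hne) hdeg hu0 hv0 (hini.trans hab)
      ((multiplicityAt_pos_iff hu0).2 h.1) ((multiplicityAt_pos_iff hv0).2 h.2)
  rw [hsucc, pow_one] at hdvd
  rcases eq_one_or_eq_one_or_eq_of_linearForm_dvd_localFormSucc hx0 hy0 hz0 hab hdvd with h | h | h
  exacts [hx h, hy h, hxy h]

end SingularPoint

section PairSum

open Finset

variable {ι : Type*} [Fintype ι] {σ : Equiv.Perm ι}

/-- The sum of `c i j` over all pairs `i ≠ j`, plus the sum of `c i (σ i)`: the square of a sum with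
its diagonal terms moved along the permutation `σ`. -/
def pairSum (σ : Equiv.Perm ι) (c : ι → ι → ℕ) : ℕ :=
  ∑ x ∈ univ.offDiag, c x.1 x.2 + ∑ i, c i (σ i)

lemma sq_sum_eq_sum_offDiag_add (d : ι → ℕ) :
    (∑ i, d i) ^ 2 = ∑ x ∈ univ.offDiag, d x.1 * d x.2 + ∑ i, d i * d i := by
  classical
  rw [sq, sum_mul_sum, ← sum_product', ← diag_union_offDiag, sum_union (disjoint_diag_offDiag _),
    sum_diag, add_comm]

lemma pairSum_mul_of_comp_eq {d : ι → ℕ} (hd : ∀ i, d (σ i) = d i) :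
    pairSum σ (fun i j ↦ d i * d j) = (∑ i, d i) ^ 2 := by
  simp only [pairSum, hd, sq_sum_eq_sum_offDiag_add]

lemma pairSum_mul_le (σ : Equiv.Perm ι) (m : ι → ℕ) :
    pairSum σ (fun i j ↦ m i * m j) ≤ (∑ i, m i) ^ 2 := by
  rw [sq_sum_eq_sum_offDiag_add]
  exact Nat.add_le_add_left (monovary_self m).sum_mul_comp_perm_le_sum_mul _

lemma pairSum_mono (hσ : ∀ i, σ i ≠ i) {c c' : ι → ι → ℕ} (h : ∀ i j, i ≠ j → c i j ≤ c' i j) :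
    pairSum σ c ≤ pairSum σ c' :=
  add_le_add (sum_le_sum fun x hx ↦ h x.1 x.2 (mem_offDiag.1 hx).2.2)
    (sum_le_sum fun i _ ↦ h i (σ i) (hσ i).symm)

lemma sum_pairSum {π : Type*} (Z : Finset π) (c : π → ι → ι → ℕ) :
    pairSum σ (fun i j ↦ ∑ P ∈ Z, c P i j) = ∑ P ∈ Z, pairSum σ (c P) := by
  simp only [pairSum, sum_add_distrib, sum_comm (s := Z)]

lemma pairSum_le_two_mul_sum_offDiag (hσ : ∀ i, σ i ≠ i) (c : ι → ι → ℕ) :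
    pairSum σ c ≤ 2 * ∑ x ∈ univ.offDiag, c x.1 x.2 := by
  classical
  rw [pairSum, two_mul]
  gcongr
  have hinj : Set.InjOn (fun i ↦ (i, σ i)) (univ : Finset ι) := fun i _ j _ h ↦ congrArg Prod.fst h
  rw [← sum_image (f := fun x : ι × ι ↦ c x.1 x.2) hinj]
  refine sum_le_sum_of_subset fun x hx ↦ ?_
  obtain ⟨i, -, rfl⟩ := mem_image.1 hx
  simpa using (hσ i).symm

lemma pairSum_ite_mem_le [DecidableEq ι] (hσ : ∀ i, σ i ≠ i) (V : Finset ι) (q : ℕ) :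
    pairSum σ (fun i j ↦ if i ∈ V ∧ j ∈ V then q else 0) ≤ 2 * (#V * (#V - 1) * q) := by
  refine (pairSum_le_two_mul_sum_offDiag hσ _).trans (Nat.mul_le_mul_left 2 ?_)
  have hfilter : {x ∈ (univ : Finset ι).offDiag | x.1 ∈ V ∧ x.2 ∈ V} = V.offDiag := by
    ext x; simp only [mem_filter, mem_offDiag, mem_univ, true_and]; tauto
  rw [← sum_filter, hfilter, sum_const, offDiag_card, smul_eq_mul, Nat.mul_sub_one]

lemma sq_sum_le_sum_pairSum {π : Type*} (hσ : ∀ i, σ i ≠ i) {d : ι → ℕ}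
    (hd : ∀ i, d (σ i) = d i) (Z : Finset π) (c : π → ι → ι → ℕ)
    (h : ∀ i j, i ≠ j → d i * d j ≤ ∑ P ∈ Z, c P i j) :
    (∑ i, d i) ^ 2 ≤ ∑ P ∈ Z, pairSum σ (c P) := by
  rw [← pairSum_mul_of_comp_eq hd, ← sum_pairSum]
  exact pairSum_mono hσ h

end PairSum

section PointCount

open Finset

lemma even_card_filter_add_add_one_mem {R : Type*} [CommRing R] [CharP R 2] [DecidableEq R]
    {α : R} (hα : α ≠ 1) (M : Finset R) : Even #{β ∈ M | α + β + 1 ∈ M} := by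
  have h2 : (2 : R) = 0 := CharTwo.two_eq_zero
  rw [even_iff_two_dvd, ← ZMod.natCast_eq_zero_iff, card_eq_sum_ones, Nat.cast_sum]
  refine sum_involution (fun β _ ↦ α + β + 1) (fun _ _ ↦ by decide) (fun β _ _ h ↦ hα ?_)
    (fun β hβ ↦ ?_) (fun β _ ↦ by linear_combination (α + 1) * h2)
  · linear_combination h - h2
  · rw [mem_filter] at hβ ⊢
    rw [show α + (α + β + 1) + 1 = β by linear_combination (α + 1) * h2]
    exact hβ.symm

variable {R : Type*} [CommRing R] [CharP R 2] {M : Finset R} {N : ℕ}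

lemma card_filter_add_add_one_mem_sdiff_le [DecidableEq R] {α : R} (h1M : 1 ∈ M)
    (hαM : α ∈ M) (hα : α ≠ 1) (hN : Odd N) (hM : #M ≤ N) :
    #({β ∈ M | α + β + 1 ∈ M} \ {1, α}) ≤ N - 3 := by
  have heven := even_card_filter_add_add_one_mem hα M
  have hle : #{β ∈ M | α + β + 1 ∈ M} ≤ N := (card_le_card (filter_subset _ _)).trans hM
  have hlt : #{β ∈ M | α + β + 1 ∈ M} ≠ N :=
    fun h ↦ Nat.not_even_iff_odd.2 hN (by rwa [h] at heven)
  have hsub : {1, α} ⊆ {β ∈ M | α + β + 1 ∈ M} := by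
    intro β hβ
    rcases mem_insert.1 hβ with rfl | hβ
    · simpa [h1M, add_assoc, CharTwo.add_self_eq_zero] using hαM
    · simpa [mem_singleton.1 hβ, hαM, CharTwo.add_self_eq_zero] using h1M
  rw [card_sdiff_of_subset hsub, card_pair hα.symm]
  omega

lemma card_le_of_forall_off_lines (h1M : 1 ∈ M) (hN : Odd N) (hM : #M ≤ N)
    {A : Finset (Fin 2 → R)} (hA : ∀ P ∈ A, P 0 ∈ M ∧ P 1 ∈ M ∧ P 0 + P 1 + 1 ∈ M)
    (hoff : ∀ P ∈ A, P 0 ≠ 1 ∧ P 1 ≠ 1 ∧ P 0 ≠ P 1) : #A ≤ (N - 3) * (N - 1) := by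
  classical
  have hcard : #(M.erase 1) ≤ N - 1 := by rw [card_erase_of_mem h1M]; omega
  refine (card_le_mul_card_image_of_maps_to (f := fun P ↦ P 0) (t := M.erase 1)
    (fun P hP ↦ mem_erase.2 ⟨(hoff P hP).1, (hA P hP).1⟩) (N - 3) fun α hα ↦ ?_).trans
    (Nat.mul_le_mul_left _ hcard)
  obtain ⟨hα, hαM⟩ := mem_erase.1 hα
  refine le_trans (card_le_card_of_injOn (fun P ↦ P 1) (fun P hP ↦ ?_) fun P hP Q hQ h ↦ ?_)
    (card_filter_add_add_one_mem_sdiff_le h1M hαM hα hN hM)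
  · obtain ⟨hPA, rfl⟩ := mem_filter.1 hP
    obtain ⟨-, hP1, hP2⟩ := hoff P hPA
    simp only [coe_sdiff, Set.mem_sdiff, mem_coe, mem_filter, mem_insert, mem_singleton, not_or]
    exact ⟨(hA P hPA).2, hP1, hP2.symm⟩
  · have h0 : P 0 = Q 0 := (mem_filter.1 hP).2.trans (mem_filter.1 hQ).2.symm
    exact funext (Fin.forall_fin_two.2 ⟨h0, h⟩)

end PointCount

section LinePointCount

open Finset

lemma card_le_of_forall_on_lines {R : Type*} [One R] {M : Finset R} {N : ℕ}
    (h1M : 1 ∈ M) (hM : #M ≤ N) {A : Finset (Fin 2 → R)} (hA : ∀ P ∈ A, P 0 ∈ M ∧ P 1 ∈ M)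
    (hon : ∀ P ∈ A, P 0 = 1 ∨ P 1 = 1 ∨ P 0 = P 1) (hne : ∀ P ∈ A, P ≠ 1) :
    #A ≤ 3 * (N - 1) := by
  classical
  have hcard : #(M.erase 1) ≤ N - 1 := by rw [card_erase_of_mem h1M]; omega
  have hsub : A ⊆ (M.erase 1).image (fun z ↦ ![1, z]) ∪ (M.erase 1).image (fun z ↦ ![z, 1]) ∪
      (M.erase 1).image (fun z ↦ ![z, z]) := by
    intro P hP
    have hne' : ¬ (P 0 = 1 ∧ P 1 = 1) := fun h ↦ hne P hP (funext (Fin.forall_fin_two.2 h))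
    have hP' : ![P 0, P 1] = P := funext (Fin.forall_fin_two.2 ⟨rfl, rfl⟩)
    simp only [mem_union, mem_image, mem_erase]
    rcases hon P hP with h | h | h
    · exact .inl (.inl ⟨P 1, ⟨fun h1 ↦ hne' ⟨h, h1⟩, (hA P hP).2⟩, by rwa [← h]⟩)
    · exact .inl (.inr ⟨P 0, ⟨fun h0 ↦ hne' ⟨h0, h⟩, (hA P hP).1⟩, by rwa [← h]⟩)
    · exact .inr ⟨P 0, ⟨fun h0 ↦ hne' ⟨h0, h ▸ h0⟩, (hA P hP).1⟩, by rwa [← h] at hP'⟩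
  calc #A ≤ _ := card_le_card hsub
    _ ≤ #(M.erase 1) + #(M.erase 1) + #(M.erase 1) :=
      (card_union_le _ _).trans (Nat.add_le_add ((card_union_le _ _).trans
        (Nat.add_le_add card_image_le card_image_le)) card_image_le)
    _ ≤ 3 * (N - 1) := by omega

end LinePointCount

section Arithmetic

lemma three_mul_le_of_dvd_of_lt {d n : ℕ} (hn : Odd n) (h : d ∣ n) (hlt : d < n) : 3 * d ≤ n := by
  obtain ⟨s, rfl⟩ := h
  obtain ⟨r, rfl⟩ := (Nat.odd_mul.1 hn).2
  have hr : r ≠ 0 := by rintro rfl; simp at hlt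
  rw [mul_comm]
  exact Nat.mul_le_mul_left d (by omega)

/-- With `q = 2 ^ i` this is the only place where the Kasami–Welch exponents `l = q - 1` have to be
excluded: the odd number `gcd l (q - 1)` divides both `l` and `q - 1`, so it is at most a third of
one of them. -/
lemma three_mul_gcd_le_or {q l : ℕ} (hq : 2 ≤ q) (hqe : Even q) (hlo : Odd l) (hkw : l ≠ q - 1) :
    3 * l.gcd (q - 1) ≤ l ∨ l.gcd (q - 1) = l ∧ 3 * l ≤ q - 1 := by
  rcases (Nat.gcd_le_left (q - 1) hlo.pos).lt_or_eq with h | h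
  · exact .inl (three_mul_le_of_dvd_of_lt hlo (Nat.gcd_dvd_left _ _) h)
  · have hdvd : l ∣ q - 1 := Nat.gcd_eq_left_iff_dvd.1 h
    have hodd : Odd (q - 1) := Nat.Even.sub_odd (by omega) hqe odd_one
    exact .inr ⟨h, three_mul_le_of_dvd_of_lt hodd hdvd
      ((Nat.le_of_dvd (by omega) hdvd).lt_of_ne hkw)⟩

lemma pairCount_bound_lt {q l : ℕ} (hq : 2 ≤ q) (hqe : Even q) (hl : 3 ≤ l) (hlo : Odd l)
    (hkw : l ≠ q - 1) :
    q ^ 2 * ((l - 3) * (l - 1)) +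
        (2 * q + 1) * ((l.gcd (q - 1) - 3) * (l.gcd (q - 1) - 1)) +
        q ^ 2 * (3 * (l.gcd (q - 1) - 1)) + (q - 2) ^ 2 < (q * l - 2) ^ 2 := by
  have hthird := three_mul_gcd_le_or hq hqe hlo hkw
  have hδq : l.gcd (q - 1) ≤ q - 1 := Nat.gcd_le_right _ (by omega)
  have hδo : Odd (l.gcd (q - 1)) := Odd.of_dvd_nat hlo (Nat.gcd_dvd_left _ _)
  generalize l.gcd (q - 1) = δ at *
  have hql : 2 ≤ q * l := by nlinarith
  -- The difference of the two sides that do not involve `δ` is `4 q (q - 1) (l - 1)`.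
  suffices h : ((2 * q + 1) * ((δ - 3 : ℕ) * (δ - 1 : ℕ)) + q ^ 2 * (3 * (δ - 1 : ℕ)) : ℤ) <
      4 * q * (q - 1) * (l - 1) by
    zify [hq, hql, hl, (by omega : 1 ≤ l)]
    linear_combination h
  have : (2 : ℤ) ≤ q := mod_cast hq
  rcases Nat.lt_or_ge δ 3 with hδ | hδ
  · obtain rfl : δ = 1 := by obtain ⟨r, rfl⟩ := hδo; omega
    have : (3 : ℤ) ≤ l := mod_cast hl
    simp only [Nat.sub_self, Nat.cast_zero, mul_zero, add_zero]
    have : (0 : ℤ) < q - 1 := by linarith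
    have : (0 : ℤ) < l - 1 := by linarith
    positivity
  · zify [hδ, (by omega : 1 ≤ δ), (by omega : 1 ≤ q)] at hthird hδq ⊢
    have : (0 : ℤ) < δ - 1 := by linarith [(mod_cast hδ : (3 : ℤ) ≤ δ)]
    rcases hthird with h | ⟨h, h3⟩
    · have h1 : ((2 * q + 1) * (δ - 3) + 3 * q ^ 2 : ℤ) < 12 * q * (q - 1) := by nlinarith
      have h2 : (0 : ℤ) ≤ 4 * q * (q - 1) * (l - 1 - 3 * (δ - 1)) :=
        mul_nonneg (mul_nonneg (by linarith) (by linarith)) (by linarith)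
      nlinarith
    · have h1 : ((2 * q + 1) * (δ - 3) + 3 * q ^ 2 : ℤ) < 4 * q * (q - 1) := by nlinarith
      rw [← h]
      nlinarith

end Arithmetic

section Factorization

lemma exists_finset_irreducible_associated_prod {R : Type*} [CommMonoidWithZero R]
    [UniqueFactorizationMonoid R] {G : R} (hG : G ≠ 0) (hsq : Squarefree G) :
    ∃ S : Finset R, (∀ a ∈ S, Irreducible a) ∧ Associated (∏ a ∈ S, a) G := by
  classical
  let _ := UniqueFactorizationMonoid.strongNormalizationMonoid (α := R)
  refine ⟨(UniqueFactorizationMonoid.normalizedFactors G).toFinset, fun a ha ↦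
    UniqueFactorizationMonoid.irreducible_of_normalized_factor a (Multiset.mem_toFinset.1 ha), ?_⟩
  have hnodup := (UniqueFactorizationMonoid.squarefree_iff_nodup_normalizedFactors hG).1 hsq
  rw [Finset.prod_eq_multiset_prod, Multiset.toFinset_val, hnodup.dedup, Multiset.map_id']
  exact UniqueFactorizationMonoid.prod_normalizedFactors hG

lemma mul_dvd_prod_of_ne {ι M : Type*} [Fintype ι] [CommMonoid M] (a : ι → M) {i j : ι}
    (hij : i ≠ j) : a i * a j ∣ ∏ m, a m := by
  classical
  rw [← Finset.prod_pair hij]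
  exact Finset.prod_dvd_prod_of_subset _ _ _ (Finset.subset_univ _)

lemma totalDegree_eq_of_associated {σ R : Type*} [CommRing R] [IsDomain R]
    {u v : MvPolynomial σ R} (h : Associated u v) : u.totalDegree = v.totalDegree := by
  obtain ⟨c, rfl⟩ := h
  rcases eq_or_ne u 0 with rfl | hu
  · rw [zero_mul]
  · rw [MvPolynomial.totalDegree_mul_of_isDomain hu c.ne_zero,
      (MvPolynomial.isUnit_iff_totalDegree_of_isReduced.1 c.isUnit).2, add_zero]

lemma totalDegree_prod_of_ne_zero {ι σ R : Type*} [CommRing R] [IsDomain R] (S : Finset ι)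
    {a : ι → MvPolynomial σ R} (ha : ∀ j ∈ S, a j ≠ 0) :
    (∏ j ∈ S, a j).totalDegree = ∑ j ∈ S, (a j).totalDegree := by
  simp only [← natDegree_dilate, map_prod]
  exact Polynomial.natDegree_prod _ _ fun j hj ↦ dilate_ne_zero (ha j hj)

variable {σ k : Type*} [Field k] {P : σ → k}

lemma multiplicityAt_eq_zero_of_isUnit {u : MvPolynomial σ k} (hu : IsUnit u) :
    multiplicityAt P u = 0 :=
  multiplicityAt_eq_zero (hu.map (MvPolynomial.eval P)).ne_zero

lemma multiplicityAt_eq_of_associated {u v : MvPolynomial σ k} (hu : u ≠ 0)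
    (h : Associated u v) : multiplicityAt P u = multiplicityAt P v := by
  obtain ⟨c, rfl⟩ := h
  rw [multiplicityAt_mul hu c.ne_zero, multiplicityAt_eq_zero_of_isUnit c.isUnit, add_zero]

lemma multiplicityAt_prod {ι : Type*} (S : Finset ι) {a : ι → MvPolynomial σ k}
    (ha : ∀ j ∈ S, a j ≠ 0) :
    multiplicityAt P (∏ j ∈ S, a j) = ∑ j ∈ S, multiplicityAt P (a j) := by
  classical
  induction S using Finset.induction with
  | empty => simpa using multiplicityAt_eq_zero_of_isUnit isUnit_one
  | insert j S hj ih =>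
    have ha' : ∀ m ∈ S, a m ≠ 0 := fun m hm ↦ ha m (Finset.mem_insert_of_mem hm)
    rw [Finset.prod_insert hj, Finset.sum_insert hj, multiplicityAt_mul
      (ha j (Finset.mem_insert_self _ _)) (Finset.prod_ne_zero_iff.2 ha'), ih ha']

end Factorization

section LineFactors

local notation "xx" => MvPolynomial.X 0
local notation "yy" => MvPolynomial.X 1

/-- The product of the lines `x = 1`, `y = 1` and `x = y`, whose points describe the quadruples in
which two elements coincide. -/
noncomputable def lineProduct (R : Type*) [CommRing R] : MvPolynomial (Fin 2) R :=
  (xx + 1) * (yy + 1) * (xx + yy)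

variable {k : Type*} [Field k]

lemma prime_X_zero_add_one : Prime (xx + 1 : MvPolynomial (Fin 2) k) := by
  simpa [linearForm] using prime_linearForm_add_C (a := (1 : k)) (b := 0) (by simp) 1

lemma prime_X_one_add_one : Prime (yy + 1 : MvPolynomial (Fin 2) k) := by
  simpa [linearForm] using prime_linearForm_add_C (a := (0 : k)) (b := 1) (by simp) 1

lemma prime_X_zero_add_X_one : Prime (xx + yy : MvPolynomial (Fin 2) k) := by
  simpa [linearForm] using prime_linearForm (a := (1 : k)) (b := 1) (by simp)

lemma lineProduct_ne_zero : lineProduct k ≠ 0 :=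
  mul_ne_zero (mul_ne_zero prime_X_zero_add_one.ne_zero prime_X_one_add_one.ne_zero)
    prime_X_zero_add_X_one.ne_zero

lemma totalDegree_lineProduct : (lineProduct k).totalDegree = 3 := by
  have h1 := totalDegree_linearForm_add_C (a := (1 : k)) (b := 0) (by simp) 1
  have h2 := totalDegree_linearForm_add_C (a := (0 : k)) (b := 1) (by simp) 1
  have h3 := totalDegree_linearForm_add_C (a := (1 : k)) (b := 1) (by simp) 0
  simp only [linearForm, map_one, map_zero, one_mul, zero_mul, add_zero, zero_add] at h1 h2 h3
  rw [lineProduct, MvPolynomial.totalDegree_mul_of_isDomain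
    (left_ne_zero_of_mul lineProduct_ne_zero) prime_X_zero_add_X_one.ne_zero,
    MvPolynomial.totalDegree_mul_of_isDomain prime_X_zero_add_one.ne_zero
    prime_X_one_add_one.ne_zero, h1, h2, h3]

variable [CharP k 2] {t : ℕ}

lemma eval_lineProduct_ne_zero_iff {P : Fin 2 → k} :
    MvPolynomial.eval P (lineProduct k) ≠ 0 ↔ P 0 ≠ 1 ∧ P 1 ≠ 1 ∧ P 0 ≠ P 1 := by
  simp [lineProduct, CharTwo.add_eq_zero, and_assoc]

lemma eval_lineProduct_eq_zero_iff {P : Fin 2 → k} :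
    MvPolynomial.eval P (lineProduct k) = 0 ↔ P 0 = 1 ∨ P 1 = 1 ∨ P 0 = P 1 := by
  simp [lineProduct, CharTwo.add_eq_zero, or_assoc]

lemma three_le_multiplicityAt_one_lineProduct : 3 ≤ multiplicityAt 1 (lineProduct k) := by
  have h1 := (multiplicityAt_pos_iff (P := 1) prime_X_zero_add_one.ne_zero).2
    (by simp [CharTwo.add_self_eq_zero] : MvPolynomial.eval (1 : Fin 2 → k) (xx + 1) = 0)
  have h2 := (multiplicityAt_pos_iff (P := 1) prime_X_one_add_one.ne_zero).2
    (by simp [CharTwo.add_self_eq_zero] : MvPolynomial.eval (1 : Fin 2 → k) (yy + 1) = 0)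
  have h3 := (multiplicityAt_pos_iff (P := 1) prime_X_zero_add_X_one.ne_zero).2
    (by simp [CharTwo.add_self_eq_zero] : MvPolynomial.eval (1 : Fin 2 → k) (xx + yy) = 0)
  rw [lineProduct, multiplicityAt_mul (left_ne_zero_of_mul lineProduct_ne_zero)
    prime_X_zero_add_X_one.ne_zero, multiplicityAt_mul prime_X_zero_add_one.ne_zero
    prime_X_one_add_one.ne_zero]
  omega

/-- Pairing off the four `t`-th powers in three ways, each pair of bases has the same sum. -/
lemma factors_lineProduct_dvd_codewordPoly {R : Type*} [CommRing R] [CharP R 2] (ht : Odd t) :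
    xx + 1 ∣ codewordPoly R t ∧ yy + 1 ∣ codewordPoly R t ∧ xx + yy ∣ codewordPoly R t := by
  have h2 : (2 : MvPolynomial (Fin 2) R) = 0 := CharTwo.two_eq_zero
  have key : ∀ a b c d p : MvPolynomial (Fin 2) R, a + b = p → c + d = p →
      a ^ t + b ^ t + (c ^ t + d ^ t) = codewordPoly R t → p ∣ codewordPoly R t := by
    rintro a b c d p hab hcd h
    rw [← h]
    exact dvd_add (hab ▸ ht.add_dvd_pow_add_pow a b) (hcd ▸ ht.add_dvd_pow_add_pow c d)
  refine ⟨key xx 1 yy (xx + yy + 1) _ rfl ?_ ?_, key yy 1 xx (xx + yy + 1) _ rfl ?_ ?_,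
    key xx yy 1 (xx + yy + 1) _ rfl ?_ ?_⟩
  · linear_combination yy * h2
  · rw [codewordPoly, one_pow]; ring
  · linear_combination xx * h2
  · rw [codewordPoly, one_pow]; ring
  · linear_combination h2
  · rw [codewordPoly, one_pow]; ring

lemma lineProduct_dvd_codewordPoly (ht : Odd t) : lineProduct k ∣ codewordPoly k t := by
  obtain ⟨h1, h2, h3⟩ := factors_lineProduct_dvd_codewordPoly (R := k) ht
  have not_dvd : ∀ {p u : MvPolynomial (Fin 2) k} (P : Fin 2 → k), MvPolynomial.eval P p = 0 →
      MvPolynomial.eval P u ≠ 0 → ¬ p ∣ u := fun P hp hu h ↦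
    hu (zero_dvd_iff.1 (hp ▸ map_dvd (MvPolynomial.eval P) h))
  have hy : ¬ (yy + 1 : MvPolynomial (Fin 2) k) ∣ xx + 1 :=
    not_dvd ![0, 1] (by simp [CharTwo.add_self_eq_zero]) (by simp)
  have hxy : ¬ (xx + yy : MvPolynomial (Fin 2) k) ∣ (xx + 1) * (yy + 1) :=
    not_dvd 0 (by simp) (by simp)
  exact ((prime_X_zero_add_X_one.irreducible.isRelPrime_iff_not_dvd.2 hxy).symm).mul_dvd
    (((prime_X_one_add_one.irreducible.isRelPrime_iff_not_dvd.2 hy).symm).mul_dvd h1 h2) h3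

lemma squarefree_codewordPoly (ht : 1 < t) (hodd : Odd t) : Squarefree (codewordPoly k t) := by
  intro a ha
  have hunit : IsUnit (MvPolynomial.homogeneousComponent a.totalDegree a) := by
    rw [← coeff_dilate, ← natDegree_dilate]
    exact isRelPrime_self.1 (isRelPrime_leadingCoeff_dilate_of_mul_dvd_codewordPoly ht hodd ha)
  have hdeg := (MvPolynomial.isUnit_iff_totalDegree_of_isReduced.1 hunit).2
  rw [(MvPolynomial.homogeneousComponent_isHomogeneous _ a).totalDegree hunit.ne_zero] at hdeg
  rw [hdeg, MvPolynomial.homogeneousComponent_zero] at hunit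
  rwa [MvPolynomial.totalDegree_eq_zero_iff_eq_C.1 hdeg]

end LineFactors

section LocalEstimates

open Finset

variable {k : Type*} [Field k] {i l : ℕ} {P : Fin 2 → k}

open Classical in
/-- An upper bound for the intersection multiplicity at `P` of two coprime factors `u`, `v` of
`codewordPoly k (2 ^ i * l + 1)`. Where the initial form of that polynomial is squarefree this is
the product of the multiplicities; elsewhere there is a single tangent. -/
noncomputable def intersectionBound (i : ℕ) (P : Fin 2 → k) (u v : MvPolynomial (Fin 2) k) : ℕ :=
  if localForm (2 ^ i) P = 0 then multiplicityAt P u * multiplicityAt P v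
  else if MvPolynomial.eval P u = 0 ∧ MvPolynomial.eval P v = 0 then 2 ^ i else 0

variable [CharP k 2] {u v : MvPolynomial (Fin 2) k}

lemma isSingularPoint_of_mul_dvd (hi : 1 ≤ i)
    (huv : u * v ∣ codewordPoly k (2 ^ i * l + 1)) (hu : MvPolynomial.eval P u = 0)
    (hv : MvPolynomial.eval P v = 0) : IsSingularPoint l P := by
  have X_dvd : ∀ w, MvPolynomial.eval P w = 0 → Polynomial.X ∣ taylorAt P w := fun w hw ↦ by
    rw [Polynomial.X_dvd_iff, coeff_zero_taylorAt, hw, map_zero]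
  refine isSingularPoint_of_X_sq_dvd hi (dvd_trans ?_ (map_dvd (taylorAt P) huv))
  rw [map_mul, sq]
  exact mul_dvd_mul (X_dvd u hu) (X_dvd v hv)

variable [IsAlgClosed k]

lemma intersectionMultiplicityLE_intersectionBound (hi : 1 ≤ i) (hl : Odd l)
    (hP : IsSingularPoint l P) (huv : u * v ∣ codewordPoly k (2 ^ i * l + 1)) (hu : u ≠ 0)
    (hv : v ≠ 0) : IntersectionMultiplicityLE P u v (intersectionBound i P u v) := by
  rw [intersectionBound]
  split_ifs with h h0
  · exact hP.intersectionMultiplicityLE_of_localForm_eq_zero hi hl h huv hu hv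
  · have hF := hP.hasSingleTangentAt hi hl h
    rw [← (hP.expansion_of_localForm_ne_zero hi hl h).1]
    exact hF.intersectionMultiplicityLE huv h0.1 h0.2
  · exact intersectionMultiplicityLE_zero hu hv h0

lemma totalDegree_mul_totalDegree_le_sum_intersectionBound (hi : 1 ≤ i) (hl : Odd l)
    (huv : u * v ∣ codewordPoly k (2 ^ i * l + 1)) (hu : u ≠ 0) (hv : v ≠ 0)
    {Z : Finset (Fin 2 → k)} (hZ : ∀ P, P ∈ Z ↔ IsSingularPoint l P) :
    u.totalDegree * v.totalDegree ≤ ∑ P ∈ Z, intersectionBound i P u v :=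
  totalDegree_mul_totalDegree_le_sum hu hv
    (isRelPrime_leadingCoeff_dilate_of_mul_dvd_codewordPoly (one_lt_two_pow_mul_add_one i hl.pos)
      (odd_two_pow_mul_add_one hi l) huv)
    (fun P h1 h2 ↦ (hZ P).2 (isSingularPoint_of_mul_dvd hi huv h1 h2))
    fun P hP ↦ intersectionMultiplicityLE_intersectionBound hi hl ((hZ P).1 hP) huv hu hv

end LocalEstimates

section PairSumEstimates

open Finset

variable {k : Type*} [Field k] [CharP k 2] {i l : ℕ} {P : Fin 2 → k} {ι : Type*} [Fintype ι]
  {σ : Equiv.Perm ι} {a : ι → MvPolynomial (Fin 2) k}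

lemma multiplicityAt_lineProduct_add_sum (hi : 1 ≤ i) (hl : Odd l) (hP : IsSingularPoint l P)
    (ha : Associated (lineProduct k * ∏ j, a j) (codewordPoly k (2 ^ i * l + 1)))
    (h : localForm (2 ^ i) P = 0) :
    multiplicityAt P (lineProduct k) + ∑ j, multiplicityAt P (a j) = 2 ^ i + 1 := by
  have hne : lineProduct k * ∏ j, a j ≠ 0 := ha.ne_zero_iff.2
    (codewordPoly_ne_zero (one_lt_two_pow_mul_add_one i hl.pos) (odd_two_pow_mul_add_one hi l))
  have hprod := right_ne_zero_of_mul hne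
  rw [← (hP.multiplicityAt_and_initialForm_of_localForm_eq_zero hi hl h).1,
    ← multiplicityAt_eq_of_associated hne ha, multiplicityAt_mul lineProduct_ne_zero hprod,
    multiplicityAt_prod _ (prod_ne_zero_iff.1 hprod)]

lemma pairSum_intersectionBound_le_sq (hi : 1 ≤ i) (hl : Odd l) (hP : IsSingularPoint l P)
    (ha : Associated (lineProduct k * ∏ j, a j) (codewordPoly k (2 ^ i * l + 1)))
    (h : localForm (2 ^ i) P = 0) :
    pairSum σ (fun j m ↦ intersectionBound i P (a j) (a m)) ≤
      (2 ^ i + 1 - multiplicityAt P (lineProduct k)) ^ 2 := by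
  simp only [intersectionBound, if_pos h]
  refine (pairSum_mul_le σ fun j ↦ multiplicityAt P (a j)).trans (Nat.pow_le_pow_left ?_ 2)
  have := multiplicityAt_lineProduct_add_sum hi hl hP ha h
  omega

variable [IsAlgClosed k]

lemma IsSingularPoint.eval_ne_zero_of_mul_mul_dvd (hi : 1 ≤ i) (hl : Odd l)
    (hP : IsSingularPoint l P) (h : localForm (2 ^ i) P ≠ 0) {u v w : MvPolynomial (Fin 2) k}
    (hdvd : u * v * w ∣ codewordPoly k (2 ^ i * l + 1)) (hu : MvPolynomial.eval P u = 0)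
    (hv : MvPolynomial.eval P v = 0) : MvPolynomial.eval P w ≠ 0 := fun hw ↦ by
  have hmult := (hP.hasSingleTangentAt hi hl h).multiplicityAt_eq_three hdvd hu hv hw
  rw [(hP.expansion_of_localForm_ne_zero hi hl h).1] at hmult
  have heven : Even (2 ^ i) := even_two.pow_of_ne_zero (by omega)
  rw [hmult] at heven
  exact absurd heven (by decide)

open Classical in
lemma card_filter_eval_eq_zero_le_two (hi : 1 ≤ i) (hl : Odd l)
    (hP : IsSingularPoint l P)
    (ha : Associated (lineProduct k * ∏ j, a j) (codewordPoly k (2 ^ i * l + 1)))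
    (h : localForm (2 ^ i) P ≠ 0) : #{j | MvPolynomial.eval P (a j) = 0} ≤ 2 := by
  by_contra! hcard
  obtain ⟨j, hj, m, hm, n, hn, hjm, hjn, hmn⟩ := two_lt_card.1 hcard
  have hdvd : a j * a m * a n ∣ ∏ j, a j := by
    rw [← prod_pair hjm, mul_comm, ← prod_insert (by simp [hjn.symm, hmn.symm])]
    exact prod_dvd_prod_of_subset _ _ _ (subset_univ _)
  exact hP.eval_ne_zero_of_mul_mul_dvd hi hl h ((hdvd.mul_left _).trans ha.dvd)
    (mem_filter.1 hj).2 (mem_filter.1 hm).2 (mem_filter.1 hn).2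

open Classical in
lemma card_filter_eval_eq_zero_le_one (hi : 1 ≤ i) (hl : Odd l)
    (hP : IsSingularPoint l P)
    (ha : Associated (lineProduct k * ∏ j, a j) (codewordPoly k (2 ^ i * l + 1)))
    (h : localForm (2 ^ i) P ≠ 0)
    (h' : i = 1 ∨ MvPolynomial.eval P (lineProduct k) = 0) :
    #{j | MvPolynomial.eval P (a j) = 0} ≤ 1 := by
  by_contra! hcard
  obtain ⟨j, hj, m, hm, hjm⟩ := one_lt_card.1 hcard
  have hj0 := (mem_filter.1 hj).2
  have hm0 := (mem_filter.1 hm).2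
  have hdvd : lineProduct k * (a j * a m) ∣ codewordPoly k (2 ^ i * l + 1) :=
    (mul_dvd_mul_left _ (mul_dvd_prod_of_ne a hjm)).trans ha.dvd
  by_cases hline : MvPolynomial.eval P (lineProduct k) = 0
  · rw [← mul_assoc] at hdvd
    exact hP.eval_ne_zero_of_mul_mul_dvd hi hl h hdvd hline hj0 hm0
  · obtain rfl : i = 1 := h'.resolve_right hline
    obtain ⟨hx, hy, hxy⟩ := eval_lineProduct_ne_zero_iff.1 hline
    obtain ⟨w, hw⟩ := hdvd
    have hF : codewordPoly k (2 * l + 1) = a j * (lineProduct k * a m * w) := by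
      rw [pow_one] at hw; rw [hw]; ring
    rcases hP.eval_ne_zero_or_of_eq_mul hl hx hy hxy hF with hne | hne
    · exact hne hj0
    · simp [hm0] at hne

open Classical in
lemma pairSum_intersectionBound_le_of_localForm_ne_zero (hσ : ∀ j, σ j ≠ j)
    (hi : 1 ≤ i) (hl : Odd l) (hP : IsSingularPoint l P)
    (ha : Associated (lineProduct k * ∏ j, a j) (codewordPoly k (2 ^ i * l + 1)))
    (h : localForm (2 ^ i) P ≠ 0) :
    pairSum σ (fun j m ↦ intersectionBound i P (a j) (a m)) ≤
      if MvPolynomial.eval P (lineProduct k) = 0 then 0 else (2 ^ i) ^ 2 := by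
  have hV := pairSum_ite_mem_le hσ {j | MvPolynomial.eval P (a j) = 0} (2 ^ i)
  simp only [mem_filter, mem_univ, true_and] at hV
  simp only [intersectionBound, if_neg h]
  refine hV.trans ?_
  by_cases h' : i = 1 ∨ MvPolynomial.eval P (lineProduct k) = 0
  · have := card_filter_eval_eq_zero_le_one hi hl hP ha h h'
    simp [Nat.sub_eq_zero_of_le this]
  · obtain ⟨hi1, hline⟩ := not_or.1 h'
    have hcard := card_filter_eval_eq_zero_le_two hi hl hP ha h
    have hq : 2 ^ 2 ≤ 2 ^ i := Nat.pow_le_pow_right (by norm_num) (by omega)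
    rw [if_neg hline]
    calc 2 * (#{j | MvPolynomial.eval P (a j) = 0} *
          (#{j | MvPolynomial.eval P (a j) = 0} - 1) * 2 ^ i)
        ≤ 2 * (2 * (2 - 1) * 2 ^ i) := by gcongr
      _ ≤ (2 ^ i) ^ 2 := by nlinarith

end PairSumEstimates

section CountingBound

open Finset

variable {k : Type*} [Field k] {i l : ℕ} {P : Fin 2 → k}

open Classical in
/-- An upper bound for the contribution of the singular point `P` to the sum of the intersection
multiplicities of the irreducible components other than the three lines, where `q = 2 ^ i`. -/
noncomputable def pointWeight (q : ℕ) (P : Fin 2 → k) : ℕ :=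
  (if MvPolynomial.eval P (lineProduct k) ≠ 0 then q ^ 2 else 0) +
  (if MvPolynomial.eval P (lineProduct k) ≠ 0 ∧ localForm q P = 0 then 2 * q + 1 else 0) +
  (if MvPolynomial.eval P (lineProduct k) = 0 ∧ localForm q P = 0 ∧ P ≠ 1 then q ^ 2 else 0) +
  (if P = 1 then (q - 2) ^ 2 else 0)

lemma pairSum_intersectionBound_le_pointWeight [CharP k 2] [IsAlgClosed k] {ι : Type*} [Fintype ι]
    {σ : Equiv.Perm ι} (hσ : ∀ j, σ j ≠ j) {a : ι → MvPolynomial (Fin 2) k} (hi : 1 ≤ i)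
    (hl : Odd l) (hP : IsSingularPoint l P)
    (ha : Associated (lineProduct k * ∏ j, a j) (codewordPoly k (2 ^ i * l + 1))) :
    pairSum σ (fun j m ↦ intersectionBound i P (a j) (a m)) ≤ pointWeight (2 ^ i) P := by
  rw [pointWeight]
  by_cases h : localForm (2 ^ i) P = 0
  · have hpos : MvPolynomial.eval P (lineProduct k) = 0 → 0 < multiplicityAt P (lineProduct k) :=
      (multiplicityAt_pos_iff lineProduct_ne_zero).2
    refine (pairSum_intersectionBound_le_sq hi hl hP ha h).trans ?_
    rcases eq_or_ne P 1 with rfl | h1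
    · have h3 := three_le_multiplicityAt_one_lineProduct (k := k)
      rw [if_pos rfl]
      exact le_add_left (Nat.pow_le_pow_left (by omega) 2)
    by_cases h0 : MvPolynomial.eval P (lineProduct k) = 0
    · rw [if_pos (c := _ ∧ _ ∧ _) ⟨h0, h, h1⟩]
      have : 2 ^ i + 1 - multiplicityAt P (lineProduct k) ≤ 2 ^ i :=
        Nat.sub_le_iff_le_add.2 (Nat.add_le_add_left (hpos h0) _)
      exact le_add_right (le_add_left (Nat.pow_le_pow_left this 2))
    · rw [if_pos h0, if_pos ⟨h0, h⟩]
      refine le_add_right (le_add_right ((Nat.pow_le_pow_left (Nat.sub_le _ _) 2).trans ?_))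
      exact (by ring : (2 ^ i + 1) ^ 2 = (2 ^ i) ^ 2 + (2 * 2 ^ i + 1)).le
  · refine (pairSum_intersectionBound_le_of_localForm_ne_zero hσ hi hl hP ha h).trans ?_
    simp only [ne_eq, ite_not, add_assoc]
    exact Nat.le_add_right _ _

lemma card_nthRootsFinset_le {R : Type*} [CommRing R] [IsDomain R] (n : ℕ) (a : R) :
    #(Polynomial.nthRootsFinset n a) ≤ n := by
  classical
  rw [Polynomial.nthRootsFinset]
  exact (Multiset.toFinset_card_le _).trans (Polynomial.card_nthRoots n a)

lemma pow_gcd_sub_one_eq_one {M : Type*} [CommGroupWithZero M] {z : M} (hz : z ≠ 0) {l q : ℕ}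
    (hq : q ≠ 0) (h1 : z ^ l = 1) (h2 : z ^ q = z) : z ^ l.gcd (q - 1) = 1 := by
  refine pow_gcd_eq_one.2 ⟨h1, mul_right_cancel₀ hz ?_⟩
  rw [← pow_succ, Nat.sub_add_cancel (Nat.pos_of_ne_zero hq), h2, one_mul]

lemma finite_setOf_isSingularPoint (hl : 0 < l) : {P : Fin 2 → k | IsSingularPoint l P}.Finite := by
  refine (Fintype.piFinset fun _ ↦ Polynomial.nthRootsFinset l (1 : k)).finite_toSet.subset
    fun P hP ↦ ?_
  simp only [mem_coe, Fintype.mem_piFinset, Polynomial.mem_nthRootsFinset hl]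
  exact Fin.forall_fin_two.2 ⟨hP.1, hP.2.1⟩

variable [CharP k 2]

lemma IsSingularPoint.mem_nthRootsFinset_gcd (hl : 0 < l) (hP : IsSingularPoint l P)
    (h : localForm (2 ^ i) P = 0) :
    P 0 ∈ Polynomial.nthRootsFinset (l.gcd (2 ^ i - 1)) (1 : k) ∧
      P 1 ∈ Polynomial.nthRootsFinset (l.gcd (2 ^ i - 1)) (1 : k) ∧
      P 0 + P 1 + 1 ∈ Polynomial.nthRootsFinset (l.gcd (2 ^ i - 1)) (1 : k) := by
  obtain ⟨h0, h1⟩ := hP.pow_eq_self_of_localForm_eq_zero hl.ne' h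
  obtain ⟨n0, n1, n2⟩ := hP.ne_zero hl.ne'
  have hq : 2 ^ i ≠ 0 := by positivity
  simp only [Polynomial.mem_nthRootsFinset (Nat.gcd_pos_of_pos_left _ hl)]
  refine ⟨pow_gcd_sub_one_eq_one n0 hq hP.1 h0, pow_gcd_sub_one_eq_one n1 hq hP.2.1 h1,
    pow_gcd_sub_one_eq_one n2 hq hP.2.2 ?_⟩
  rw [add_pow_char_pow, add_pow_char_pow, one_pow, h0, h1]

lemma sum_pointWeight_le (hl : Odd l) {Z : Finset (Fin 2 → k)} (hZ : ∀ P ∈ Z, IsSingularPoint l P) :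
    ∑ P ∈ Z, pointWeight (2 ^ i) P ≤ (2 ^ i) ^ 2 * ((l - 3) * (l - 1)) +
      (2 * 2 ^ i + 1) * ((l.gcd (2 ^ i - 1) - 3) * (l.gcd (2 ^ i - 1) - 1)) +
      (2 ^ i) ^ 2 * (3 * (l.gcd (2 ^ i - 1) - 1)) + (2 ^ i - 2) ^ 2 := by
  classical
  set δ := l.gcd (2 ^ i - 1)
  have hδ0 : 0 < δ := Nat.gcd_pos_of_pos_left _ hl.pos
  have hδo : Odd δ := hl.of_dvd_nat (Nat.gcd_dvd_left _ _)
  have one_mem : ∀ {n : ℕ}, 0 < n → 1 ∈ Polynomial.nthRootsFinset n (1 : k) := fun hn ↦ by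
    rw [Polynomial.mem_nthRootsFinset hn, one_pow]
  simp only [pointWeight, sum_add_distrib]
  simp only [← sum_filter, sum_const, smul_eq_mul]
  refine add_le_add (add_le_add (add_le_add ?_ ?_) ?_) ?_
  · rw [mul_comm]
    refine Nat.mul_le_mul_left _ (card_le_of_forall_off_lines (one_mem hl.pos) hl
      (card_nthRootsFinset_le l 1) (fun P hP ↦ ?_) fun P hP ↦
        eval_lineProduct_ne_zero_iff.1 (mem_filter.1 hP).2)
    simp only [Polynomial.mem_nthRootsFinset hl.pos]
    exact hZ P (mem_filter.1 hP).1
  · rw [mul_comm]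
    refine Nat.mul_le_mul_left _ (card_le_of_forall_off_lines (one_mem hδ0) hδo
      (card_nthRootsFinset_le δ 1) (fun P hP ↦ ?_) fun P hP ↦ ?_) <;>
      obtain ⟨hPZ, hoff, h⟩ := mem_filter.1 hP
    · exact (hZ P hPZ).mem_nthRootsFinset_gcd hl.pos h
    · exact eval_lineProduct_ne_zero_iff.1 hoff
  · rw [mul_comm]
    refine Nat.mul_le_mul_left _ (card_le_of_forall_on_lines (one_mem hδ0)
      (card_nthRootsFinset_le δ 1) (fun P hP ↦ ?_) (fun P hP ↦ ?_) fun P hP ↦ ?_) <;>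
      obtain ⟨hPZ, hon, h, hne⟩ := mem_filter.1 hP
    · obtain ⟨h0, h1, -⟩ := (hZ P hPZ).mem_nthRootsFinset_gcd hl.pos h
      exact ⟨h0, h1⟩
    · exact eval_lineProduct_eq_zero_iff.1 hon
    · exact hne
  · have : #{P ∈ Z | P = 1} ≤ 1 := card_le_one.2 fun P hP Q hQ ↦
      (mem_filter.1 hP).2.trans (mem_filter.1 hQ).2.symm
    exact (Nat.mul_le_mul_right _ this).trans (one_mul _).le

end CountingBound

section FrobeniusFixedFactor

open Finset

lemma totalDegree_map_of_injective {σ R S : Type*} [CommSemiring R] [CommSemiring S] {φ : R →+* S}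
    (hφ : Function.Injective φ) (u : MvPolynomial σ R) :
    (MvPolynomial.map φ u).totalDegree = u.totalDegree := by
  simp only [MvPolynomial.totalDegree, MvPolynomial.support_map_of_injective u hφ]

lemma exists_perm_associated_map {R : Type*} [CommMonoidWithZero R] [UniqueFactorizationMonoid R]
    {G : R} (hsq : Squarefree G) {S : Finset R} (hS : ∀ a ∈ S, Irreducible a)
    (hSG : Associated (∏ a ∈ S, a) G) (Φ : R ≃* R) (hΦ : Φ G = G) :
    ∃ σ : Equiv.Perm S, ∀ a : S, Associated (Φ a) (σ a) := by
  have hdvd : ∀ a ∈ S, a ∣ G := fun a ha ↦ (dvd_prod_of_mem _ ha).trans hSG.dvd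
  have hirr : ∀ a : S, Irreducible (Φ a) := fun a ↦ (MulEquiv.irreducible_iff Φ).2 (hS a a.2)
  have hex : ∀ a : S, ∃ b : S, Associated (Φ a) b := fun a ↦ by
    have h : Φ a ∣ ∏ b ∈ S, b := by
      rw [hSG.dvd_iff_dvd_right, ← hΦ]
      exact map_dvd Φ (hdvd a a.2)
    obtain ⟨b, hb, hab⟩ := ((hirr a).prime.dvd_finsetProd_iff _).1 h
    exact ⟨⟨b, hb⟩, (hirr a).associated_of_dvd (hS b hb) hab⟩
  choose σ hσ using hex
  have hinj : Function.Injective σ := fun a b hab ↦ by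
    by_contra hne
    have hassoc : Associated (a : R) b := by
      have h : Associated (Φ a) (Φ b) := (hσ a).trans (hab ▸ (hσ b).symm)
      simpa using h.map Φ.symm
    have hmul : (a * b : R) ∣ G :=
      (mul_dvd_prod_of_ne (Subtype.val : S → R) hne).trans
        (by rw [prod_coe_sort S fun a ↦ a]; exact hSG.dvd)
    exact (hS a a.2).not_isUnit (hsq a ((mul_dvd_mul_left _ hassoc.dvd).trans hmul))
  exact ⟨.ofBijective σ (Finite.injective_iff_bijective.1 hinj), hσ⟩

lemma map_codewordPoly {R S : Type*} [CommRing R] [CommRing S] (φ : R →+* S) (t : ℕ) :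
    MvPolynomial.map φ (codewordPoly R t) = codewordPoly S t := by
  simp [codewordPoly]

lemma map_lineProduct {R S : Type*} [CommRing R] [CommRing S] (φ : R →+* S) :
    MvPolynomial.map φ (lineProduct R) = lineProduct S := by
  simp [lineProduct]

variable {k : Type*} [Field k] [CharP k 2] [IsAlgClosed k] {i l : ℕ}

/-- Otherwise the degree `q l - 2` of the residual curve would be too large: summing Bézout's
theorem over all pairs of components, with the pairs `(j, σ j)` in place of `(j, j)`, bounds its
square by the total weight of the singular points. -/
lemma exists_perm_apply_eq_of_totalDegree_eq {ι : Type*} [Fintype ι]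
    {a : ι → MvPolynomial (Fin 2) k} (hi : 1 ≤ i) (hl : Odd l) (hl3 : 3 ≤ l) (hkw : l ≠ 2 ^ i - 1)
    (ha : Associated (lineProduct k * ∏ j, a j) (codewordPoly k (2 ^ i * l + 1)))
    {σ : Equiv.Perm ι} (hσ : ∀ j, (a (σ j)).totalDegree = (a j).totalDegree) : ∃ j, σ j = j := by
  by_contra! hne
  have ht := one_lt_two_pow_mul_add_one i hl.pos
  have hodd := odd_two_pow_mul_add_one hi l
  have hprod : ∏ j, a j ≠ 0 :=
    right_ne_zero_of_mul (ha.ne_zero_iff.2 (codewordPoly_ne_zero ht hodd))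
  have ha0 : ∀ j ∈ univ, a j ≠ 0 := prod_ne_zero_iff.1 hprod
  have hdeg : ∑ j, (a j).totalDegree = 2 ^ i * l - 2 := by
    have h := totalDegree_eq_of_associated ha
    rw [MvPolynomial.totalDegree_mul_of_isDomain lineProduct_ne_zero hprod, totalDegree_lineProduct,
      totalDegree_prod_of_ne_zero _ ha0, totalDegree_codewordPoly ht hodd] at h
    omega
  have hZ (P) := (finite_setOf_isSingularPoint (k := k) hl.pos).mem_toFinset (a := P)
  have hbezout := sq_sum_le_sum_pairSum hne hσ _ (fun P j m ↦ intersectionBound i P (a j) (a m))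
    fun j m hjm ↦ totalDegree_mul_totalDegree_le_sum_intersectionBound hi hl
      (((mul_dvd_prod_of_ne a hjm).mul_left _).trans ha.dvd) (ha0 j (mem_univ _))
      (ha0 m (mem_univ _)) hZ
  rw [hdeg] at hbezout
  refine (hbezout.trans (sum_le_sum fun P hP ↦ pairSum_intersectionBound_le_pointWeight hne hi hl
    ((hZ P).1 hP) ha)).not_gt (lt_of_le_of_lt (sum_pointWeight_le hl fun P hP ↦ (hZ P).1 hP)
    (pairCount_bound_lt ?_ (even_two.pow_of_ne_zero (by omega)) hl3 hl hkw))
  exact Nat.le_self_pow (by omega) 2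

theorem exists_irreducible_dvd_associated_map_frobenius (hi : 1 ≤ i) (hl : Odd l) (hl3 : 3 ≤ l)
    (hkw : l ≠ 2 ^ i - 1) {G : MvPolynomial (Fin 2) k}
    (hG : codewordPoly k (2 ^ i * l + 1) = lineProduct k * G) :
    ∃ a, Irreducible a ∧ a ∣ G ∧ Associated (MvPolynomial.map (frobenius k 2) a) a := by
  have ht := one_lt_two_pow_mul_add_one i hl.pos
  have hodd := odd_two_pow_mul_add_one hi l
  have hG0 : G ≠ 0 := right_ne_zero_of_mul (hG ▸ codewordPoly_ne_zero ht hodd)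
  have hsq : Squarefree G :=
    (squarefree_codewordPoly (k := k) ht hodd).squarefree_of_dvd (hG ▸ dvd_mul_left _ _)
  let Φ := MvPolynomial.mapEquiv (Fin 2) (frobeniusEquiv k 2)
  have hΦG : Φ G = G := by
    have h := map_codewordPoly (frobenius k 2) (2 ^ i * l + 1)
    rw [hG, map_mul, map_lineProduct] at h
    exact mul_left_cancel₀ lineProduct_ne_zero h
  obtain ⟨S, hS, hSG⟩ := exists_finset_irreducible_associated_prod hG0 hsq
  obtain ⟨σ, hσ⟩ := exists_perm_associated_map hsq hS hSG Φ.toMulEquiv hΦG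
  have hdeg : ∀ a : S, (σ a : MvPolynomial (Fin 2) k).totalDegree = a.1.totalDegree := fun a ↦ by
    rw [← totalDegree_eq_of_associated (hσ a)]
    exact totalDegree_map_of_injective (frobenius k 2).injective a.1
  have hassoc : Associated (lineProduct k * ∏ a : S, a.1) (codewordPoly k (2 ^ i * l + 1)) := by
    rw [hG, prod_coe_sort S fun a ↦ a]
    exact hSG.mul_left _
  obtain ⟨a, ha⟩ := exists_perm_apply_eq_of_totalDegree_eq hi hl hl3 hkw hassoc hdeg
  have hfix := hσ a
  rw [ha] at hfix
  exact ⟨a, hS a a.2, (dvd_prod_of_mem _ a.2).trans hSG.dvd, hfix⟩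

end FrobeniusFixedFactor

section PerfectCore

open Finset

variable {ι κ k E K : Type*} [Field k] [Field E] [Field K] {p : ℕ}

lemma linearIndepOn_of_subfield_le {L L' : Subfield K} (hL : L ≤ L') {u : ι → K} {s : Finset ι}
    (hu : LinearIndepOn L' u s) : LinearIndepOn L u s := by
  rw [linearIndepOn_finset_iff] at hu ⊢
  intro c hc i hi
  exact Subtype.ext (congrArg (fun x : L' ↦ (x : K))
    (hu (fun j ↦ Subfield.inclusion hL (c j)) hc i hi))

-- As `u` stays independent over `L m` for `m ≥ m₀`, the coefficients of `u a` do not depend on `m`.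
lemma mem_span_iInf_of_forall_mem_span {L : ℕ → Subfield K} (hL : Antitone L) {u : ι → K}
    {s : Finset ι} {a : ι} {m₀ : ℕ} (hu : LinearIndepOn (L m₀) u s)
    (ha : ∀ m ≥ m₀, u a ∈ Submodule.span (L m) (u '' s)) :
    u a ∈ Submodule.span ↥(⨅ m, L m) (u '' s) := by
  simp only [Submodule.mem_span_image_finset_iff_exists_fun'] at ha ⊢
  choose! c hc using ha
  have hconst : ∀ m ≥ m₀, ∀ i ∈ s, (c m i : K) = c m₀ i := by
    intro m hm i hi
    have := linearIndepOn_finset_iff.1 hu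
      (fun j ↦ Subfield.inclusion (hL hm) (c m j) - c m₀ j) ?_ i hi
    · exact congrArg (fun x : L m₀ ↦ (x : K)) (sub_eq_zero.1 this)
    · simp only [sub_smul, sum_sub_distrib]
      exact sub_eq_zero.2 ((hc m hm).trans (hc m₀ le_rfl).symm)
  have hmem : ∀ i ∈ s, (c m₀ i : K) ∈ ⨅ m, L m := fun i hi ↦ Subfield.mem_iInf.2 fun m ↦ by
    rw [← hconst _ (le_max_right m m₀) i hi]
    exact hL (le_max_left m m₀) (c _ i).2
  classical
  refine ⟨fun i ↦ if hi : i ∈ s then ⟨_, hmem i hi⟩ else 0, (sum_congr rfl fun i hi ↦ ?_).trans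
    (hc m₀ le_rfl)⟩
  simp only [dif_pos hi]
  rfl

theorem exists_linearIndepOn_of_iInf {L : ℕ → Subfield K} (hL : Antitone L) {u : ι → K}
    {s : Finset ι} (hu : LinearIndepOn ↥(⨅ m, L m) u s) : ∃ m, LinearIndepOn (L m) u s := by
  classical
  induction s using Finset.induction_on with
  | empty => simp
  | insert a s ha ih =>
    rw [coe_insert, linearIndepOn_insert (mod_cast ha)] at hu
    obtain ⟨m₀, hm₀⟩ := ih hu.1
    by_contra! hdep
    refine hu.2 (mem_span_iInf_of_forall_mem_span hL hm₀ fun m hm ↦ ?_)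
    by_contra hspan
    refine hdep m ?_
    rw [coe_insert, linearIndepOn_insert (mod_cast ha)]
    exact ⟨linearIndepOn_of_subfield_le (hL hm) hm₀, hspan⟩

section

variable (K p) [ExpChar K p]

/-- The largest perfect subfield of a field of characteristic exponent `p`: the elements having a
`p ^ m`-th root for every `m`. -/
noncomputable def perfectCore : Subfield K :=
  ⨅ m, (iterateFrobenius K p m).fieldRange

variable {K p}

lemma mem_perfectCore {x : K} : x ∈ perfectCore K p ↔ ∀ m, ∃ y, y ^ p ^ m = x := by
  simp [perfectCore, Subfield.mem_iInf, iterateFrobenius_def]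

lemma antitone_fieldRange_iterateFrobenius :
    Antitone fun m ↦ (iterateFrobenius K p m).fieldRange := by
  rintro m n hmn _ ⟨y, rfl⟩
  refine ⟨iterateFrobenius K p (n - m) y, ?_⟩
  rw [← iterateFrobenius_add_apply, Nat.add_sub_cancel' hmn]

end

lemma natDegree_eq_zero_of_associated_pow {a b : Polynomial k} {n : ℕ} (h : Associated a (b ^ n))
    (hn : a.natDegree < n) : a.natDegree = 0 := by
  have hdeg := Polynomial.natDegree_eq_of_degree_eq (Polynomial.degree_eq_degree_of_associated h)
  rw [Polynomial.natDegree_pow] at hdeg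
  rcases Nat.eq_zero_or_pos b.natDegree with hb | hb
  · rw [hdeg, hb, mul_zero]
  · exact absurd (hdeg.ge.trans' (Nat.le_mul_of_pos_right n hb)) hn.not_ge

lemma associated_of_isRelPrime_of_mul_eq_mul {R : Type*} [CommRing R] [IsDomain R]
    [DecompositionMonoid R] {a b c d : R} (hab : IsRelPrime a b) (hcd : IsRelPrime c d)
    (h : c * b = a * d) : Associated a c ∧ Associated b d :=
  ⟨associated_of_dvd_dvd (hab.dvd_of_dvd_mul_right ⟨d, h⟩) (hcd.dvd_of_dvd_mul_right ⟨b, h.symm⟩),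
    associated_of_dvd_dvd (hab.symm.dvd_of_dvd_mul_left ⟨c, by rw [← h, mul_comm]⟩)
      (hcd.symm.dvd_of_dvd_mul_left ⟨a, by rw [h, mul_comm]⟩)⟩

lemma mem_range_algebraMap_of_forall_exists_pow_eq {e : FractionRing (Polynomial k)}
    (h : ∀ N, ∃ n > N, ∃ e', e' ^ n = e) :
    e ∈ (algebraMap k (FractionRing (Polynomial k))).fieldRange := by
  obtain ⟨a, b, hab, rfl⟩ := IsFractionRing.exists_reduced_fraction (Polynomial k) e
  obtain ⟨n, hn, e', he'⟩ := h (a.natDegree + (b : Polynomial k).natDegree)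
  obtain ⟨c, d, hcd, rfl⟩ := IsFractionRing.exists_reduced_fraction (Polynomial k) e'
  rw [← IsLocalization.mk'_pow, IsLocalization.mk'_eq_iff_eq] at he'
  have hmul := IsFractionRing.injective (Polynomial k) (FractionRing (Polynomial k)) he'
  rw [mul_comm, mul_comm _ a] at hmul
  obtain ⟨hac, hbd⟩ := associated_of_isRelPrime_of_mul_eq_mul hab hcd.pow hmul
  have ha := natDegree_eq_zero_of_associated_pow hac (by omega)
  have hb := natDegree_eq_zero_of_associated_pow hbd (by omega)
  rw [IsFractionRing.mk'_eq_div, Polynomial.eq_C_of_natDegree_eq_zero ha,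
    Polynomial.eq_C_of_natDegree_eq_zero hb, ← Polynomial.algebraMap_eq,
    ← IsScalarTower.algebraMap_apply, ← IsScalarTower.algebraMap_apply, ← map_div₀]
  exact ⟨_, rfl⟩

lemma mem_lifts_of_forall_eval_mem_range [Infinite k] [Algebra k E] {q : Polynomial E}
    (hq : ∀ c : k, q.eval (algebraMap k E c) ∈ (algebraMap k E).fieldRange) :
    q ∈ Polynomial.lifts (algebraMap k E) := by
  classical
  obtain ⟨s, hs⟩ := Infinite.exists_subset_card_eq k (q.natDegree + 1)
  choose r hr using hq
  refine (Polynomial.mem_lifts q).2 ⟨Lagrange.interpolate s id r, ?_⟩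
  refine Polynomial.eq_of_degrees_lt_of_eval_index_eq s (v := algebraMap k E)
    (algebraMap k E).injective.injOn ?_ ?_ fun c hc ↦ ?_
  · rw [Polynomial.degree_map]
    exact Lagrange.degree_interpolate_lt r Function.injective_id.injOn
  · rw [hs]
    exact Polynomial.degree_le_natDegree.trans_lt (mod_cast Nat.lt_succ_self _)
  · rw [Polynomial.eval_map_algebraMap, Polynomial.aeval_algebraMap_apply, ← hr]
    congr 1
    exact Lagrange.eval_interpolate_at_node r Function.injective_id.injOn hc

lemma perfectCore_fractionRing_le [Fact p.Prime] [CharP (FractionRing (Polynomial k)) p] :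
    perfectCore (FractionRing (Polynomial k)) p ≤
      (algebraMap k (FractionRing (Polynomial k))).fieldRange := fun _ he ↦
  mem_range_algebraMap_of_forall_exists_pow_eq fun N ↦
    ⟨p ^ N, Nat.lt_pow_self (Fact.out : p.Prime).one_lt, mem_perfectCore.1 he N⟩

section

variable [ExpChar K p]

lemma algebraMap_mem_perfectCore [IsAlgClosed k] [Algebra k K] [NeZero p] (c : k) :
    algebraMap k K c ∈ perfectCore K p := by
  refine mem_perfectCore.2 fun m ↦ ?_
  obtain ⟨d, rfl⟩ := IsAlgClosed.exists_pow_nat_eq c (pow_pos (NeZero.pos p) m)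
  exact ⟨algebraMap k K d, (map_pow _ _ _).symm⟩

lemma norm_mem_perfectCore [ExpChar E p] [Algebra E K] {g : K} (hg : g ∈ perfectCore K p) :
    Algebra.norm E g ∈ perfectCore E p := by
  refine mem_perfectCore.2 fun m ↦ ?_
  obtain ⟨h, rfl⟩ := mem_perfectCore.1 hg m
  exact ⟨Algebra.norm E h, (map_pow _ _ _).symm⟩

-- The characteristic polynomial `N(T - g)` takes values in `k` on `k`, so it is defined over `k`.
theorem perfectCore_le_of_finiteDimensional [IsAlgClosed k] [ExpChar E p] [NeZero p] [Algebra k E]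
    [Algebra k K] [Algebra E K] [IsScalarTower k E K] [FiniteDimensional E K]
    (hE : perfectCore E p ≤ (algebraMap k E).fieldRange) :
    perfectCore K p ≤ (algebraMap k K).fieldRange := by
  intro g hg
  obtain ⟨q, hq⟩ : (Algebra.lmul E K g).charpoly ∈ Polynomial.lifts (algebraMap k E) := by
    refine mem_lifts_of_forall_eval_mem_range fun c ↦ hE ?_
    rw [LinearMap.eval_charpoly, ← AlgHom.commutes (Algebra.lmul E K), ← map_sub,
      ← Algebra.norm_apply, ← IsScalarTower.algebraMap_apply]
    exact norm_mem_perfectCore (sub_mem (algebraMap_mem_perfectCore c) hg)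
  have hroot : Polynomial.aeval g q = 0 := by
    rw [← Polynomial.aeval_map_algebraMap E, ← Algebra.aeval_self_charpoly_lmul (R := E) g, ← hq]
    rfl
  have hq0 : q ≠ 0 := fun h ↦ (LinearMap.charpoly_monic (Algebra.lmul E K g)).ne_zero (by
    rw [← hq, h]
    exact Polynomial.map_zero _)
  obtain ⟨c, hc⟩ := IsIntegral.mem_range_algebraMap_of_minpoly_splits (K := k)
    (IsAlgebraic.isIntegral ⟨q, hq0, hroot⟩) (IsAlgClosed.splits _)
  exact ⟨c, hc⟩

lemma linearIndependent_of_le_fieldRange [Algebra k K] {L : Subfield K}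
    (hL : L ≤ (algebraMap k K).fieldRange) {u : ι → K} (hu : LinearIndependent k u) :
    LinearIndependent L u := by
  rw [linearIndependent_iff'] at hu ⊢
  intro s c hc i hi
  choose e he using fun j ↦ hL (c j).2
  have := hu s e (by
    rw [← hc]
    refine sum_congr rfl fun j _ ↦ ?_
    rw [Algebra.smul_def, he]
    rfl) i hi
  exact Subtype.ext (by rw [← he, this, map_zero, ZeroMemClass.coe_zero])

end

theorem exists_forall_sum_smul_mul_pow_ne_zero [Fact p.Prime] [CharP K p] [Algebra (ZMod p) K]
    [Fintype ι] [Fintype κ] {u : ι → K} {v : κ → K} (hu : LinearIndependent (perfectCore K p) u)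
    (hv : LinearIndependent (ZMod p) v) {c : ι × κ → ZMod p} (hc : c ≠ 0) :
    ∃ m₀ : ℕ, ∀ m ≥ m₀, ∑ t, c t • (u t.1 * v t.2 ^ p ^ m) ≠ 0 := by
  obtain ⟨m₀, hm₀⟩ := exists_linearIndepOn_of_iInf (u := u) (s := univ)
    (antitone_fieldRange_iterateFrobenius (K := K) (p := p))
    (by rwa [coe_univ, linearIndepOn_univ_iff])
  refine ⟨m₀, fun m hm hsum ↦ hc (funext fun ⟨i, j⟩ ↦ ?_)⟩
  have hum := linearIndepOn_of_subfield_le (antitone_fieldRange_iterateFrobenius hm) hm₀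
  have hcoeff : iterateFrobenius K p m (∑ j, c (i, j) • v j) = 0 := by
    refine congrArg Subtype.val (linearIndepOn_finset_iff.1 hum
      (fun i ↦ ⟨iterateFrobenius K p m (∑ j, c (i, j) • v j), _, rfl⟩) ?_ i (mem_univ i))
    rw [← hsum, Fintype.sum_prod_type]
    refine sum_congr rfl fun i _ ↦ ?_
    change iterateFrobenius K p m (∑ j, c (i, j) • v j) * u i = _
    rw [map_sum, sum_mul]
    refine sum_congr rfl fun j _ ↦ ?_
    rw [iterateFrobenius_def, smul_pow, ZMod.pow_card_pow, smul_mul_assoc, mul_comm (u i)]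
  exact Fintype.linearIndependent_iff.1 hv _ ((map_eq_zero _).1 hcoeff) j

end PerfectCore

section SpanDegreeLT

open Polynomial Finset

variable {F M ι : Type*} [Field F] [Fintype ι]

section Module

variable [AddCommGroup M] [Module F[X] M] [Module F M] [IsScalarTower F F[X] M] {g : ι → M}

/-- The combinations of the family `g` with polynomial coefficients of degree less than `D`. When
`g` spans, these subspaces filter the `F[X]`-module `M` by order of the pole at infinity, up to a
bounded error. -/
noncomputable def spanDegreeLT (g : ι → M) (D : ℕ) : Submodule F M :=
  LinearMap.range ((Fintype.linearCombination F[X] g).restrictScalars F ∘ₗ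
    (degreeLT F D).subtype.compLeft ι)

lemma mem_spanDegreeLT {D : ℕ} {m : M} :
    m ∈ spanDegreeLT (F := F) g D ↔ ∃ p : ι → F[X], (∀ i, (p i).degree < D) ∧ ∑ i, p i • g i = m :=
  ⟨fun ⟨p, hp⟩ ↦ ⟨fun i ↦ p i, fun i ↦ mem_degreeLT.1 (p i).2, hp⟩,
    fun ⟨p, hp, h⟩ ↦ ⟨fun i ↦ ⟨p i, mem_degreeLT.2 (hp i)⟩, h⟩⟩

lemma finrank_spanDegreeLT_le (g : ι → M) (D : ℕ) :
    Module.finrank F (spanDegreeLT (F := F) g D) ≤ Fintype.card ι * D := by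
  have := Module.Finite.equiv (degreeLTEquiv F D).symm
  refine (LinearMap.finrank_range_le _).trans_eq ?_
  rw [Module.finrank_pi_fintype, sum_const, card_univ, smul_eq_mul,
    (degreeLTEquiv F D).finrank_eq, Module.finrank_fin_fun]

lemma spanDegreeLT_mono : Monotone (spanDegreeLT (F := F) g) := by
  intro D D' hD m hm
  obtain ⟨p, hp, hpm⟩ := mem_spanDegreeLT.1 hm
  exact mem_spanDegreeLT.2 ⟨p, fun i ↦ (hp i).trans_le (mod_cast hD), hpm⟩

lemma smul_mem_spanDegreeLT {D e : ℕ} {m : M} {q : F[X]} (hq : q.natDegree ≤ e)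
    (hm : m ∈ spanDegreeLT (F := F) g D) : q • m ∈ spanDegreeLT (F := F) g (D + e) := by
  obtain ⟨p, hp, rfl⟩ := mem_spanDegreeLT.1 hm
  refine mem_spanDegreeLT.2 ⟨fun i ↦ q * p i, fun i ↦ ?_, by simp only [smul_sum, mul_smul]⟩
  rcases eq_or_ne (p i) 0 with h0 | h0
  · simp only [h0, mul_zero, degree_zero]
    exact bot_lt_iff_ne_bot.2 (WithBot.natCast_ne_bot _)
  · have := natDegree_mul_le (p := q) (q := p i)
    have := (natDegree_lt_iff_degree_lt h0).2 (hp i)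
    exact (degree_le_natDegree (p := q * p i)).trans_lt (mod_cast by omega)

lemma exists_mem_spanDegreeLT (hg : Submodule.span F[X] (Set.range g) = ⊤) (m : M) :
    ∃ D, m ∈ spanDegreeLT (F := F) g D := by
  obtain ⟨p, hp⟩ : ∃ p : ι → F[X], ∑ i, p i • g i = m :=
    (Submodule.mem_span_range_iff_exists_fun F[X]).1 (hg ▸ Submodule.mem_top)
  refine ⟨(univ.sup fun i ↦ (p i).natDegree) + 1, mem_spanDegreeLT.2 ⟨p, fun i ↦ ?_, hp⟩⟩
  exact degree_le_natDegree.trans_lt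
    (mod_cast Nat.lt_succ_of_le (le_sup (f := fun i ↦ (p i).natDegree) (mem_univ i)))

lemma exists_sum_smul_eq_zero_of_mem_spanDegreeLT {τ : Type*} [Fintype τ] {D : ℕ} {m : τ → M}
    (hm : ∀ t, m t ∈ spanDegreeLT (F := F) g D) (hcard : Fintype.card ι * D < Fintype.card τ) :
    ∃ c : τ → F, c ≠ 0 ∧ ∑ t, c t • m t = 0 := by
  have : Module.Finite F (degreeLT F D) := Module.Finite.equiv (degreeLTEquiv F D).symm
  have : Module.Finite F (spanDegreeLT (F := F) g D) := Module.Finite.range _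
  have hdep : ¬ LinearIndependent F (fun t ↦ (⟨m t, hm t⟩ : spanDegreeLT (F := F) g D)) := fun h ↦
    (h.fintype_card_le_finrank.trans (finrank_spanDegreeLT_le g D)).not_gt hcard
  obtain ⟨c, hc, t, ht⟩ := Fintype.not_linearIndependent_iff.1 hdep
  refine ⟨c, fun h ↦ ht (congrFun h t), ?_⟩
  simpa only [map_sum, map_smul, map_zero, Submodule.subtype_apply]
    using congrArg (Submodule.subtype _) hc

lemma exists_map_mem_spanDegreeLT (hg : Submodule.span F[X] (Set.range g) = ⊤)
    (T : M →ₗ[F[X]] M) : ∃ κ, ∀ D, ∀ m ∈ spanDegreeLT (F := F) g D,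
      T m ∈ spanDegreeLT (F := F) g (D + κ) := by
  choose e he using fun i ↦ exists_mem_spanDegreeLT hg (T (g i))
  refine ⟨univ.sup e, fun D m hm ↦ ?_⟩
  obtain ⟨p, hp, rfl⟩ := mem_spanDegreeLT.1 hm
  rw [map_sum]
  refine Submodule.sum_mem _ fun i _ ↦ ?_
  rw [map_smul, add_comm]
  refine smul_mem_spanDegreeLT (natDegree_le_iff_degree_le.2 (hp i).le)
    (spanDegreeLT_mono (le_sup (mem_univ i)) (he i))

end Module

section Algebra

variable [CommRing M] [Algebra F[X] M] [Algebra F M] [IsScalarTower F F[X] M] {g : ι → M}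

lemma exists_pow_mul_mem_spanDegreeLT (hg : Submodule.span F[X] (Set.range g) = ⊤) (z : M) :
    ∃ κ, ∀ n D, ∀ m ∈ spanDegreeLT (F := F) g D,
      z ^ n * m ∈ spanDegreeLT (F := F) g (D + κ * n) := by
  obtain ⟨κ, hκ⟩ := exists_map_mem_spanDegreeLT hg (Algebra.lmul F[X] M z)
  refine ⟨κ, fun n ↦ ?_⟩
  induction n with
  | zero => simp
  | succ n ih =>
    intro D m hm
    rw [pow_succ', mul_assoc, mul_add_one, ← add_assoc]
    exact hκ _ _ (ih D m hm)

/-- The value at `(x, y, x', y')` of the polynomial with coefficients `c`, where the coefficient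
`c ((a, u), (b, v))` belongs to the monomial of exponents `(a, u, b, v)`. -/
def auxiliarySum {R S : Type*} [CommSemiring R] [CommSemiring S] [Algebra R S] {A N d : ℕ}
    (c : (Fin A × Fin d) × (Fin N × Fin d) → R) (x y x' y' : S) : S :=
  ∑ t, c t • (x ^ (t.1.1 : ℕ) * y ^ (t.1.2 : ℕ) * (x' ^ (t.2.1 : ℕ) * y' ^ (t.2.2 : ℕ)))

lemma map_auxiliarySum {R S S' : Type*} [CommSemiring R] [CommSemiring S] [CommSemiring S']
    [Algebra R S] [Algebra R S'] (φ : S →ₐ[R] S') {A N d : ℕ}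
    (c : (Fin A × Fin d) × (Fin N × Fin d) → R) (x y x' y' : S) :
    φ (auxiliarySum c x y x' y') = auxiliarySum c (φ x) (φ y) (φ x') (φ y') := by
  simp only [auxiliarySum, map_sum, map_smul, map_mul, map_pow]

lemma auxiliarySum_pow {p : ℕ} [Fact p.Prime] {S : Type*} [CommRing S] [Algebra (ZMod p) S]
    [CharP S p] {A N d : ℕ} (c : (Fin A × Fin d) × (Fin N × Fin d) → ZMod p) (x y x' y' : S)
    (m : ℕ) : auxiliarySum c x y x' y' ^ p ^ m =
      auxiliarySum c (x ^ p ^ m) (y ^ p ^ m) (x' ^ p ^ m) (y' ^ p ^ m) := by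
  rw [auxiliarySum, sum_pow_char_pow]
  refine sum_congr rfl fun t _ ↦ ?_
  simp only [_root_.smul_pow, ZMod.pow_card_pow, mul_pow, pow_right_comm _ (p ^ m)]

lemma exists_auxiliarySum_eq_zero (hg : Submodule.span F[X] (Set.range g) = ⊤) (y z : M)
    {d N Q : ℕ} (hQ : Fintype.card ι * Q < d * N * d) :
    ∃ A, ∃ c : (Fin A × Fin d) × (Fin N × Fin d) → F, c ≠ 0 ∧
      auxiliarySum c (algebraMap F[X] M X ^ Q) (y ^ Q) (algebraMap F[X] M X) z = 0 := by
  obtain ⟨κ, hκ⟩ := exists_pow_mul_mem_spanDegreeLT hg y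
  obtain ⟨κ', hκ'⟩ := exists_pow_mul_mem_spanDegreeLT hg z
  obtain ⟨D, hD⟩ := exists_mem_spanDegreeLT hg 1
  set R := D + κ' * d + κ * (Q * d) + N
  set A := Fintype.card ι * R + 1 with hA
  have hmem (t : (Fin A × Fin d) × (Fin N × Fin d)) : (algebraMap F[X] M X ^ Q) ^ (t.1.1 : ℕ) *
      (y ^ Q) ^ (t.1.2 : ℕ) * (algebraMap F[X] M X ^ (t.2.1 : ℕ) * z ^ (t.2.2 : ℕ)) ∈
        spanDegreeLT (F := F) g (A * Q + R) := by
    have h := smul_mem_spanDegreeLT (natDegree_X_pow_le (Q * (t.1.1 : ℕ) + t.2.1))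
      (hκ (Q * (t.1.2 : ℕ)) _ _ (hκ' t.2.2 _ _ hD))
    have hz : κ' * (t.2.2 : ℕ) ≤ κ' * d := by gcongr; exact t.2.2.2.le
    have hy : κ * (Q * (t.1.2 : ℕ)) ≤ κ * (Q * d) := by gcongr; exact t.1.2.2.le
    have hX : Q * (t.1.1 : ℕ) ≤ Q * A := by gcongr; exact t.1.1.2.le
    have hX' := t.2.1.2
    convert! spanDegreeLT_mono (?_ : _ ≤ A * Q + R) h using 1
    · rw [Algebra.smul_def, map_pow]
      ring
    · rw [mul_comm A]
      omega
  refine ⟨A, exists_sum_smul_eq_zero_of_mem_spanDegreeLT hmem ?_⟩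
  calc Fintype.card ι * (A * Q + R) = A * (Fintype.card ι * Q) + Fintype.card ι * R := by ring
    _ < A * (Fintype.card ι * Q + 1) := by rw [mul_add_one, hA]; omega
    _ ≤ A * (d * N * d) := by gcongr; exact hQ
    _ = Fintype.card ((Fin A × Fin d) × (Fin N × Fin d)) := by
      simp only [Fintype.card_prod, Fintype.card_fin]; ring

end Algebra

end SpanDegreeLT

section AuxiliaryRelation

open Polynomial Finset

lemma span_range_root_pow {R : Type*} [CommRing R] {g : R[X]} (hg : g.Monic) :
    Submodule.span R (Set.range fun i : Fin g.natDegree ↦ AdjoinRoot.root g ^ (i : ℕ)) = ⊤ := by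
  rw [← (AdjoinRoot.powerBasis' hg).basis.span_eq, PowerBasis.coe_basis]
  rfl

lemma linearIndependent_root_pow {R : Type*} [CommRing R] {g : R[X]} (hg : g.Monic) :
    LinearIndependent R fun i : Fin g.natDegree ↦ AdjoinRoot.root g ^ (i : ℕ) := by
  have := (AdjoinRoot.powerBasis' hg).basis.linearIndependent
  rwa [PowerBasis.coe_basis] at this

lemma span_range_smul_of_span_eq_top {R S M ι κ : Type*} [CommSemiring R] [Semiring S]
    [AddCommMonoid M] [Algebra R S] [Module S M] [Module R M] [IsScalarTower R S M] {b : ι → S}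
    {c : κ → M} (hb : Submodule.span R (Set.range b) = ⊤)
    (hc : Submodule.span S (Set.range c) = ⊤) :
    Submodule.span R (Set.range fun t : ι × κ ↦ b t.1 • c t.2) = ⊤ := by
  rw [← Set.range_smul_range, Submodule.span_smul_of_span_eq_top hb, hc,
    Submodule.restrictScalars_top]

section Secant

variable {F k : Type*} [Field F] [Field k] [Algebra F k] {f : F[X][X]}

/-- The polynomial `(f(x, Z) - f(x, y)) / (Z - y)` over the coordinate ring of the plane curve
`f(x, y) = 0`: its roots are the ordinates of the other points of the curve on the same vertical
line. -/
noncomputable def secantPoly (f : F[X][X]) : (AdjoinRoot f)[X] :=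
  f.map (AdjoinRoot.of f) /ₘ (X - C (AdjoinRoot.root f))

lemma X_sub_C_root_mul_secantPoly (f : F[X][X]) :
    (X - C (AdjoinRoot.root f)) * secantPoly f = f.map (AdjoinRoot.of f) :=
  mul_divByMonic_eq_iff_isRoot.2 (AdjoinRoot.isRoot_root f)

lemma monic_secantPoly (hf : f.Monic) : (secantPoly f).Monic :=
  (monic_X_sub_C (AdjoinRoot.root f)).of_mul_monic_left
    (X_sub_C_root_mul_secantPoly f ▸ hf.map _)

lemma natDegree_secantPoly (hf : f.Monic) (hd : f.natDegree ≠ 0) :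
    (secantPoly f).natDegree = f.natDegree - 1 := by
  have : Nontrivial (AdjoinRoot f) := AdjoinRoot.nontrivial f (degree_ne_of_natDegree_ne hd)
  rw [secantPoly, natDegree_divByMonic _ (monic_X_sub_C _), natDegree_X_sub_C,
    hf.natDegree_map]

lemma exists_algHom_adjoinRoot_secantPoly {x y z : k}
    (hy : (f.map (mapRingHom (algebraMap F k))).evalEval x y = 0)
    (hz : (f.map (mapRingHom (algebraMap F k))).evalEval x z = 0) (hyz : y ≠ z) :
    ∃ φ : AdjoinRoot (secantPoly f) →ₐ[F] k, φ (algebraMap F[X] _ X) = x ∧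
      φ (algebraMap (AdjoinRoot f) _ (AdjoinRoot.root f)) = y ∧ φ (AdjoinRoot.root _) = z := by
  rw [← eval₂_eval₂RingHom_apply] at hy hz
  let φ : AdjoinRoot f →ₐ[F] k := AdjoinRoot.liftAlgHom f (aeval x) y hy
  have hφ (q : F[X]) : φ (AdjoinRoot.of f q) = aeval x q := AdjoinRoot.liftAlgHom_of ..
  have hφy : φ (AdjoinRoot.root f) = y := AdjoinRoot.liftAlgHom_root ..
  have hφz : (secantPoly f).eval₂ φ z = 0 := by
    have h := congrArg (eval₂ (φ : AdjoinRoot f →+* k) z) (X_sub_C_root_mul_secantPoly f)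
    rw [eval₂_map, RingHom.ext (f := (φ : AdjoinRoot f →+* k).comp _) hφ, eval₂_mul, eval₂_sub,
      eval₂_X, eval₂_C, RingHom.coe_coe, hφy] at h
    exact (mul_eq_zero.1 (h.trans hz)).resolve_left (sub_ne_zero.2 hyz.symm)
  refine ⟨AdjoinRoot.liftAlgHom _ φ z hφz, ?_, ?_, AdjoinRoot.liftAlgHom_root ..⟩
  · exact (AdjoinRoot.liftAlgHom_of ..).trans ((hφ X).trans (aeval_X x))
  · exact (AdjoinRoot.liftAlgHom_of ..).trans hφy

-- Over `F[X]`, the coordinate ring of the pairs of distinct points has rank `d * (d - 1)` rather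
-- than `d ^ 2`; this saving is what makes room for a relation.
lemma exists_auxiliarySum_eq_zero_of_ne (k : Type*) [Field k] [Algebra F k] (hf : f.Monic)
    {N Q : ℕ} (hQ : (f.natDegree - 1) * Q < N * f.natDegree) :
    ∃ A, ∃ c : (Fin A × Fin f.natDegree) × (Fin N × Fin f.natDegree) → F, c ≠ 0 ∧
      ∀ x y z : k, (f.map (mapRingHom (algebraMap F k))).evalEval x y = 0 →
        (f.map (mapRingHom (algebraMap F k))).evalEval x z = 0 → y ≠ z →
          auxiliarySum c (x ^ Q) (y ^ Q) x z = 0 := by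
  have hd : f.natDegree ≠ 0 := fun h ↦ by simp [h] at hQ
  obtain ⟨A, c, hc, hsum⟩ := exists_auxiliarySum_eq_zero
    (span_range_smul_of_span_eq_top (span_range_root_pow hf)
      (span_range_root_pow (monic_secantPoly hf)))
    (algebraMap (AdjoinRoot f) _ (AdjoinRoot.root f)) (AdjoinRoot.root (secantPoly f))
    (d := f.natDegree) (N := N) (Q := Q) (by
      rw [Fintype.card_prod, Fintype.card_fin, Fintype.card_fin, natDegree_secantPoly hf hd,
        mul_assoc, mul_assoc]
      gcongr)
  refine ⟨A, c, hc, fun x y z hy hz hyz ↦ ?_⟩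
  obtain ⟨φ, rfl, rfl, rfl⟩ := exists_algHom_adjoinRoot_secantPoly hy hz hyz
  rw [← map_pow φ, ← map_pow φ, ← map_auxiliarySum, hsum, map_zero]

end Secant

section NonVanishing

variable {p : ℕ} [Fact p.Prime] {k : Type*} [Field k] {f : k[X][X]}

lemma linearIndependent_X_pow_mul_root_pow (hf : f.Monic) (A : ℕ) :
    LinearIndependent k fun u : Fin A × Fin f.natDegree ↦
      algebraMap k[X] (AdjoinRoot f) X ^ (u.1 : ℕ) * AdjoinRoot.root f ^ (u.2 : ℕ) := by
  have hX : LinearIndependent k fun a : Fin A ↦ (X : k[X]) ^ (a : ℕ) := by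
    convert! (basisMonomials k).linearIndependent.comp _ Fin.val_injective with a
    simp only [Function.comp_apply, coe_basisMonomials, X_pow_eq_monomial]
  convert! _root_.linearIndependent_smul hX (linearIndependent_root_pow hf) using 2 with u
  rw [Algebra.smul_def, map_pow]

lemma exists_forall_auxiliarySum_ne_zero [IsAlgClosed k] [CharP k p] [Algebra (ZMod p) k]
    (hf : f.Monic) (hirr : Irreducible f) {A N d : ℕ} (hd : f.natDegree = d)
    {c : (Fin A × Fin d) × (Fin N × Fin d) → ZMod p} (hc : c ≠ 0) :
    ∃ m₀ : ℕ, ∀ m ≥ m₀, auxiliarySum c (algebraMap k[X] (AdjoinRoot f) X) (AdjoinRoot.root f)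
      (algebraMap k[X] (AdjoinRoot f) X ^ p ^ m) (AdjoinRoot.root f ^ p ^ m) ≠ 0 := by
  subst hd
  have : IsDomain (AdjoinRoot f) := AdjoinRoot.isDomain_of_prime hirr.prime
  have : Module.Finite k[X] (AdjoinRoot f) := hf.finite_adjoinRoot
  have : Module.Free k[X] (AdjoinRoot f) := hf.free_adjoinRoot
  set K := FractionRing (AdjoinRoot f)
  let _ : Algebra (FractionRing k[X]) K := FractionRing.liftAlgebra k[X] K
  have : FiniteDimensional (FractionRing k[X]) K :=
    .of_isLocalization k[X] (AdjoinRoot f) (nonZeroDivisors k[X])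
  have : CharP (FractionRing k[X]) p := charP_of_injective_algebraMap' k p
  have : CharP K p := charP_of_injective_algebraMap' k p
  have : IsScalarTower k (FractionRing k[X]) K := .of_algebraMap_eq fun x ↦ by
    rw [IsScalarTower.algebraMap_apply k k[X] (FractionRing k[X]),
      ← IsScalarTower.algebraMap_apply k[X], ← IsScalarTower.algebraMap_apply]
  have hinj : Function.Injective (IsScalarTower.toAlgHom k (AdjoinRoot f) K) :=
    IsFractionRing.injective (AdjoinRoot f) K
  have hli (A : ℕ) := (linearIndependent_X_pow_mul_root_pow hf A).map_injOn
    (IsScalarTower.toAlgHom k (AdjoinRoot f) K).toLinearMap hinj.injOn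
  obtain ⟨m₀, hm₀⟩ := exists_forall_sum_smul_mul_pow_ne_zero (p := p)
    (linearIndependent_of_le_fieldRange
      (perfectCore_le_of_finiteDimensional (perfectCore_fractionRing_le (k := k))) (hli A))
    ((hli N).restrict_scalars' (ZMod p)) hc
  refine ⟨m₀, fun m hm h ↦ hm₀ m hm ?_⟩
  have hK := congrArg (IsScalarTower.toAlgHom (ZMod p) (AdjoinRoot f) K) h
  rw [map_zero, auxiliarySum, map_sum] at hK
  rw [← hK]
  refine sum_congr rfl fun t _ ↦ ?_
  rw [map_smul, map_mul, ← pow_right_comm, ← pow_right_comm _ _ (p ^ m), ← mul_pow, map_pow]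
  rfl

end NonVanishing

end AuxiliaryRelation

section RationalPoints

open Polynomial Finset

lemma exists_mul_pow_lt_mul_and_add_eq_pow {p : ℕ} (hp : 1 < p) (κ : ℕ) {d : ℕ} (hd : d ≠ 0) :
    ∃ μ N, (d - 1) * p ^ μ < N * d ∧ N + κ * d + 1 = p ^ μ := by
  obtain ⟨μ, hμ⟩ := pow_unbounded_of_one_lt (d * (κ * d + 1)) hp
  obtain ⟨e, rfl⟩ := Nat.exists_eq_succ_of_ne_zero hd
  obtain ⟨N, hN⟩ := Nat.exists_eq_add_of_le' ((Nat.le_mul_of_pos_left _ e.succ_pos).trans hμ.le)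
  refine ⟨μ, N, ?_, hN.symm⟩
  rw [Nat.succ_sub_one]
  nlinarith

variable {k : Type*} [Field k]

section Separable

variable [IsAlgClosed k]

lemma eq_zero_of_degree_lt_of_separable {g h : k[X]} (hg : g.Separable) (hdeg : h.degree < g.degree)
    (hroot : ∀ x, g.eval x = 0 → h.eval x = 0) : h = 0 := by
  by_contra hh
  refine hh (eq_zero_of_dvd_of_degree_lt ?_ hdeg)
  refine (IsAlgClosed.splits g).dvd_of_roots_le_roots hg.ne_zero ?_
  refine (Multiset.le_iff_subset (nodup_roots hg)).2 fun x hx ↦ ?_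
  exact (mem_roots hh).2 (hroot x (isRoot_of_mem_roots hx))

lemma eq_zero_of_forall_root_sum_mul_pow_eq_zero {g : k[X]} (hg : g.Separable)
    {v : Fin g.natDegree → k} (hv : ∀ y, g.eval y = 0 → ∑ i, v i * y ^ (i : ℕ) = 0) : v = 0 := by
  classical
  refine injective_ofFn _ ((eq_zero_of_degree_lt_of_separable hg ?_ fun y hy ↦ ?_).trans
    (ofFn_zero _).symm)
  · exact (ofFn_degree_lt v).trans_eq (degree_eq_natDegree hg.ne_zero).symm
  · simp only [ofFn_eq_sum_monomial, eval_finsetSum, eval_monomial, hv y hy]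

lemma separable_map_evalRingHom {f : k[X][X]} {x : k}
    (h : ∀ y, f.evalEval x y = 0 → (derivative f).evalEval x y ≠ 0) :
    (f.map (evalRingHom x)).Separable := by
  rw [Separable, isCoprime_iff_aeval_ne_zero_of_isAlgClosed k k]
  intro y
  simp only [coe_aeval_eq_eval, derivative_map, map_evalRingHom_eval]
  exact or_iff_not_imp_left.2 fun hy ↦ h y (not_not.1 hy)

lemma eq_zero_of_mem_spanDegreeLT {p : ℕ} [Fact p.Prime] [CharP k p] {n : ℕ} (hn : n ≠ 0)
    {f : k[X][X]} (hf : f.Monic) {S : k[X]} (hS : S ≠ 0) {D : ℕ} (hD : D + S.natDegree ≤ p ^ n)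
    {m : AdjoinRoot f}
    (hm : m ∈ spanDegreeLT (F := k) (fun i : Fin f.natDegree ↦ AdjoinRoot.root f ^ (i : ℕ)) D)
    (hsep : ∀ x, S.eval x ≠ 0 → (f.map (evalRingHom x)).Separable)
    (hzero : ∀ x, x ^ p ^ n = x → S.eval x ≠ 0 → ∀ y (h : f.evalEval x y = 0),
      AdjoinRoot.evalEval h m = 0) : m = 0 := by
  have hp := (Fact.out : p.Prime).one_lt
  obtain ⟨P, hP, rfl⟩ := mem_spanDegreeLT.1 hm
  refine sum_eq_zero fun i _ ↦ ?_
  suffices P i * S = 0 by rw [(mul_eq_zero.1 this).resolve_right hS, zero_smul]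
  refine eq_zero_of_degree_lt_of_separable
    (galois_poly_separable p (p ^ n) (dvd_pow_self p hn) : (X ^ p ^ n - X : k[X]).Separable) ?_
    fun x hx ↦ ?_
  · rw [degree_mul, degree_eq_natDegree hS, degree_eq_natDegree
      (FiniteField.X_pow_card_pow_sub_X_ne_zero k hn hp),
      FiniteField.X_pow_card_pow_sub_X_natDegree_eq k hn hp]
    rcases eq_or_ne (P i) 0 with h0 | h0
    · rw [h0, degree_zero, WithBot.bot_add]
      exact bot_lt_iff_ne_bot.2 (WithBot.natCast_ne_bot _)
    · have := (natDegree_lt_iff_degree_lt h0).2 (hP i)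
      rw [degree_eq_natDegree h0]
      exact mod_cast by omega
  · rw [eval_sub, eval_pow, eval_X, sub_eq_zero] at hx
    rw [eval_mul, mul_eq_zero, or_iff_not_imp_right]
    intro hSx
    have hd := hf.natDegree_map (evalRingHom x)
    have := eq_zero_of_forall_root_sum_mul_pow_eq_zero (hsep x hSx)
      (v := fun j ↦ (P (Fin.cast hd j)).eval x) fun y hy ↦ ?_
    · exact congrFun this (Fin.cast hd.symm i)
    · rw [map_evalRingHom_eval] at hy
      have := hzero x hx hSx y hy
      simp only [map_sum, Algebra.smul_def, map_mul, map_pow, AdjoinRoot.algebraMap_eq,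
        AdjoinRoot.evalEval, AdjoinRoot.lift_of, AdjoinRoot.lift_root] at this
      rw [← (finCongr hd).sum_comp] at this
      exact this

end Separable

-- `w` is a unit of the function field, so its norm to `k[X]` may serve as `S`.
lemma exists_ne_zero_forall_evalEval_ne_zero {f w : k[X][X]} (hf : f.Monic) (hirr : Irreducible f)
    (hw : ¬ f ∣ w) :
    ∃ S : k[X], S ≠ 0 ∧ ∀ x y, f.evalEval x y = 0 → S.eval x ≠ 0 → w.evalEval x y ≠ 0 := by
  have : IsDomain (AdjoinRoot f) := AdjoinRoot.isDomain_of_prime hirr.prime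
  have : Module.Finite k[X] (AdjoinRoot f) := hf.finite_adjoinRoot
  have hw0 : AdjoinRoot.mk f w ≠ 0 := fun h ↦ hw (AdjoinRoot.mk_eq_zero.1 h)
  have hcomap := Ideal.comap_ne_bot_of_integral_mem (R := k[X]) hw0
    (Ideal.mem_span_singleton_self (AdjoinRoot.mk f w)) (Algebra.IsIntegral.isIntegral _)
  obtain ⟨S, hS, hS0⟩ := (Submodule.ne_bot_iff _).1 hcomap
  obtain ⟨b, hb⟩ := Ideal.mem_span_singleton.1 (Ideal.mem_comap.1 hS)
  refine ⟨S, hS0, fun x y h hSx hwx ↦ hSx ?_⟩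
  have := congrArg (AdjoinRoot.evalEval h) hb
  rw [map_mul, AdjoinRoot.evalEval_mk, hwx, zero_mul] at this
  rw [← this]
  exact ((AdjoinRoot.evalEval_mk h (C S)).trans (evalEval_C ..)).symm

lemma exists_auxiliarySum_mem_spanDegreeLT {F : Type*} [Field F] [Algebra F k] {f : k[X][X]}
    (hf : f.Monic) :
    ∃ κ D, ∀ {A N d : ℕ} (c : (Fin A × Fin d) × (Fin N × Fin d) → F) (q : ℕ),
      auxiliarySum c (algebraMap k[X] (AdjoinRoot f) X) (AdjoinRoot.root f)
        (algebraMap k[X] (AdjoinRoot f) X ^ q) (AdjoinRoot.root f ^ q) ∈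
      spanDegreeLT (F := k) (fun i : Fin f.natDegree ↦ AdjoinRoot.root f ^ (i : ℕ))
        (D + κ * (d + q * d) + (A + q * N)) := by
  obtain ⟨κ, hκ⟩ := exists_pow_mul_mem_spanDegreeLT (F := k) (span_range_root_pow hf)
    (AdjoinRoot.root f)
  obtain ⟨D, hD⟩ := exists_mem_spanDegreeLT (F := k) (span_range_root_pow hf) 1
  refine ⟨κ, D, fun {A N d} c q ↦ Submodule.sum_mem _ fun t _ ↦ Submodule.smul_of_tower_mem _ _ ?_⟩
  have h := smul_mem_spanDegreeLT (natDegree_X_pow_le ((t.1.1 : ℕ) + q * t.2.1))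
    (hκ ((t.1.2 : ℕ) + q * t.2.2) D _ hD)
  convert! spanDegreeLT_mono (?_ : _ ≤ D + κ * (d + q * d) + (A + q * N)) h using 1
  · rw [Algebra.smul_def, map_pow]
    ring
  · gcongr
    exacts [t.1.2.2.le, t.2.2.2.le, t.1.1.2.le, t.2.1.2.le]

variable {p : ℕ} [Fact p.Prime] [Algebra (ZMod p) k]

lemma evalEval_auxiliarySum {f : k[X][X]} {x y : k} (h : f.evalEval x y = 0) {A N d : ℕ}
    (c : (Fin A × Fin d) × (Fin N × Fin d) → ZMod p) (q : ℕ) :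
    AdjoinRoot.evalEval h (auxiliarySum c (algebraMap k[X] (AdjoinRoot f) X) (AdjoinRoot.root f)
      (algebraMap k[X] (AdjoinRoot f) X ^ q) (AdjoinRoot.root f ^ q)) =
      auxiliarySum c x y (x ^ q) (y ^ q) := by
  let φ : AdjoinRoot f →ₐ[ZMod p] k :=
    { AdjoinRoot.evalEval h with
      commutes' := RingHom.congr_fun (Subsingleton.elim
        ((AdjoinRoot.evalEval h).comp (algebraMap (ZMod p) (AdjoinRoot f))) (algebraMap _ k)) }
  have hx : φ (algebraMap k[X] (AdjoinRoot f) X) = x := (AdjoinRoot.evalEval_mk h (C X)).trans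
    ((evalEval_C ..).trans eval_X)
  have hy : φ (AdjoinRoot.root f) = y := (AdjoinRoot.evalEval_mk h X).trans (evalEval_X ..)
  calc
    _ = φ _ := rfl
    _ = _ := by rw [map_auxiliarySum, map_pow, map_pow, hx, hy]

variable [CharP k p]

lemma evalEval_pow_char_pow_eq_zero {f : (ZMod p)[X][X]} {x y : k}
    (h : (f.map (mapRingHom (algebraMap (ZMod p) k))).evalEval x y = 0) (n : ℕ) :
    (f.map (mapRingHom (algebraMap (ZMod p) k))).evalEval (x ^ p ^ n) (y ^ p ^ n) = 0 := by
  have hF : (iterateFrobenius k p n).comp (algebraMap (ZMod p) k) = algebraMap (ZMod p) k :=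
    Subsingleton.elim _ _
  have := map_mapRingHom_evalEval (iterateFrobenius k p n)
    (f.map (mapRingHom (algebraMap (ZMod p) k))) x y
  rwa [h, map_zero, Polynomial.map_map, mapRingHom_comp, hF] at this

lemma auxiliarySum_eq_zero_of_pow_eq {A N d m μ : ℕ}
    {c : (Fin A × Fin d) × (Fin N × Fin d) → ZMod p} {x y : k} (hx : x ^ p ^ (m + μ) = x)
    (h : auxiliarySum c (x ^ p ^ μ) (y ^ p ^ μ) x (y ^ p ^ (m + μ)) = 0) :
    auxiliarySum c x y (x ^ p ^ m) (y ^ p ^ m) = 0 := by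
  refine eq_zero_of_pow_eq_zero (n := p ^ μ) ?_
  rw [auxiliarySum_pow, ← pow_mul, ← pow_mul, ← pow_add, hx, h]

-- Stepanov's method: if the conclusion fails for `n`, an auxiliary function on the curve vanishes
-- at more points with abscissa in the field of order `p ^ n` than its degree allows.
theorem eventually_exists_evalEval_eq_zero_ne_zero [IsAlgClosed k] {f₀ : (ZMod p)[X][X]}
    (hf₀ : f₀.Monic) {f h : k[X][X]} (hf : f₀.map (mapRingHom (algebraMap (ZMod p) k)) = f)
    (hirr : Irreducible f) (hder : derivative f ≠ 0) (hh : ¬ f ∣ h) :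
    ∀ᶠ n in Filter.atTop, ∃ x y : k, x ^ p ^ n = x ∧ y ^ p ^ n = y ∧ f.evalEval x y = 0 ∧
      h.evalEval x y ≠ 0 := by
  have hp := (Fact.out : p.Prime).one_lt
  have hm : f.Monic := hf ▸ hf₀.map _
  have hd : f.natDegree = f₀.natDegree := hf ▸ hf₀.natDegree_map _
  obtain ⟨κ, D, hmem⟩ := exists_auxiliarySum_mem_spanDegreeLT (F := ZMod p) hm
  have hd0 : f.natDegree ≠ 0 := mt derivative_of_natDegree_zero hder
  have hfd : ¬ f ∣ derivative f := fun hdvd ↦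
    hder (eq_zero_of_dvd_of_natDegree_lt hdvd (natDegree_derivative_lt hd0))
  obtain ⟨S, hS, hSf⟩ := exists_ne_zero_forall_evalEval_ne_zero hm hirr
    (fun hdvd ↦ (hirr.prime.dvd_or_dvd hdvd).elim hfd hh : ¬ f ∣ derivative f * h)
  obtain ⟨μ, N, hμ, hN⟩ := exists_mul_pow_lt_mul_and_add_eq_pow hp κ (hd ▸ hd0)
  obtain ⟨A, c, hc, hrel⟩ := exists_auxiliarySum_eq_zero_of_ne k hf₀ hμ
  obtain ⟨m₀, hm₀⟩ := exists_forall_auxiliarySum_ne_zero hm hirr hd hc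
  obtain ⟨m₁, hm₁⟩ := pow_unbounded_of_one_lt
    (D + κ * f₀.natDegree + A + S.natDegree) hp
  filter_upwards [Filter.eventually_ge_atTop (max m₀ (max m₁ 1) + μ)] with n hn
  obtain ⟨m, rfl⟩ : ∃ m, n = m + μ := ⟨n - μ, by omega⟩
  by_contra! hcon
  refine hm₀ m (by omega) (eq_zero_of_mem_spanDegreeLT (p := p) (n := m + μ) (by omega) hm hS ?_
    (hmem c (p ^ m)) (fun x hx ↦ ?_) fun x hx hSx y hy ↦ ?_)
  · rw [pow_add, ← hN]
    have : p ^ m₁ ≤ p ^ m := Nat.pow_le_pow_right hp.le (by omega)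
    linarith
  · refine separable_map_evalRingHom fun y hy h0 ↦ hSf x y hy hx ?_
    rw [evalEval_mul, h0, zero_mul]
  · rw [evalEval_auxiliarySum]
    refine auxiliarySum_eq_zero_of_pow_eq hx (hrel x y _ (hf ▸ hy) ?_ fun hy' ↦ ?_)
    · have := evalEval_pow_char_pow_eq_zero (hf ▸ hy) (m + μ)
      rwa [hx] at this
    · refine hSf x y hy hSx ?_
      rw [evalEval_mul, hcon x y hx hy'.symm hy, mul_zero]

end RationalPoints

section Descent

variable {σ K L : Type*} [Field K] [Field L]

lemma exists_apply_eq_of_pow_card_eq [Fintype K] (φ : K →+* L) {x : L}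
    (hx : x ^ Fintype.card K = x) : ∃ z, φ z = x := by
  have hne := FiniteField.X_pow_card_sub_X_ne_zero K (Fintype.one_lt_card (α := K))
  have hsplits : (Polynomial.X ^ Fintype.card K - Polynomial.X : Polynomial K).Splits := by
    rw [Polynomial.splits_iff_card_roots, FiniteField.roots_X_pow_card_sub_X,
      FiniteField.X_pow_card_sub_X_natDegree_eq K Fintype.one_lt_card]
    rfl
  have hmem : x ∈ ((Polynomial.X ^ Fintype.card K - Polynomial.X : Polynomial K).map φ).roots := by
    rw [Polynomial.mem_roots (Polynomial.map_ne_zero hne)]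
    simp [hx]
  rw [hsplits.roots_map φ] at hmem
  obtain ⟨z, -, hz⟩ := Multiset.mem_map.1 hmem
  exact ⟨z, hz⟩

lemma exists_associated_map_of_associated_map_frobenius {p : ℕ} [Fact p.Prime] [CharP L p]
    (φ : ZMod p →+* L) {a : MvPolynomial σ L} (ha : a ≠ 0)
    (h : Associated (MvPolynomial.map (frobenius L p) a) a) :
    ∃ a₀, Associated a (MvPolynomial.map φ a₀) := by
  obtain ⟨m, hm⟩ := MvPolynomial.ne_zero_iff.1 ha
  obtain ⟨u, hu⟩ := h.symm
  obtain ⟨c, -, hc⟩ := MvPolynomial.isUnit_iff_eq_C_of_isReduced.1 u.isUnit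
  have hcoeff (s) : a.coeff s ^ p = a.coeff s * c := by
    rw [← frobenius_def, ← MvPolynomial.coeff_map, ← hu, hc, mul_comm a, MvPolynomial.coeff_C_mul,
      mul_comm]
  have hrange : MvPolynomial.C (a.coeff m)⁻¹ * a ∈ Set.range (MvPolynomial.map φ) := by
    rw [MvPolynomial.mem_range_map_iff_coeffs_subset]
    intro x hx
    obtain ⟨s, -, rfl⟩ := MvPolynomial.mem_coeffs_iff.1 (Finset.mem_coe.1 hx)
    refine exists_apply_eq_of_pow_card_eq φ ?_
    have hc0 : c ≠ 0 := fun h0 ↦ pow_ne_zero p hm (by rw [hcoeff, h0, mul_zero])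
    rw [MvPolynomial.coeff_C_mul, ZMod.card, mul_pow, inv_pow, hcoeff, hcoeff]
    field_simp
  obtain ⟨a₀, ha₀⟩ := hrange
  refine ⟨a₀, ha₀ ▸ ?_⟩
  exact (associated_unit_mul_left _ _ ((isUnit_iff_ne_zero.2 (inv_ne_zero hm)).map _)).symm

end Descent

section Bivariate

open Polynomial

lemma equivMvPolynomial_map {R S : Type*} [CommRing R] [CommRing S] (φ : R →+* S) (f : R[X][X]) :
    Bivariate.equivMvPolynomial S (f.map (mapRingHom φ)) =
      MvPolynomial.map φ (Bivariate.equivMvPolynomial R f) := by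
  suffices h : (Bivariate.equivMvPolynomial S).toRingEquiv.toRingHom.comp
      (mapRingHom (mapRingHom φ)) =
        (MvPolynomial.map φ).comp (Bivariate.equivMvPolynomial R).toRingEquiv.toRingHom from
    RingHom.congr_fun h f
  ext <;> simp

lemma eval_equivMvPolynomial {R : Type*} [CommRing R] (x y : R) (f : R[X][X]) :
    MvPolynomial.eval ![x, y] (Bivariate.equivMvPolynomial R f) = f.evalEval x y := by
  suffices h : (MvPolynomial.eval ![x, y]).comp (Bivariate.equivMvPolynomial R : R[X][X] →+* _) =
      evalEvalRingHom x y from RingHom.congr_fun h f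
  ext <;> simp

lemma monic_of_map_dvd {R S : Type*} [Field R] [Field S] [Subsingleton Rˣ] (φ : R →+* S)
    {f : R[X][X]} {g : S[X][X]} (h : f.map (mapRingHom φ) ∣ g) (hg : g.leadingCoeff = 1) :
    f.Monic := by
  have hunit : IsUnit (f.leadingCoeff.map φ) := by
    rw [← coe_mapRingHom, ← leadingCoeff_map_of_injective (map_injective φ φ.injective)]
    exact isUnit_of_dvd_one (hg ▸ leadingCoeff_dvd_leadingCoeff h)
  obtain ⟨r, hr, hrf⟩ := isUnit_iff.1 ((isUnit_map φ).1 hunit)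
  rw [Monic, ← hrf, isUnit_iff_eq_one.1 hr, C_1]

lemma leadingCoeff_X_pow_add_X_add_C_pow_add_C {R : Type*} [CommRing R] [CharP R 2] {t : ℕ}
    (ht : 1 < t) (hodd : Odd t) {r : R} (hr : r ≠ 0) (s : R) :
    (X ^ t + (X + C r) ^ t + C s).leadingCoeff = r := by
  have hcoeff (j) (hj : t - 1 ≤ j) :
      (X ^ t + (X + C r) ^ t + C s).coeff j = if j = t - 1 then r else 0 := by
    have hj0 : j ≠ 0 := by omega
    rw [coeff_add, coeff_add, coeff_X_add_C_pow, coeff_X_pow, coeff_C_of_ne_zero hj0, add_zero]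
    rcases hj.eq_or_lt with rfl | hj
    · rw [if_neg (by omega), if_pos rfl, Nat.sub_sub_self ht.le, pow_one, Nat.choose_symm ht.le,
        Nat.choose_one_right, natCast_eq_one_of_odd hodd, zero_add, mul_one]
    · rw [if_neg hj.ne']
      rcases (show t ≤ j by omega).eq_or_lt with rfl | hj
      · simp [CharTwo.add_self_eq_zero]
      · simp [hj.ne', Nat.choose_eq_zero_of_lt hj]
  have hdeg : (X ^ t + (X + C r) ^ t + C s).natDegree = t - 1 := by
    refine le_antisymm (natDegree_le_iff_coeff_eq_zero.2 fun j hj ↦ ?_)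
      (le_natDegree_of_ne_zero ?_)
    · rw [hcoeff j hj.le, if_neg hj.ne']
    · rwa [hcoeff _ le_rfl, if_pos rfl]
  rw [leadingCoeff, hdeg, hcoeff _ le_rfl, if_pos rfl]

theorem eventually_exists_eval_eq_zero_ne_zero {p : ℕ} [Fact p.Prime] {k : Type*} [Field k]
    [CharP k p] [Algebra (ZMod p) k] [IsAlgClosed k] {a₀ : MvPolynomial (Fin 2) (ZMod p)}
    (ha₀ : ((Bivariate.equivMvPolynomial (ZMod p)).symm a₀).Monic) {a h : MvPolynomial (Fin 2) k}
    (ha : MvPolynomial.map (algebraMap (ZMod p) k) a₀ = a) (hirr : Irreducible a)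
    (hder : MvPolynomial.pderiv 1 a ≠ 0) (hh : ¬ a ∣ h) :
    ∀ᶠ n in Filter.atTop, ∃ P : Fin 2 → k, (∀ j, P j ^ p ^ n = P j) ∧
      MvPolynomial.eval P a = 0 ∧ MvPolynomial.eval P h ≠ 0 := by
  let e := Bivariate.equivMvPolynomial k
  have hmap : ((Bivariate.equivMvPolynomial (ZMod p)).symm a₀).map
      (mapRingHom (algebraMap (ZMod p) k)) = e.symm a := by
    rw [AlgEquiv.eq_symm_apply, equivMvPolynomial_map, AlgEquiv.apply_symm_apply, ha]
  have hder' : derivative (e.symm a) ≠ 0 := fun h0 ↦ hder <| by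
    rw [← e.apply_symm_apply a, Bivariate.pderiv_one_equivMvPolynomial, h0, map_zero]
  filter_upwards [eventually_exists_evalEval_eq_zero_ne_zero ha₀ hmap
    ((MulEquiv.irreducible_iff e.symm).2 hirr) hder' (mt (map_dvd_iff e.symm).1 hh)]
    with n ⟨x, y, hx, hy, hxy, hxyh⟩
  rw [← eval_equivMvPolynomial, e.apply_symm_apply] at hxy hxyh
  exact ⟨![x, y], Fin.forall_fin_two.2 ⟨hx, hy⟩, hxy, hxyh⟩

end Bivariate

section CodewordZeros

open Polynomial

local notation "xx" => MvPolynomial.X 0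
local notation "yy" => MvPolynomial.X 1

section NotDvd

variable {R : Type*} [CommRing R] [Nontrivial R] [CharP R 2] {t : ℕ}

lemma X_pow_add_one_add_X_add_one_pow_ne_zero (ht : 1 < t) (hodd : Odd t) :
    (X ^ t + 1 + (X + 1) ^ t : R[X]) ≠ 0 := by
  intro h
  have := congrArg (coeff · 1) h
  simp [coeff_X_add_one_pow, coeff_one, coeff_X_pow, natCast_eq_one_of_odd hodd, ht.ne] at this

lemma not_dvd_codewordPoly_of_aeval_eq_zero (ht : 1 < t) (hodd : Odd t)
    {q : MvPolynomial (Fin 2) R} {u v : R[X]} (hq : MvPolynomial.aeval ![u, v] q = 0)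
    (huv : u ^ t + v ^ t + 1 + (u + v + 1) ^ t = X ^ t + 1 + (X + 1) ^ t) :
    ¬ q ∣ codewordPoly R t := by
  rintro ⟨b, hb⟩
  have := congrArg (MvPolynomial.aeval ![u, v]) hb
  rw [map_mul, hq, zero_mul] at this
  refine X_pow_add_one_add_X_add_one_pow_ne_zero (R := R) ht hodd ?_
  simpa [codewordPoly, huv] using this

lemma not_X_zero_dvd_codewordPoly (ht : 1 < t) (hodd : Odd t) : ¬ xx ∣ codewordPoly R t :=
  not_dvd_codewordPoly_of_aeval_eq_zero ht hodd (u := 0) (v := X) (by simp)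
    (by simp [hodd.pos.ne'])

lemma not_X_one_dvd_codewordPoly (ht : 1 < t) (hodd : Odd t) : ¬ yy ∣ codewordPoly R t :=
  not_dvd_codewordPoly_of_aeval_eq_zero ht hodd (u := X) (v := 0) (by simp)
    (by simp [hodd.pos.ne'])

lemma not_X_zero_add_X_one_add_one_dvd_codewordPoly (ht : 1 < t) (hodd : Odd t) :
    ¬ xx + yy + 1 ∣ codewordPoly R t := by
  have h : X + (X + 1) + 1 = (0 : R[X]) := by
    linear_combination (X + 1 : R[X]) * (CharTwo.two_eq_zero : (2 : R[X]) = 0)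
  refine not_dvd_codewordPoly_of_aeval_eq_zero ht hodd (u := X) (v := X + 1) (by simp [h]) ?_
  rw [h, zero_pow hodd.pos.ne']
  ring

end NotDvd

variable {k : Type*} [Field k]

lemma prime_X_zero_add_X_one_add_one : Prime (xx + yy + 1 : MvPolynomial (Fin 2) k) := by
  simpa [linearForm] using prime_linearForm_add_C (a := (1 : k)) (b := 1) (by simp) 1

/-- The product of the linear polynomials whose zeros `(x, y)` are the degenerate quadruples
`x, y, 1, x + y + 1`, those in which two entries coincide or an entry vanishes. -/
noncomputable def degeneracyPoly (k : Type*) [CommRing k] : MvPolynomial (Fin 2) k :=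
  lineProduct k * (xx * yy * (xx + yy + 1))

variable [CharP k 2] {t : ℕ}

lemma isRelPrime_degeneracyPoly (ht : 1 < t) (hodd : Odd t) {G : MvPolynomial (Fin 2) k}
    (hG : codewordPoly k t = lineProduct k * G) : IsRelPrime (degeneracyPoly k) G := by
  have hline : IsRelPrime (lineProduct k) G :=
    (squarefree_mul_iff.1 (hG ▸ squarefree_codewordPoly ht hodd)).1
  have hGdvd : G ∣ codewordPoly k t := hG ▸ dvd_mul_left _ _
  have hirr {q : MvPolynomial (Fin 2) k} (hq : Prime q) (hqt : ¬ q ∣ codewordPoly k t) :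
      IsRelPrime q G := hq.irreducible.isRelPrime_iff_not_dvd.2 (mt (·.trans hGdvd) hqt)
  exact hline.mul_left (((hirr MvPolynomial.X_prime (not_X_zero_dvd_codewordPoly ht hodd)).mul_left
    (hirr MvPolynomial.X_prime (not_X_one_dvd_codewordPoly ht hodd))).mul_left
    (hirr prime_X_zero_add_X_one_add_one (not_X_zero_add_X_one_add_one_dvd_codewordPoly ht hodd)))

-- The `y`-derivative of the polynomial is the `2 ^ i`-th power of `y ^ l + (x + y + 1) ^ l`, and
-- eliminating `x + y + 1` between the latter and its own derivative leaves `y ^ (l - 1) * (x + 1)`.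
lemma pderiv_one_ne_zero_of_dvd_codewordPoly {i l : ℕ} (hi : 1 ≤ i) (hl : Odd l)
    {a : MvPolynomial (Fin 2) k} (ha : Prime a) (haF : a ∣ codewordPoly k (2 ^ i * l + 1))
    (hx : ¬ a ∣ xx + 1) (hy : ¬ a ∣ yy) : MvPolynomial.pderiv 1 a ≠ 0 := by
  intro h
  have hodd := odd_two_pow_mul_add_one hi l
  have dvd_pderiv {w} (hw : a ∣ w) : a ∣ MvPolynomial.pderiv 1 w := by
    obtain ⟨b, rfl⟩ := hw
    simp [Derivation.leibniz, h]
  have hsum : MvPolynomial.pderiv (1 : Fin 2) (xx + yy + 1 : MvPolynomial (Fin 2) k) = 1 := by simp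
  have hF : MvPolynomial.pderiv 1 (codewordPoly k (2 ^ i * l + 1)) =
      (yy ^ l + (xx + yy + 1) ^ l) ^ 2 ^ i := by
    simp only [codewordPoly, map_add, derivation_pow_of_odd _ _ hodd]
    rw [← map_add, ← map_add, hsum, add_pow_char_pow, ← pow_mul, ← pow_mul]
    simp [mul_comm l]
  have hdvd := ha.dvd_of_dvd_pow (hF ▸ dvd_pderiv haF)
  have hdvd' := dvd_pderiv hdvd
  rw [map_add, derivation_pow_of_odd _ _ hl, derivation_pow_of_odd _ _ hl, hsum,
    MvPolynomial.pderiv_X_self] at hdvd'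
  have key : a ∣ yy ^ (l - 1) * (xx + 1) := by
    obtain ⟨m, rfl⟩ : ∃ m, l = m + 1 := ⟨l - 1, by have := hl.pos; omega⟩
    rw [Nat.add_sub_cancel] at hdvd' ⊢
    convert! dvd_add hdvd (hdvd'.mul_left (xx + yy + 1)) using 1
    linear_combination (-yy ^ m * yy - (xx + yy + 1) ^ (m + 1)) *
      (CharTwo.two_eq_zero : (2 : MvPolynomial (Fin 2) k) = 0)
  exact (ha.dvd_or_dvd key).elim (fun h ↦ hy (ha.dvd_of_dvd_pow h)) hx

lemma leadingCoeff_equivMvPolynomial_symm (ht : 1 < t) (hodd : Odd t)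
    {G : MvPolynomial (Fin 2) k} (hG : codewordPoly k t = lineProduct k * G) :
    ((Bivariate.equivMvPolynomial k).symm G).leadingCoeff = 1 := by
  let e := (Bivariate.equivMvPolynomial k).symm
  have hX : (X + 1 : k[X]) ≠ 0 := X_add_C_ne_zero 1
  have hF : e (codewordPoly k t) = X ^ t + (X + C (X + 1)) ^ t + C (X ^ t + 1) := by
    simp only [e, codewordPoly, map_add, map_pow, map_one, Bivariate.equivMvPolynomial_symm_X_0,
      Bivariate.equivMvPolynomial_symm_X_1]
    ring
  have hL : e (lineProduct k) = C (X + 1) * (X + C 1) * (X + C X) := by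
    simp only [e, lineProduct, map_add, map_mul, map_one, Bivariate.equivMvPolynomial_symm_X_0,
      Bivariate.equivMvPolynomial_symm_X_1]
    ring
  have := congrArg leadingCoeff (congrArg e hG)
  rw [hF, leadingCoeff_X_pow_add_X_add_C_pow_add_C ht hodd hX, map_mul, hL, leadingCoeff_mul,
    leadingCoeff_mul, leadingCoeff_mul, leadingCoeff_C, leadingCoeff_X_add_C,
    leadingCoeff_X_add_C, mul_one, mul_one] at this
  exact mul_left_cancel₀ hX (this.symm.trans (mul_one _).symm)

end CodewordZeros

section Quadruples

lemma exists_eq_two_pow_mul_add_one_of_not_gold_of_not_kasamiWelch {t : ℕ} (ht : 3 ≤ t)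
    (hodd : Odd t) (hgold : ¬ ∃ i : ℕ, 1 ≤ i ∧ t = 2 ^ i + 1)
    (hkw : ¬ ∃ i : ℕ, 1 ≤ i ∧ t = 4 ^ i - 2 ^ i + 1) :
    ∃ i l, t = 2 ^ i * l + 1 ∧ 1 ≤ i ∧ Odd l ∧ 3 ≤ l ∧ l ≠ 2 ^ i - 1 := by
  obtain ⟨i, l, hl, hil⟩ := Nat.exists_eq_two_pow_mul_odd (n := t - 1) (by omega)
  obtain rfl : t = 2 ^ i * l + 1 := by omega
  have hi : 1 ≤ i := by
    by_contra h
    obtain rfl : i = 0 := by omega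
    rw [pow_zero, one_mul] at hodd
    exact Nat.not_odd_iff_even.2 hl.add_one hodd
  have hl1 : l ≠ 1 := by
    rintro rfl
    exact hgold ⟨i, hi, by rw [mul_one]⟩
  refine ⟨i, l, rfl, hi, hl, by obtain ⟨m, rfl⟩ := hl; omega, ?_⟩
  rintro rfl
  exact hkw ⟨i, hi, by rw [Nat.mul_sub, mul_one, ← mul_pow]; norm_num⟩

lemma exists_distinct_ne_zero_add_eq_zero_of_eval_codewordPoly {K : Type*} [Field K] [CharP K 2]
    {t : ℕ} {P : Fin 2 → K} (h0 : MvPolynomial.eval P (codewordPoly K t) = 0)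
    (hne : MvPolynomial.eval P (degeneracyPoly K) ≠ 0) :
    ∃ α β γ δ : K, α ≠ 0 ∧ β ≠ 0 ∧ γ ≠ 0 ∧ δ ≠ 0 ∧
      α ≠ β ∧ α ≠ γ ∧ α ≠ δ ∧ β ≠ γ ∧ β ≠ δ ∧ γ ≠ δ ∧
      α + β + γ + δ = 0 ∧ α ^ t + β ^ t + γ ^ t + δ ^ t = 0 := by
  have h2 : (2 : K) = 0 := CharTwo.two_eq_zero
  simp only [degeneracyPoly, lineProduct, map_mul, map_add, map_one, MvPolynomial.eval_X,
    mul_ne_zero_iff] at hne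
  obtain ⟨⟨⟨hx1, hy1⟩, hxy⟩, ⟨hx, hy⟩, hxy1⟩ := hne
  refine ⟨P 0, P 1, 1, P 0 + P 1 + 1, hx, hy, one_ne_zero, hxy1, fun h ↦ hxy ?_, fun h ↦ hx1 ?_,
    fun h ↦ hy1 ?_, fun h ↦ hy1 ?_, fun h ↦ hx1 ?_, fun h ↦ hxy ?_, ?_, ?_⟩
  · linear_combination h + P 1 * h2
  · linear_combination h + h2
  · linear_combination -h
  · linear_combination h + h2
  · linear_combination -h
  · linear_combination -h
  · linear_combination (P 0 + P 1 + 1) * h2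
  · simpa [codewordPoly] using h0

lemma eventually_exists_eval_codewordPoly_eq_zero {k : Type*} [Field k] [CharP k 2]
    [IsAlgClosed k] [Algebra (ZMod 2) k] {i l : ℕ} (hi : 1 ≤ i) (hl : Odd l) (hl3 : 3 ≤ l)
    (hkw : l ≠ 2 ^ i - 1) :
    ∀ᶠ n in Filter.atTop, ∃ P : Fin 2 → k, (∀ j, P j ^ 2 ^ n = P j) ∧
      MvPolynomial.eval P (codewordPoly k (2 ^ i * l + 1)) = 0 ∧
      MvPolynomial.eval P (degeneracyPoly k) ≠ 0 := by
  have ht := one_lt_two_pow_mul_add_one i hl.pos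
  have hodd := odd_two_pow_mul_add_one hi l
  obtain ⟨G, hG⟩ := lineProduct_dvd_codewordPoly (k := k) hodd
  obtain ⟨b, hb, hbG, hbfrob⟩ :=
    exists_irreducible_dvd_associated_map_frobenius hi hl hl3 hkw hG
  obtain ⟨a₀, ha₀⟩ := exists_associated_map_of_associated_map_frobenius (p := 2)
    (algebraMap (ZMod 2) k) hb.ne_zero hbfrob
  obtain ⟨a, ha⟩ : ∃ a, MvPolynomial.map (algebraMap (ZMod 2) k) a₀ = a := ⟨_, rfl⟩
  rw [ha] at ha₀
  have hirr : Irreducible a := ha₀.irreducible hb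
  have haG : a ∣ G := ha₀.symm.dvd.trans hbG
  have haF : a ∣ codewordPoly k (2 ^ i * l + 1) := hG ▸ haG.mul_left _
  have hdeg : ¬ a ∣ degeneracyPoly k := fun h ↦
    hirr.not_isUnit (isRelPrime_degeneracyPoly ht hodd hG h haG)
  have hder : MvPolynomial.pderiv 1 a ≠ 0 :=
    pderiv_one_ne_zero_of_dvd_codewordPoly hi hl hirr.prime haF
      (fun h ↦ hdeg (((h.mul_right _).mul_right _).mul_right _))
      (fun h ↦ hdeg (((h.mul_left _).mul_right _).mul_left _))
  have hmap : (Polynomial.Bivariate.equivMvPolynomial k).symm a =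
      ((Polynomial.Bivariate.equivMvPolynomial (ZMod 2)).symm a₀).map
        (Polynomial.mapRingHom (algebraMap (ZMod 2) k)) := by
    rw [AlgEquiv.symm_apply_eq, equivMvPolynomial_map, AlgEquiv.apply_symm_apply, ha]
  have hmonic : ((Polynomial.Bivariate.equivMvPolynomial (ZMod 2)).symm a₀).Monic :=
    monic_of_map_dvd _ (hmap ▸ map_dvd _ haG) (leadingCoeff_equivMvPolynomial_symm ht hodd hG)
  filter_upwards [eventually_exists_eval_eq_zero_ne_zero hmonic ha hirr hder hdeg] with n hn
  obtain ⟨P, hP, hPa, hPdeg⟩ := hn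
  obtain ⟨c, hc⟩ := haF
  exact ⟨P, hP, by rw [hc, map_mul, hPa, zero_mul], hPdeg⟩

lemma exists_galoisField_apply_eq {p n : ℕ} [Fact p.Prime] (hn : n ≠ 0) {k : Type*}
    [Field k] (φ : GaloisField p n →+* k) {x : k} (hx : x ^ p ^ n = x) : ∃ z, φ z = x := by
  have := Fintype.ofFinite (GaloisField p n)
  refine exists_apply_eq_of_pow_card_eq φ ?_
  rwa [← Nat.card_eq_fintype_card, GaloisField.card p n hn]

end Quadruples

/-- If the odd integer `t ≥ 3` is neither a Gold number `2^i + 1` nor a Kasami–Welch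
number `4^i - 2^i + 1`, then for all but finitely many positive integers `n` there are
four pairwise distinct nonzero elements of `𝔽_{2^n}` summing to `0` whose `t`-th powers
also sum to `0`. -/
theorem stmt_1 (t : ℕ) (ht : 3 ≤ t) (htodd : Odd t)
    (hgold : ¬ ∃ i : ℕ, 1 ≤ i ∧ t = 2 ^ i + 1)
    (hkw : ¬ ∃ i : ℕ, 1 ≤ i ∧ t = 4 ^ i - 2 ^ i + 1) :
    {n : ℕ | 0 < n ∧ ¬ ∃ α β γ δ : GaloisField 2 n,
        α ≠ 0 ∧ β ≠ 0 ∧ γ ≠ 0 ∧ δ ≠ 0 ∧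
        α ≠ β ∧ α ≠ γ ∧ α ≠ δ ∧ β ≠ γ ∧ β ≠ δ ∧ γ ≠ δ ∧
        α + β + γ + δ = 0 ∧ α ^ t + β ^ t + γ ^ t + δ ^ t = 0}.Finite := by
  obtain ⟨i, l, rfl, hi, hl, hl3, hli⟩ :=
    exists_eq_two_pow_mul_add_one_of_not_gold_of_not_kasamiWelch ht htodd hgold hkw
  let k := AlgebraicClosure (ZMod 2)
  have : CharP k 2 := charP_of_injective_algebraMap (algebraMap (ZMod 2) k).injective 2
  obtain ⟨n₀, hn₀⟩ := Filter.eventually_atTop.1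
    (eventually_exists_eval_codewordPoly_eq_zero (k := k) hi hl hl3 hli)
  refine (Set.finite_lt_nat n₀).subset fun n ⟨hn, hbad⟩ ↦ ?_
  by_contra hlt
  obtain ⟨P, hP, hP0, hPne⟩ := hn₀ n (not_lt.1 hlt)
  let φ : GaloisField 2 n →+* k := (IsAlgClosed.lift : GaloisField 2 n →ₐ[ZMod 2] k)
  choose Q hQ using fun j ↦ exists_galoisField_apply_eq hn.ne' φ (hP j)
  obtain rfl : (fun j ↦ φ (Q j)) = P := funext hQ
  refine hbad (exists_distinct_ne_zero_add_eq_zero_of_eval_codewordPoly (P := Q)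
    (φ.injective ?_) fun h ↦ hPne ?_)
  · simpa [codewordPoly] using hP0
  · simpa [degeneracyPoly, lineProduct] using congrArg φ h
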